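/- arXiv:math/9207210 — 3 statements merged into one kernel-verified Lean document; each statement's English description precedes it below -/
import Mathlib

section
/- Let k be an algebraically closed field of characteristic p > 0, let e be a positive integer and q = p^e, and let n = q + 1. Then the Galois group of the polynomial Y^n - X·Y + 1 over the rational function field k(X) is isomorphic, as a group, to PSL(2,q), i.e., to the quotient of SL(2, F_q) by its center. -/
open Polynomial

lemma aux_delta {E : Type*} [Field E] (q : ℕ) (hsub : ∀ x y : E, (x - y) ^ q = x ^ q - y ^ q)
    (x v w : E) (hv : (v ^ q) ^ q = x * v ^ q - v) (hw : (w ^ q) ^ q = x * w ^ q - w) :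
    (v * w ^ q - w * v ^ q) ^ q = v * w ^ q - w * v ^ q := by
  rw [hsub, mul_pow, mul_pow, hv, hw]; ring

lemma aux_coords {E Fq : Type*} [Field E] [Field Fq] (q : ℕ)
    (hsub : ∀ x y : E, (x - y) ^ q = x ^ q - y ^ q) (ι : Fq →+* E)
    (hι' : ∀ c : E, c ^ q = c → ∃ a, ι a = c)
    (x z w v : E) (hz : (z ^ q) ^ q = x * z ^ q - z) (hw : (w ^ q) ^ q = x * w ^ q - w)
    (hv : (v ^ q) ^ q = x * v ^ q - v) (h1 : z * w ^ q - w * z ^ q = 1) :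
    ∃ a b : Fq, v = ι a * z + ι b * w := by
  obtain ⟨a, ha⟩ := hι' _ (aux_delta q hsub x v w hv hw)
  obtain ⟨b, hb⟩ := hι' _ (aux_delta q hsub x z v hz hv)
  refine ⟨a, b, ?_⟩
  rw [ha, hb]
  linear_combination (-v) * h1

lemma aux_bil {E Fq : Type*} [Field E] [Field Fq] (q : ℕ)
    (hadd : ∀ x y : E, (x + y) ^ q = x ^ q + y ^ q) (ι : Fq →+* E)
    (hι : ∀ a, ι a ^ q = ι a) (z w : E) (a b c d : Fq) (h1 : z * w ^ q - w * z ^ q = 1) :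
    (ι a * z + ι c * w) * (ι b * z + ι d * w) ^ q - (ι b * z + ι d * w) * (ι a * z + ι c * w) ^ q
      = ι (a * d - b * c) := by
  simp only [hadd, mul_pow, hι, map_sub, map_mul]
  linear_combination (ι a * ι d - ι b * ι c) * h1

lemma aux_uniq {E Fq : Type*} [Field E] [Field Fq] (q : ℕ)
    (hadd : ∀ x y : E, (x + y) ^ q = x ^ q + y ^ q) (ι : Fq →+* E)
    (hι : ∀ a, ι a ^ q = ι a) (z w : E) (a b c d : Fq) (h1 : z * w ^ q - w * z ^ q = 1)
    (h : ι a * z + ι b * w = ι c * z + ι d * w) : a = c ∧ b = d := by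
  have e1 := aux_bil q hadd ι hι z w a 0 b 1 h1
  have e2 := aux_bil q hadd ι hι z w c 0 d 1 h1
  have e3 := aux_bil q hadd ι hι z w a 1 b 0 h1
  have e4 := aux_bil q hadd ι hι z w c 1 d 0 h1
  rw [h] at e1 e3
  have i1 := ι.injective (e1.symm.trans e2)
  have i2 := ι.injective (e3.symm.trans e4)
  simp at i1 i2
  exact ⟨i1, i2⟩

lemma aux_center {Fq : Type*} [Field Fq] (A : Matrix.SpecialLinearGroup (Fin 2) Fq) :
    A ∈ Subgroup.center (Matrix.SpecialLinearGroup (Fin 2) Fq) ↔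
      A 0 1 = 0 ∧ A 1 0 = 0 ∧ A 0 0 = A 1 1 := by
  rw [Matrix.SpecialLinearGroup.mem_center_iff]
  constructor
  · rintro ⟨r, -, hr⟩
    simp [← hr]
  · rintro ⟨h1, h2, h3⟩
    refine ⟨A 0 0, ?_, ?_⟩
    · have := A.det_coe
      rw [Matrix.det_fin_two, h1, h2, ← h3] at this
      simp only [Fintype.card_fin]
      linear_combination this
    · ext i j
      fin_cases i <;> fin_cases j <;> simp [h1, h2, h3]

theorem aux_core {K E Fq : Type*} [Field K] [Field E] [Field Fq] [Algebra K E] [Normal K E]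
    [IsAlgClosed E] (q : ℕ) (hq : 2 ≤ q)
    (hadd : ∀ x y : E, (x + y) ^ q = x ^ q + y ^ q)
    (hsub : ∀ x y : E, (x - y) ^ q = x ^ q - y ^ q)
    (x : K) (ι : Fq →+* E) (hι : ∀ a, ι a ^ q = ι a)
    (hι' : ∀ c : E, c ^ q = c → ∃ a, ι a = c)
    (hfix : ∀ (σ : E ≃ₐ[K] E) (a : Fq), σ (ι a) = ι a)
    (z w : E) (hz : (z ^ q) ^ q = algebraMap K E x * z ^ q - z)
    (hw : (w ^ q) ^ q = algebraMap K E x * w ^ q - w)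
    (h1 : z * w ^ q - w * z ^ q = 1)
    (hsurj : ∀ z' w' : E, (z' ^ q) ^ q = algebraMap K E x * z' ^ q - z' →
      (w' ^ q) ^ q = algebraMap K E x * w' ^ q - w' → z' * w' ^ q - w' * z' ^ q = 1 →
      ∃ σ : E ≃ₐ[K] E, σ z = z' ∧ σ w = w')
    (f : K[X]) (hf : f = X ^ (q + 1) - C x * X + 1) :
    Nonempty (f.Gal ≃*
      Matrix.SpecialLinearGroup (Fin 2) Fq ⧸
        Subgroup.center (Matrix.SpecialLinearGroup (Fin 2) Fq)) := by
  have hσL : ∀ (σ : E ≃ₐ[K] E) (v : E), (v ^ q) ^ q = algebraMap K E x * v ^ q - v →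
      ((σ v) ^ q) ^ q = algebraMap K E x * (σ v) ^ q - σ v := by
    intro σ v hv
    have := congrArg σ hv
    simpa using this
  have hex : ∀ σ : E ≃ₐ[K] E, ∃ A : Matrix.SpecialLinearGroup (Fin 2) Fq,
      σ z = ι (A 0 0) * z + ι (A 1 0) * w ∧ σ w = ι (A 0 1) * z + ι (A 1 1) * w := by
    intro σ
    obtain ⟨a, c, hac⟩ := aux_coords q hsub ι hι' _ z w (σ z) hz hw (hσL σ z hz) h1
    obtain ⟨b, d, hbd⟩ := aux_coords q hsub ι hι' _ z w (σ w) hz hw (hσL σ w hw) h1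
    have hd : a * d - b * c = 1 := by
      apply ι.injective
      rw [← aux_bil q hadd ι hι z w a b c d h1, ← hac, ← hbd, map_one]
      have := congrArg σ h1
      simpa using this
    refine ⟨⟨!![a, b; c, d], by rw [Matrix.det_fin_two_of, hd]⟩, ?_, ?_⟩
    · simpa using hac
    · simpa using hbd
  choose A hA1 hA2 using hex
  have huniq : ∀ (σ : E ≃ₐ[K] E) (B : Matrix.SpecialLinearGroup (Fin 2) Fq),
      σ z = ι (B 0 0) * z + ι (B 1 0) * w → σ w = ι (B 0 1) * z + ι (B 1 1) * w → A σ = B := by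
    intro σ B hB1 hB2
    obtain ⟨u1, u2⟩ := aux_uniq q hadd ι hι z w _ _ _ _ h1 ((hA1 σ).symm.trans hB1)
    obtain ⟨u3, u4⟩ := aux_uniq q hadd ι hι z w _ _ _ _ h1 ((hA2 σ).symm.trans hB2)
    ext i j
    fin_cases i <;> fin_cases j <;> simpa
  let ρ : (E ≃ₐ[K] E) →* Matrix.SpecialLinearGroup (Fin 2) Fq := MonoidHom.mk' A (by
    intro σ τ
    apply huniq
    · rw [AlgEquiv.mul_apply, hA1 τ]
      simp only [map_add, map_mul, hfix, hA1 σ, hA2 σ, Matrix.SpecialLinearGroup.coe_mul,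
        Matrix.mul_apply, Fin.sum_univ_two]
      ring
    · rw [AlgEquiv.mul_apply, hA2 τ]
      simp only [map_add, map_mul, hfix, hA1 σ, hA2 σ, Matrix.SpecialLinearGroup.coe_mul,
        Matrix.mul_apply, Fin.sum_univ_two]
      ring)
  have hLlin : ∀ a b : Fq, ((ι a * z + ι b * w) ^ q) ^ q =
      algebraMap K E x * (ι a * z + ι b * w) ^ q - (ι a * z + ι b * w) := by
    intro a b
    simp only [hadd, mul_pow, hι, hz, hw]; ring
  have hρ : Function.Surjective ρ := by
    intro B
    obtain ⟨σ, hσ1, hσ2⟩ := hsurj _ _ (hLlin (B 0 0) (B 1 0)) (hLlin (B 0 1) (B 1 1)) (by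
      rw [aux_bil q hadd ι hι z w _ _ _ _ h1]
      have := B.det_coe
      rw [Matrix.det_fin_two] at this
      rw [this, map_one])
    exact ⟨σ, huniq σ B hσ1 hσ2⟩
  let π := (QuotientGroup.mk' (Subgroup.center (Matrix.SpecialLinearGroup (Fin 2) Fq))).comp ρ
  have hπ : Function.Surjective π := (QuotientGroup.mk'_surjective _).comp hρ
  have : Fact ((f.map (algebraMap K E)).Splits) := ⟨IsAlgClosed.splits _⟩
  have hr := Polynomial.Gal.restrict_surjective f E
  have hf0 : f ≠ 0 := by
    intro h0
    have : f.coeff 0 = 1 := by rw [hf]; simp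
    rw [h0] at this
    simp at this
  have hroot : ∀ y : E, y ∈ f.rootSet E ↔ y ^ (q + 1) - algebraMap K E x * y + 1 = 0 := by
    intro y
    rw [Polynomial.mem_rootSet_of_ne hf0, hf]
    simp
  have hr1 : ∀ σ : E ≃ₐ[K] E, Polynomial.Gal.restrict f E σ = 1 ↔
      ∀ y : E, y ^ (q + 1) - algebraMap K E x * y + 1 = 0 → σ y = y := by
    intro σ
    constructor
    · intro h y hy
      have := Polynomial.Gal.restrict_smul σ (⟨y, (hroot y).2 hy⟩ : f.rootSet E)
      rw [h, one_smul] at this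
      exact this.symm
    · intro h
      apply Polynomial.Gal.galActionHom_injective f E
      rw [map_one]
      ext y
      rw [Polynomial.Gal.galActionHom_restrict]
      exact h _ ((hroot _).1 y.2)
  have hq1 : q - 1 + 1 = q := by omega
  have hpow : ∀ v : E, v ^ q = v ^ (q - 1) * v := fun v => by rw [← pow_succ, hq1]
  have hker : (Polynomial.Gal.restrict f E).ker = π.ker := by
    ext σ
    rw [MonoidHom.mem_ker, MonoidHom.mem_ker, hr1]
    have : π σ = 1 ↔ A σ ∈ Subgroup.center (Matrix.SpecialLinearGroup (Fin 2) Fq) :=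
      QuotientGroup.eq_one_iff _
    rw [this, aux_center]
    constructor
    · intro h
      have key : ∀ v : E, v ≠ 0 → (v ^ q) ^ q = algebraMap K E x * v ^ q - v →
          ∃ a, σ v = ι a * v := by
        intro v hv0 hv
        have hy : (v ^ (q - 1)) ^ (q + 1) - algebraMap K E x * v ^ (q - 1) + 1 = 0 := by
          apply mul_right_cancel₀ hv0
          have e1 : (v ^ q) ^ q = (v ^ (q - 1)) ^ (q + 1) * v := by
            rw [pow_succ, ← pow_mul, ← pow_mul, mul_assoc, ← hpow, ← pow_add]
            congr 1
            obtain ⟨m, rfl⟩ : ∃ m, q = m + 1 := ⟨q - 1, by omega⟩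
            simp; ring
          rw [e1, hpow v] at hv
          linear_combination hv
        have hfx := h _ hy
        rw [map_pow] at hfx
        obtain ⟨a, ha⟩ := hι' (σ v / v) (by
          rw [div_pow, hpow (σ v), hpow v, hfx]
          exact mul_div_mul_left _ _ (pow_ne_zero _ hv0))
        exact ⟨a, by rw [ha, div_mul_cancel₀ _ hv0]⟩
      have hq0 : q ≠ 0 := by omega
      have hz0 : z ≠ 0 := by rintro rfl; simp [hq0] at h1
      have hw0 : w ≠ 0 := by rintro rfl; simp [hq0] at h1
      have hzw0 : ι 1 * z + ι 1 * w ≠ 0 := by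
        intro h0
        have := aux_uniq q hadd ι hι z w 1 1 0 0 h1 (by rw [h0]; simp)
        simp at this
      obtain ⟨a, ha⟩ := key z hz0 hz
      obtain ⟨d, hd⟩ := key w hw0 hw
      obtain ⟨s, hs⟩ := key _ hzw0 (hLlin 1 1)
      have g1 := aux_uniq q hadd ι hι z w (A σ 0 0) (A σ 1 0) a 0 h1 (by
        rw [← hA1 σ, ha]; simp)
      have g2 := aux_uniq q hadd ι hι z w (A σ 0 1) (A σ 1 1) 0 d h1 (by
        rw [← hA2 σ, hd]; simp)
      have g3 := aux_uniq q hadd ι hι z w a d s s h1 (by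
        rw [← ha, ← hd]
        simp only [map_one, one_mul, map_add] at hs
        rw [hs]; ring)
      refine ⟨g2.1, g1.2, ?_⟩
      rw [g1.1, g2.2, g3.1, g3.2]
    · rintro ⟨c1, c2, c3⟩ y hy
      obtain ⟨v, hv⟩ := IsAlgClosed.exists_pow_nat_eq y (show 0 < q - 1 by omega)
      have hvL : (v ^ q) ^ q = algebraMap K E x * v ^ q - v := by
        have e1 : (v ^ q) ^ q = (v ^ (q - 1)) ^ (q + 1) * v := by
          rw [pow_succ, ← pow_mul, ← pow_mul, mul_assoc, ← hpow, ← pow_add]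
          congr 1
          obtain ⟨m, rfl⟩ : ∃ m, q = m + 1 := ⟨q - 1, by omega⟩
          simp; ring
        rw [e1, hpow v, hv]
        linear_combination v * hy
      obtain ⟨a, b, hab⟩ := aux_coords q hsub ι hι' _ z w v hz hw hvL h1
      have hσv : σ v = ι (A σ 0 0) * v := by
        rw [hab]
        simp only [map_add, map_mul, hfix, hA1 σ, hA2 σ, c1, c2, ← c3, map_zero]
        ring
      have hne : A σ 0 0 ≠ 0 := by
        intro h0
        have := (A σ).det_coe
        rw [Matrix.det_fin_two, h0, c1] at this
        simp at this
      have hne' : ι (A σ 0 0) ≠ 0 := by simpa using hne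
      have : ι (A σ 0 0) ^ (q - 1) = 1 := by
        apply mul_right_cancel₀ hne'
        rw [← hpow, hι, one_mul]
      rw [← hv, map_pow, hσv, mul_pow, this, one_mul]
  exact ⟨(QuotientGroup.quotientKerEquivOfSurjective _ hr).symm.trans
    ((QuotientGroup.quotientMulEquivOfEq hker).trans
      (QuotientGroup.quotientKerEquivOfSurjective _ hπ))⟩

lemma aux_lift {M E E' : Type*} [Field M] [Field E] [Field E'] [IsAlgClosed E']
    (j : M →+* E) (j' : M →+* E') (hj : j.IsIntegral) : ∃ σ : E →+* E', σ.comp j = j' := by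
  let _ := j.toAlgebra
  let _ := j'.toAlgebra
  have : Algebra.IsIntegral M E := ⟨hj⟩
  let σ : E →ₐ[M] E' := IsAlgClosed.lift
  exact ⟨σ.toRingHom, RingHom.ext fun x => σ.commutes x⟩

lemma aux_ext {F E : Type*} [Field F] [Field E] [IsAlgClosed E] (i i' : F →+* E)
    (hi : i.IsIntegral) (D : F[X]) (hD : Irreducible D) (w w' : E)
    (hw : D.eval₂ i w = 0) (hw' : D.eval₂ i' w' = 0) :
    ∃ σ : E →+* E, σ.comp i = i' ∧ σ w = w' := by
  have := Fact.mk hD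
  let j := AdjoinRoot.lift i w hw
  let j' := AdjoinRoot.lift i' w' hw'
  have hc : j.comp (AdjoinRoot.of D) = i := RingHom.ext fun x => AdjoinRoot.lift_of hw
  have hc' : j'.comp (AdjoinRoot.of D) = i' := RingHom.ext fun x => AdjoinRoot.lift_of hw'
  have hj : j.IsIntegral := RingHom.IsIntegral.tower_top (AdjoinRoot.of D) j (by rw [hc]; exact hi)
  obtain ⟨σ, hσ⟩ := aux_lift j j' hj
  refine ⟨σ, ?_, ?_⟩
  · rw [← hc, ← RingHom.comp_assoc, hσ, hc']
  · have := RingHom.congr_fun hσ (AdjoinRoot.root D)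
    simpa [j, j', AdjoinRoot.lift_root] using this

/-- Eisenstein -/
lemma aux_irred (k : Type*) [Field k] (q : ℕ) (hq : 2 ≤ q) :
    Irreducible ((X ^ q + C (X ^ q : k[X]) * X ^ (q - 1) - C (X : k[X]) : k[X][X]).map
      (algebraMap k[X] (RatFunc k))) := by
  set D : k[X][X] := X ^ q + C (X ^ q : k[X]) * X ^ (q - 1) - C (X : k[X]) with hD
  have hdeg : (C (X ^ q : k[X]) * X ^ (q - 1) - C (X : k[X])).degree < (q : WithBot ℕ) := by
    refine (degree_sub_le _ _).trans_lt (max_lt ?_ ?_)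
    · refine (degree_C_mul_X_pow_le _ _).trans_lt ?_
      exact_mod_cast (by omega : q - 1 < q)
    · refine degree_C_le.trans_lt ?_
      exact_mod_cast (by omega : 0 < q)
  have hD' : D = X ^ q + (C (X ^ q : k[X]) * X ^ (q - 1) - C (X : k[X])) := by rw [hD]; ring
  have hmonic : D.Monic := by rw [hD']; exact monic_X_pow_add hdeg
  have hnd : D.natDegree = q := by
    rw [hD']
    exact natDegree_eq_of_degree_eq_some (by
      rw [degree_add_eq_left_of_degree_lt (by rwa [degree_X_pow]), degree_X_pow])
  rw [← hmonic.irreducible_iff_irreducible_map_fraction_map]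
  have hE : D.IsEisensteinAt (Ideal.span {(X : k[X])}) := by
    refine ⟨?_, ?_, ?_⟩
    · rw [hmonic.leadingCoeff, Ideal.mem_span_singleton]
      exact fun h => not_isUnit_X (isUnit_of_dvd_one h)
    · intro m hm
      rw [hnd] at hm
      rw [Ideal.mem_span_singleton, hD]
      simp only [coeff_sub, coeff_add, coeff_X_pow, coeff_C_mul, coeff_C]
      rw [if_neg (by omega : ¬ m = q), zero_add]
      refine dvd_sub (Dvd.dvd.mul_right (dvd_pow_self _ (by omega)) _) ?_
      split_ifs <;> simp
    · rw [Ideal.span_singleton_pow, Ideal.mem_span_singleton, hD]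
      simp only [coeff_sub, coeff_add, coeff_X_pow, coeff_C_mul, coeff_C]
      rw [if_neg (by omega : ¬ 0 = q), if_neg (by omega : ¬ 0 = q - 1), if_pos trivial]
      intro h
      rw [X_pow_dvd_iff] at h
      simpa using h 1 (by omega)
  exact hE.irreducible ((Ideal.span_singleton_prime X_ne_zero).2 prime_X) hmonic.isPrimitive
    (by omega)

lemma aux_transc {k E : Type*} [Field k] [Field E] [Algebra k E] [Algebra (RatFunc k) E]
    [IsScalarTower k (RatFunc k) E] (q : ℕ) (z : E) (hz0 : z ≠ 0)
    (hz : (z ^ q) ^ q = algebraMap (RatFunc k) E RatFunc.X * z ^ q - z) : Transcendental k z := by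
  intro h
  have h1 : algebraMap (RatFunc k) E RatFunc.X = ((z ^ q) ^ q + z) / z ^ q := by
    rw [eq_div_iff (pow_ne_zero _ hz0), hz]; ring
  have h2 : IsAlgebraic k (algebraMap (RatFunc k) E RatFunc.X) := by
    rw [h1, div_eq_mul_inv]
    exact (((h.pow q).pow q).add h).mul (h.pow q).inv
  have h3 : IsAlgebraic k (RatFunc.X : RatFunc k) :=
    (isAlgebraic_algebraMap_iff (algebraMap (RatFunc k) E).injective).1 h2
  exact RatFunc.transcendental_X h3

lemma aux_embed {k E : Type*} [Field k] [Field E] [Algebra k E] (z : E)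
    (hz : Transcendental k z) :
    ∃ i : RatFunc k →+* E, ∀ g : k[X], i (algebraMap k[X] (RatFunc k) g) = aeval z g := by
  have hinj : Function.Injective (aeval z : k[X] →ₐ[k] E).toRingHom :=
    transcendental_iff_injective.1 hz
  exact ⟨IsFractionRing.lift hinj, fun g => IsFractionRing.lift_algebraMap hinj g⟩

lemma aux_surj {k E : Type*} [Field k] [Field E] [Algebra k E] [Algebra (RatFunc k) E]
    [IsScalarTower k (RatFunc k) E] [IsAlgClosed E] [Algebra.IsAlgebraic (RatFunc k) E]
    (q : ℕ) (hq : 2 ≤ q) (z w z' w' : E)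
    (hz : (z ^ q) ^ q = algebraMap (RatFunc k) E RatFunc.X * z ^ q - z)
    (hz' : (z' ^ q) ^ q = algebraMap (RatFunc k) E RatFunc.X * z' ^ q - z')
    (h1 : z * w ^ q - w * z ^ q = 1) (h1' : z' * w' ^ q - w' * z' ^ q = 1) :
    ∃ σ : E ≃ₐ[RatFunc k] E, σ z = z' ∧ σ w = w' := by
  have hq0 : q ≠ 0 := by omega
  have nz : ∀ a b : E, a * b ^ q - b * a ^ q = 1 → a ≠ 0 ∧ b ≠ 0 := by
    intro a b h
    constructor <;> rintro rfl <;> simp [hq0] at h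
  obtain ⟨hz0, hw0⟩ := nz z w h1
  obtain ⟨hz0', hw0'⟩ := nz z' w' h1'
  obtain ⟨i, hi⟩ := aux_embed z (aux_transc q z hz0 hz)
  obtain ⟨i', hi'⟩ := aux_embed z' (aux_transc q z' hz0' hz')
  have hiX : i (algebraMap k[X] (RatFunc k) X) = z := by rw [hi]; simp
  have hiX' : i' (algebraMap k[X] (RatFunc k) X) = z' := by rw [hi']; simp
  set T : RatFunc k := algebraMap k[X] (RatFunc k) X with hT
  let t : RatFunc k := ((T ^ q) ^ q + T) / T ^ q
  have key : ∀ (a : E), a ≠ 0 → (a ^ q) ^ q = algebraMap (RatFunc k) E RatFunc.X * a ^ q - a →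
      ((a ^ q) ^ q + a) / a ^ q = algebraMap (RatFunc k) E RatFunc.X := by
    intro a ha h
    rw [div_eq_iff (pow_ne_zero _ ha), h]; ring
  have hit : i t = algebraMap (RatFunc k) E RatFunc.X := by
    simp only [t, map_div₀, map_add, map_pow, hiX]
    exact key z hz0 hz
  have hit' : i' t = algebraMap (RatFunc k) E RatFunc.X := by
    simp only [t, map_div₀, map_add, map_pow, hiX']
    exact key z' hz0' hz'
  have hik : ∀ c : k, i (algebraMap k (RatFunc k) c) = algebraMap k E c := by
    intro c
    rw [IsScalarTower.algebraMap_apply k k[X] (RatFunc k), hi]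
    simp
  have hik' : ∀ c : k, i' (algebraMap k (RatFunc k) c) = algebraMap k E c := by
    intro c
    rw [IsScalarTower.algebraMap_apply k k[X] (RatFunc k), hi']
    simp
  -- a ring hom out of `k(X)` is determined by its values on `k` and `X`
  have hext : ∀ (a b : RatFunc k →+* E),
      (∀ c, a (algebraMap k (RatFunc k) c) = b (algebraMap k (RatFunc k) c)) →
      a RatFunc.X = b RatFunc.X → a = b := by
    intro a b hc hX
    apply IsLocalization.ringHom_ext (nonZeroDivisors k[X])
    apply Polynomial.ringHom_ext
    · intro c
      have := hc c
      rw [IsScalarTower.algebraMap_apply k k[X] (RatFunc k)] at this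
      simpa using this
    · simpa using hX
  have htt : Transcendental k t := by
    intro h
    have h2 : IsAlgebraic k (algebraMap (RatFunc k) E RatFunc.X) := by
      rw [← hit]
      obtain ⟨g, hg0, hg⟩ := h
      refine ⟨g, hg0, ?_⟩
      have := congrArg i hg
      rw [map_zero, aeval_def, hom_eval₂] at this
      rw [show i.comp (algebraMap k (RatFunc k)) = algebraMap k E from RingHom.ext hik] at this
      rw [aeval_def]
      exact this
    exact RatFunc.transcendental_X
      ((isAlgebraic_algebraMap_iff (algebraMap (RatFunc k) E).injective).1 h2)
  obtain ⟨φ, hφ⟩ := aux_embed t htt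
  have hφX : φ RatFunc.X = t := by
    have := hφ X
    simpa using this
  have hφk : ∀ c : k, φ (algebraMap k (RatFunc k) c) = algebraMap k (RatFunc k) c := by
    intro c
    rw [IsScalarTower.algebraMap_apply k k[X] (RatFunc k), hφ]
    simp
  have hiφ : i.comp φ = algebraMap (RatFunc k) E := by
    apply hext
    · intro c
      rw [RingHom.comp_apply, hφk, hik, ← IsScalarTower.algebraMap_apply]
    · rw [RingHom.comp_apply, hφX, hit]
  have hint : i.IsIntegral := by
    apply RingHom.IsIntegral.tower_top φ i
    rw [hiφ]
    exact (Algebra.IsAlgebraic.isIntegral (K := RatFunc k) (A := E)).isIntegral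
  have hev : ∀ (j : RatFunc k →+* E) (a b : E), j T = a → b ≠ 0 → a * b ^ q - b * a ^ q = 1 →
      ((X ^ q + C (X ^ q : k[X]) * X ^ (q - 1) - C (X : k[X]) : k[X][X]).map
      (algebraMap k[X] (RatFunc k))).eval₂ j b⁻¹ = 0 := by
    intro j a b hj hb h
    rw [eval₂_map]
    simp only [eval₂_sub, eval₂_add, eval₂_mul, eval₂_pow, eval₂_X, eval₂_C, RingHom.comp_apply,
      map_pow, ← hT, hj]
    apply mul_right_cancel₀ (pow_ne_zero q hb)
    have e1 : b⁻¹ ^ q * b ^ q = 1 := by rw [← mul_pow, inv_mul_cancel₀ hb, one_pow]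
    have e2 : b⁻¹ ^ (q - 1) * b ^ q = b := by
      obtain ⟨m, rfl⟩ : ∃ m, q = m + 1 := ⟨q - 1, by omega⟩
      simp only [Nat.add_sub_cancel]
      rw [pow_succ, ← mul_assoc, ← mul_pow, inv_mul_cancel₀ hb, one_pow, one_mul]
    linear_combination e1 + a ^ q * e2 - h
  obtain ⟨σ, hσi, hσw⟩ := aux_ext i i' hint _ (aux_irred k q hq) w⁻¹ w'⁻¹
    (hev i z w hiX hw0 h1) (hev i' z' w' hiX' hw0' h1')
  have hσi' : ∀ x, σ (i x) = i' x := fun x => RingHom.congr_fun hσi x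
  have hσK : σ.comp (algebraMap (RatFunc k) E) = algebraMap (RatFunc k) E := by
    apply hext
    · intro c
      rw [RingHom.comp_apply, ← IsScalarTower.algebraMap_apply, ← hik, hσi', hik', hik]
    · rw [RingHom.comp_apply, ← hit, hσi', hit', hit]
  let σ' : E →ₐ[RatFunc k] E := { σ with commutes' := fun x => RingHom.congr_fun hσK x }
  refine ⟨AlgEquiv.ofBijective σ' (Algebra.IsAlgebraic.algHom_bijective σ'), ?_, ?_⟩
  · change σ z = z'
    rw [← hiX, hσi', hiX']
  · change σ w = w'
    rw [map_inv₀] at hσw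
    exact inv_injective hσw

lemma aux_fq {Fq E : Type*} [Field Fq] [Fintype Fq] [Field E] (ι : Fq →+* E) (q : ℕ)
    (hq : 2 ≤ q) (hc : Fintype.card Fq = q) (c : E) (h : c ^ q = c) : ∃ a, ι a = c := by
  have h1 := FiniteField.X_pow_card_sub_X_ne_zero E (p := q) (by omega)
  have h2 := FiniteField.roots_X_pow_card_sub_X Fq
  have h3 : c ∈ ((X ^ q - X : Fq[X]).map ι).roots := by
    rw [mem_roots']
    constructor
    · simpa using h1
    · simp [IsRoot, h]
  have h4 : (X ^ q - X : Fq[X]).Splits := by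
    rw [splits_iff_card_roots, ← hc, h2, FiniteField.X_pow_card_sub_X_natDegree_eq _ (by omega)]
    rfl
  rw [h4.roots_map, Multiset.mem_map] at h3
  obtain ⟨a, -, ha⟩ := h3
  exact ⟨a, ha⟩

/-- Abhyankar: for `n = q + 1` with `q = p^e`, the Galois group of
`Y^n - X·Y + 1` over `k(X)` (`k` algebraically closed of characteristic `p`)
is isomorphic to `PSL(2, q)`, the quotient of `SL(2, F_q)` by its center. -/
theorem stmt_0 (p : ℕ) [Fact p.Prime] (e : ℕ) (he : 0 < e)
    (k : Type*) [Field k] [IsAlgClosed k] [CharP k p]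
    (q n : ℕ) (hq : q = p ^ e) (hn : n = q + 1)
    (f : Polynomial (RatFunc k)) (hf : f = X ^ n - C RatFunc.X * X + 1) :
    Nonempty (f.Gal ≃*
      Matrix.SpecialLinearGroup (Fin 2) (GaloisField p e) ⧸
        Subgroup.center (Matrix.SpecialLinearGroup (Fin 2) (GaloisField p e))) := by
  have hp : p.Prime := Fact.out
  have hq2 : 2 ≤ q := by
    rw [hq]
    exact hp.two_le.trans (Nat.le_self_pow he.ne' p)
  let E := AlgebraicClosure (RatFunc k)
  have : CharP E p := charP_of_injective_algebraMap (algebraMap k E).injective p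
  have hadd : ∀ x y : E, (x + y) ^ q = x ^ q + y ^ q := fun x y => by
    rw [hq]; exact add_pow_char_pow ..
  have hsub : ∀ x y : E, (x - y) ^ q = x ^ q - y ^ q := fun x y => by
    rw [hq]; exact sub_pow_char_pow ..
  let _ : Algebra (ZMod p) k := ZMod.algebra k p
  let ι0 : GaloisField p e →ₐ[ZMod p] k := IsAlgClosed.lift
  let ι : GaloisField p e →+* E := (algebraMap k E).comp ι0.toRingHom
  let _ : Fintype (GaloisField p e) := Fintype.ofFinite _
  have hcard : Fintype.card (GaloisField p e) = q := by
    rw [← Nat.card_eq_fintype_card, GaloisField.card p e he.ne', hq]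
  have hι : ∀ a, ι a ^ q = ι a := by
    intro a
    rw [← map_pow, ← hcard, FiniteField.pow_card]
  obtain ⟨z, hz0, hz⟩ : ∃ z : E, z ≠ 0 ∧
      (z ^ q) ^ q = algebraMap (RatFunc k) E RatFunc.X * z ^ q - z := by
    obtain ⟨y, hy⟩ := IsAlgClosed.exists_aeval_eq_zero E f (by
      rw [hf, hn, show (X ^ (q + 1) - C RatFunc.X * X + 1 : (RatFunc k)[X])
        = X ^ (q + 1) + (C (-RatFunc.X) * X + C 1) by simp; ring]
      rw [degree_add_eq_left_of_degree_lt, degree_X_pow]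
      · exact_mod_cast (Nat.succ_ne_zero q)
      · rw [degree_X_pow]
        refine degree_linear_le.trans_lt ?_
        exact_mod_cast (by omega : 1 < q + 1))
    rw [hf, hn] at hy
    simp only [map_add, map_sub, map_mul, map_pow, aeval_X, aeval_C, map_one] at hy
    obtain ⟨v, hv⟩ := IsAlgClosed.exists_pow_nat_eq y (show 0 < q - 1 by omega)
    refine ⟨v, ?_, ?_⟩
    · rintro rfl
      rw [zero_pow (by omega)] at hv
      rw [← hv] at hy
      simp at hy
    · obtain ⟨m, rfl⟩ : ∃ m, q = m + 1 := ⟨q - 1, by omega⟩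
      simp only [Nat.add_sub_cancel] at hv
      rw [← hv] at hy
      have e1 : (v ^ (m + 1)) ^ (m + 1) = (v ^ m) ^ (m + 1 + 1) * v := by ring
      rw [e1]
      linear_combination v * hy
  obtain ⟨w, h1⟩ : ∃ w : E, z * w ^ q - w * z ^ q = 1 := by
    obtain ⟨w, hw⟩ := IsAlgClosed.exists_aeval_eq_zero E
        (C z * X ^ q + (C (-z ^ q) * X + C (-1))) (by
      have hd : (C z * X ^ q).degree = (q : WithBot ℕ) := degree_C_mul_X_pow _ hz0
      rw [degree_add_eq_left_of_degree_lt, hd]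
      · exact_mod_cast (by omega : q ≠ 0)
      · rw [hd]
        refine degree_linear_le.trans_lt ?_
        exact_mod_cast (by omega : 1 < q))
    refine ⟨w, ?_⟩
    simp at hw
    linear_combination hw
  have hw : (w ^ q) ^ q = algebraMap (RatFunc k) E RatFunc.X * w ^ q - w := by
    have h2 : (z * w ^ q - w * z ^ q) ^ q = 1 := by rw [h1, one_pow]
    rw [hsub, mul_pow, mul_pow, hz] at h2
    apply mul_left_cancel₀ (pow_ne_zero q hz0)
    linear_combination h2 - h1
  exact aux_core (E := E) q hq2 hadd hsub RatFunc.X ι hι (aux_fq ι q hq2 hcard)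
    (fun σ a => by
      change σ (algebraMap k E (ι0 a)) = algebraMap k E (ι0 a)
      rw [IsScalarTower.algebraMap_apply k (RatFunc k) E, AlgEquiv.commutes])
    z w hz hw h1
    (fun z' w' hz' hw' h1' => aux_surj q hq2 z w z' w' hz hz' h1 h1') f (by rw [hf, hn])
end

section
/- Let k be an algebraically closed field of characteristic p > 0, let e be a positive integer and q = p^e, let n = q + 1, let a be a nonzero element of k, and let s be a positive integer. Then the Galois group of the polynomial Y^n - a·X^{-s}·Y + 1 over the rational function field k(X) is isomorphic, as a group, to PSL(2,q), i.e., to the quotient of SL(2, F_q) by its center. -/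
open Polynomial

lemma ab_fixed {F E : Type*} [Field F] [Fintype F] [Field E] [Algebra F E] (x : E)
    (hx : x ^ Fintype.card F = x) : ∃ a : F, algebraMap F E a = x := by
  have h2 : (X ^ Fintype.card F - X : F[X]) = ∏ a : F, (X - C a) := by
    have hr := FiniteField.roots_X_pow_card_sub_X F
    have hd := FiniteField.X_pow_card_sub_X_natDegree_eq F (p := Fintype.card F)
      (Fintype.one_lt_card)
    have hm : (X ^ Fintype.card F - X : F[X]).Monic :=
      monic_X_pow_sub (by rw [degree_X]; exact_mod_cast Fintype.one_lt_card)
    have := prod_multiset_X_sub_C_of_monic_of_roots_card_eq hm (by rw [hr, hd]; rfl)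
    rw [← this, hr]; rfl
  have h3 := congrArg (Polynomial.aeval x) h2.symm
  simp only [map_prod, map_sub, aeval_X, aeval_C, map_pow, hx, sub_self] at h3
  obtain ⟨a, -, ha⟩ := Finset.prod_eq_zero_iff.1 h3
  exact ⟨a, (sub_eq_zero.1 ha).symm⟩

lemma ab_D {E : Type*} [Field E] (p e q : ℕ) [Fact p.Prime] [CharP E p] (hq : q = p ^ e) (b z w : E)
    (hz : z ^ (q ^ 2) = b * z ^ q - z) (hw : w ^ (q ^ 2) = b * w ^ q - w) :
    (z * w ^ q - z ^ q * w) ^ q = z * w ^ q - z ^ q * w := by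
  have : (z * w ^ q - z ^ q * w) ^ q = (z * w ^ q) ^ q - (z ^ q * w) ^ q := by
    rw [hq, sub_pow_char_pow]
  rw [this, mul_pow, mul_pow, ← pow_mul, ← pow_mul, ← sq, hz, hw]
  ring

lemma ab_coord {E : Type*} [Field E] (q : ℕ) (v0 v1 z : E) (h : v0 * v1 ^ q - v0 ^ q * v1 = 1) :
    z = (z * v1 ^ q - z ^ q * v1) * v0 + (v0 * z ^ q - v0 ^ q * z) * v1 := by
  linear_combination (-z) * h

lemma ab_gen {F : Type*} [Field F] (H : Subgroup (Matrix.SpecialLinearGroup (Fin 2) F))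
    (hU : ∀ (A : Matrix.SpecialLinearGroup (Fin 2) F), A 0 0 = 1 → A 1 0 = 0 → A 1 1 = 1 → A ∈ H)
    (B : Matrix.SpecialLinearGroup (Fin 2) F) (hB : B ∈ H) (hB' : B 1 0 ≠ 0) : H = ⊤ := by
  obtain ⟨T, hT⟩ : ∃ T : F → Matrix.SpecialLinearGroup (Fin 2) F,
      ∀ t, (T t : Matrix (Fin 2) (Fin 2) F) = !![1, t; 0, 1] :=
    ⟨fun t => ⟨!![1, t; 0, 1], by simp⟩, fun _ => rfl⟩
  have hUm : ∀ t : F, T t ∈ H := by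
    intro t; apply hU <;> simp [hT]
  have key : ∀ B : Matrix.SpecialLinearGroup (Fin 2) F, B ∈ H → B 1 0 ≠ 0 →
     ∀ A : Matrix.SpecialLinearGroup (Fin 2) F, A 1 0 = B 1 0 → A ∈ H := by
    intro B hB hc A hA
    have e : A = T ((A 0 0 - B 0 0) / B 1 0) * B * T ((A 1 1 - B 1 1) / B 1 0) := by
      have d1 := A.2
      have d2 := B.2
      rw [Matrix.det_fin_two] at d1 d2
      change A 0 0 * A 1 1 - A 0 1 * A 1 0 = 1 at d1
      change B 0 0 * B 1 1 - B 0 1 * B 1 0 = 1 at d2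
      ext i j
      fin_cases i <;> fin_cases j <;>
        simp [Matrix.mul_apply, Fin.sum_univ_two, hT, Matrix.vecMul, dotProduct]
      · field_simp; ring
      · field_simp
        rw [hA] at d1
        linear_combination d2 - d1
      · exact hA
      · field_simp; ring
    rw [e]
    exact H.mul_mem (H.mul_mem (hUm _) hB) (hUm _)
  have key2 : ∀ A : Matrix.SpecialLinearGroup (Fin 2) F, A 1 0 ≠ 0 → A ∈ H := by
    intro A hA
    obtain ⟨M, hMe⟩ : ∃ M : F → Matrix.SpecialLinearGroup (Fin 2) F,
      ∀ y, (M y : Matrix (Fin 2) (Fin 2) F) = !![0, -1 / B 1 0; B 1 0, y] :=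
      ⟨fun y => ⟨!![0, -1 / B 1 0; B 1 0, y], by
        rw [Matrix.det_fin_two_of]; field_simp; simp⟩, fun _ => rfl⟩
    have hM : ∀ y, M y ∈ H := fun y => key B hB hB' _ (by simp [hMe])
    have h2 := H.mul_mem (hM (A 1 0 / B 1 0)) (hM 0)
    refine key _ h2 ?_ _ ?_
    · simp [hMe, Matrix.mul_apply, Fin.sum_univ_two]; exact ⟨hA, hB'⟩
    · simp [hMe, Matrix.mul_apply, Fin.sum_univ_two]; field_simp
  rw [eq_top_iff]
  intro A _
  by_cases hA : A 1 0 = 0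
  · have h1 : A 1 1 ≠ 0 := by
      intro h
      have d1 := A.2
      rw [Matrix.det_fin_two] at d1
      change A 0 0 * A 1 1 - A 0 1 * A 1 0 = 1 at d1
      simp [hA, h] at d1
    have : A * B ∈ H := key2 _ (by
      simp [Matrix.mul_apply, Fin.sum_univ_two, hA]; exact ⟨h1, hB'⟩)
    simpa using H.mul_mem this (H.inv_mem hB)
  · exact key2 A hA

lemma ab_core {F K E : Type*} [Field F] [Fintype F] [Field K] [Field E] [Algebra F K] [Algebra K E]
    [Algebra F E] [IsScalarTower F K E] (p e q : ℕ) [Fact p.Prime] [CharP E p] (hq : q = p ^ e)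
    (hF : Fintype.card F = q) (b : K) (v0 v1 : E)
    (h0 : v0 ^ (q ^ 2) = algebraMap K E b * v0 ^ q - v0)
    (h1 : v1 ^ (q ^ 2) = algebraMap K E b * v1 ^ q - v1)
    (hD : v0 * v1 ^ q - v0 ^ q * v1 = 1)
    (hgen : ∀ σ : E ≃ₐ[K] E, (∀ v : E, v ^ (q ^ 2) = algebraMap K E b * v ^ q - v → σ v = v) →
      σ = 1)
    (P : Subgroup (E ≃ₐ[K] E)) (hP : Nat.card P = q) (hfix : ∀ σ ∈ P, σ v0 = v0)
    (hmove : ∃ σ : E ≃ₐ[K] E, ∀ a : F, σ v0 ≠ algebraMap F E a * v0) :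
    ∃ φ : (E ≃ₐ[K] E) ≃* Matrix.SpecialLinearGroup (Fin 2) F,
      ∀ σ, φ σ ∈ Subgroup.center (Matrix.SpecialLinearGroup (Fin 2) F) ↔
        ∀ v : E, v ^ (q ^ 2) = algebraMap K E b * v ^ q - v →
          ∃ a : F, σ v = algebraMap F E a * v := by
  have hFq : ∀ a : F, (algebraMap F E a) ^ q = algebraMap F E a := by
    intro a; rw [← map_pow, ← hF, FiniteField.pow_card]
  have haddq : ∀ x y : E, (x + y) ^ q = x ^ q + y ^ q := by
    intro x y; rw [hq, add_pow_char_pow]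
  have hinj : ∀ a b c d : F, algebraMap F E a * v0 + algebraMap F E b * v1 =
      algebraMap F E c * v0 + algebraMap F E d * v1 → a = c ∧ b = d := by
    intro a b c d h
    have hh : algebraMap F E (a - c) * v0 + algebraMap F E (b - d) * v1 = 0 := by
      rw [map_sub, map_sub]; linear_combination h
    have hh2 : algebraMap F E (a - c) * v0 ^ q + algebraMap F E (b - d) * v1 ^ q = 0 := by
      have := congrArg (· ^ q) hh
      simp only [haddq, mul_pow, hFq] at this
      rw [this, zero_pow]
      rw [← hF]; exact Fintype.card_ne_zero
    have e1 : algebraMap F E (a - c) = 0 := by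
      linear_combination (-algebraMap F E (a - c)) * hD + v1 ^ q * hh - v1 * hh2
    have e2 : algebraMap F E (b - d) = 0 := by
      linear_combination (-algebraMap F E (b - d)) * hD - v0 ^ q * hh + v0 * hh2
    rw [map_eq_zero, sub_eq_zero] at e1 e2
    exact ⟨e1, e2⟩
  have hex : ∀ v : E, v ^ (q ^ 2) = algebraMap K E b * v ^ q - v → ∃ x y : F,
      v = algebraMap F E x * v0 + algebraMap F E y * v1 := by
    intro v hv
    obtain ⟨x, hx⟩ := ab_fixed (F := F) (v * v1 ^ q - v ^ q * v1)
      (by rw [hF]; exact ab_D p e q hq _ _ _ hv h1)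
    obtain ⟨y, hy⟩ := ab_fixed (F := F) (v0 * v ^ q - v0 ^ q * v)
      (by rw [hF]; exact ab_D p e q hq _ _ _ h0 hv)
    refine ⟨x, y, ?_⟩
    rw [hx, hy]
    exact ab_coord q v0 v1 v hD
  have hsig : ∀ (σ : E ≃ₐ[K] E) (a : F), σ (algebraMap F E a) = algebraMap F E a := by
    intro σ a
    rw [IsScalarTower.algebraMap_apply F K E, AlgEquiv.commutes]
  have hroot : ∀ (σ : E ≃ₐ[K] E) (v : E), v ^ (q ^ 2) = algebraMap K E b * v ^ q - v →
      (σ v) ^ (q ^ 2) = algebraMap K E b * (σ v) ^ q - σ v := by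
    intro σ v hv
    have := congrArg σ hv
    simpa using this
  have hM : ∀ σ : E ≃ₐ[K] E, ∃ A : Matrix.SpecialLinearGroup (Fin 2) F,
      σ v0 = algebraMap F E (A 0 0) * v0 + algebraMap F E (A 1 0) * v1 ∧
      σ v1 = algebraMap F E (A 0 1) * v0 + algebraMap F E (A 1 1) * v1 := by
    intro σ
    obtain ⟨x, y, hxy⟩ := hex _ (hroot σ v0 h0)
    obtain ⟨z, w, hzw⟩ := hex _ (hroot σ v1 h1)
    refine ⟨⟨!![x, z; y, w], ?_⟩, by simpa using hxy, by simpa using hzw⟩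
    rw [Matrix.det_fin_two_of]
    apply (algebraMap F E).injective
    have h := congrArg σ hD
    simp only [map_sub, map_mul, map_pow, map_one, hxy, hzw, haddq, mul_pow, hFq] at h
    simp only [map_sub, map_mul, map_one]
    linear_combination h - (algebraMap F E x * algebraMap F E w -
      algebraMap F E z * algebraMap F E y) * hD
  choose φ hφ0 hφ1 using hM
  have huniq : ∀ (A B : Matrix.SpecialLinearGroup (Fin 2) F),
      algebraMap F E (A 0 0) * v0 + algebraMap F E (A 1 0) * v1 =
        algebraMap F E (B 0 0) * v0 + algebraMap F E (B 1 0) * v1 →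
      algebraMap F E (A 0 1) * v0 + algebraMap F E (A 1 1) * v1 =
        algebraMap F E (B 0 1) * v0 + algebraMap F E (B 1 1) * v1 → A = B := by
    intro A B e1 e2
    obtain ⟨a1, a2⟩ := hinj _ _ _ _ e1
    obtain ⟨a3, a4⟩ := hinj _ _ _ _ e2
    ext i j
    fin_cases i <;> fin_cases j
    exacts [a1, a3, a2, a4]
  let Φ : (E ≃ₐ[K] E) →* Matrix.SpecialLinearGroup (Fin 2) F := MonoidHom.mk' φ (by
    intro σ τ
    apply huniq
    · rw [← hφ0, AlgEquiv.mul_apply, hφ0 τ]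
      simp only [map_add, map_mul, hsig, hφ0 σ, hφ1 σ]
      simp [Matrix.mul_apply, Fin.sum_univ_two]
      ring
    · rw [← hφ1, AlgEquiv.mul_apply, hφ1 τ]
      simp only [map_add, map_mul, hsig, hφ0 σ, hφ1 σ]
      simp [Matrix.mul_apply, Fin.sum_univ_two]
      ring)
  have hΦinj : Function.Injective Φ := by
    rw [injective_iff_map_eq_one]
    intro σ hσ
    change φ σ = 1 at hσ
    apply hgen
    intro v hv
    obtain ⟨x, y, rfl⟩ := hex v hv
    simp only [map_add, map_mul, hsig, hφ0, hφ1, hσ]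
    simp
  have hΦsurj : Function.Surjective Φ := by
    rw [← MonoidHom.range_eq_top]
    obtain ⟨τ, hτ⟩ := hmove
    refine ab_gen _ ?_ (Φ τ) ⟨τ, rfl⟩ ?_
    · let g : P → F := fun σ => φ σ.1 0 1
      have hP0 : ∀ σ : P, φ σ.1 0 0 = 1 ∧ φ σ.1 1 0 = 0 := by
        intro σ
        apply hinj
        rw [← hφ0, hfix σ.1 σ.2]; simp
      have hP1 : ∀ σ : P, φ σ.1 1 1 = 1 := by
        intro σ
        have d := (φ σ.1).2
        rw [Matrix.det_fin_two] at d
        change φ σ.1 0 0 * φ σ.1 1 1 - φ σ.1 0 1 * φ σ.1 1 0 = 1 at d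
        simpa [hP0 σ] using d
      have hfinP : Finite P := Nat.finite_of_card_ne_zero (by
        rw [hP, ← hF]; exact Fintype.card_ne_zero)
      have hg : Function.Injective g := by
        intro σ τ h
        apply Subtype.ext
        apply hΦinj
        change φ _ = φ _
        ext i j
        fin_cases i <;> fin_cases j
        · exact (hP0 σ).1.trans (hP0 τ).1.symm
        · exact h
        · exact (hP0 σ).2.trans (hP0 τ).2.symm
        · exact (hP1 σ).trans (hP1 τ).symm
      have hgb : Function.Bijective g :=
        (Nat.bijective_iff_injective_and_card g).2 ⟨hg, by rw [hP, Nat.card_eq_fintype_card, hF]⟩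
      intro A hA0 hA1 hA2
      obtain ⟨σ, hσ⟩ := hgb.2 (A 0 1)
      refine ⟨σ.1, ?_⟩
      change φ _ = _
      ext i j
      fin_cases i <;> fin_cases j
      · exact (hP0 σ).1.trans hA0.symm
      · exact hσ
      · exact (hP0 σ).2.trans hA1.symm
      · exact (hP1 σ).trans hA2.symm
    · intro h
      apply hτ (φ τ 0 0)
      have h' : φ τ 1 0 = 0 := h
      rw [hφ0, h']; simp
  refine ⟨MulEquiv.ofBijective Φ ⟨hΦinj, hΦsurj⟩, ?_⟩
  intro σ
  change φ σ ∈ _ ↔ _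
  rw [Matrix.SpecialLinearGroup.mem_center_iff]
  constructor
  · rintro ⟨r, -, hr⟩ v hv
    obtain ⟨x, y, rfl⟩ := hex v hv
    refine ⟨r, ?_⟩
    simp only [map_add, map_mul, hsig, hφ0, hφ1]
    have a1 := congrFun (congrFun hr 0) 0
    have a2 := congrFun (congrFun hr 0) 1
    have a3 := congrFun (congrFun hr 1) 0
    have a4 := congrFun (congrFun hr 1) 1
    simp at a1 a2 a3 a4
    rw [← a1, ← a2, ← a3, ← a4]
    simp; ring
  · intro h
    obtain ⟨a, ha⟩ := h v0 h0
    obtain ⟨b', hb⟩ := h v1 h1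
    have h01 : (v0 + v1) ^ (q ^ 2) = algebraMap K E b * (v0 + v1) ^ q - (v0 + v1) := by
      have : (v0 + v1) ^ (q ^ 2) = v0 ^ (q ^ 2) + v1 ^ (q ^ 2) := by
        rw [hq, ← pow_mul, add_pow_char_pow]
      rw [this, h0, h1, haddq]; ring
    obtain ⟨c, hc⟩ := h _ h01
    rw [map_add, ha, hb] at hc
    obtain ⟨r1, r2⟩ := hinj a b' c c (by rw [hc]; ring)
    rw [r2, ← r1] at hb
    obtain ⟨a1, a2⟩ := hinj (φ σ 0 0) (φ σ 1 0) a 0 (by rw [← hφ0, ha]; simp)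
    obtain ⟨a3, a4⟩ := hinj (φ σ 0 1) (φ σ 1 1) 0 a (by rw [← hφ1, hb]; simp)
    refine ⟨a, ?_, ?_⟩
    · have d := (φ σ).2
      rw [Matrix.det_fin_two] at d
      change φ σ 0 0 * φ σ 1 1 - φ σ 0 1 * φ σ 1 0 = 1 at d
      rw [a1, a2, a3, a4] at d
      rw [Fintype.card_fin]; linear_combination d
    · ext i j
      fin_cases i <;> fin_cases j <;> simp [a1, a2, a3, a4]

lemma ab_ram {A K E : Type*} [CommRing A] [IsDedekindDomain A] [Field K] [Field E] [Algebra A K]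
    [IsFractionRing A K] [Algebra K E] [FiniteDimensional K E] [IsGalois K E]
    (v : IsDedekindDomain.HeightOneSpectrum A) :
    ∃ (w : Valuation E (WithZero (Multiplicative ℤ))) (n : ℕ), n ∣ Nat.card (E ≃ₐ[K] E) ∧ n ≠ 0 ∧
      ∀ x : K, w (algebraMap K E x) = v.valuation K x ^ n := by
  let : Algebra A E := ((algebraMap K E).comp (algebraMap A K)).toAlgebra
  have : IsScalarTower A K E := IsScalarTower.of_algebraMap_eq (fun _ => rfl)
  let B := integralClosure A E
  have : IsDedekindDomain B := integralClosure.isDedekindDomain A K E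
  have : IsFractionRing B E := integralClosure.isFractionRing_of_finite_extension K E
  have : Module.Finite A B := IsIntegralClosure.finite A K E B
  have : FaithfulSMul A E := by
    rw [faithfulSMul_iff_algebraMap_injective]
    exact (algebraMap K E).injective.comp (IsFractionRing.injective A K)
  have : FaithfulSMul A B := inferInstance
  have : Module.IsTorsionFree A B := inferInstance
  have : SMulCommClass (E ≃ₐ[K] E) A E := ⟨fun g a x => by
    simp [Algebra.smul_def, IsScalarTower.algebraMap_apply A K E]⟩
  have : IsGaloisGroup (E ≃ₐ[K] E) A B := IsGaloisGroup.of_isFractionRing _ A B K E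
  have := v.isPrime
  obtain ⟨Q, hQ, hQ2⟩ := (v.asIdeal.nonempty_primesOver (S := B))
  have := hQ
  have := hQ2
  let w : IsDedekindDomain.HeightOneSpectrum B :=
    ⟨Q, hQ, Ideal.ne_bot_of_liesOver_of_ne_bot v.ne_bot Q⟩
  have : w.asIdeal.LiesOver v.asIdeal := hQ2
  refine ⟨w.valuation E, v.asIdeal.ramificationIdx' w.asIdeal, ?_, ?_, ?_⟩
  · rw [Ideal.ramificationIdx'_eq_ramificationIdx _ _ v.ne_bot,
      ← Ideal.ramificationIdxIn_eq_ramificationIdx v.asIdeal w.asIdeal (E ≃ₐ[K] E),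
      ← Ideal.ncard_primesOver_mul_ramificationIdxIn_mul_inertiaDegIn v.asIdeal B (E ≃ₐ[K] E)]
    exact Dvd.intro_left _ (by rw [mul_left_comm, mul_comm])
  · exact Ideal.IsDedekindDomain.ramificationIdx'_ne_zero_of_liesOver w.asIdeal v.ne_bot
  · intro x
    exact (IsDedekindDomain.HeightOneSpectrum.valuation_liesOver E v w x).symm

lemma ab_val {E : Type*} [Field E] (w : Valuation E (WithZero (Multiplicative ℤ))) (q N : ℕ)
    (hq : q ≠ 0) (hN : 0 < N) (b v0 v1 : E) (hb : w b = WithZero.exp (N : ℤ))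
    (h0 : v0 ^ (q ^ 2) = b * v0 ^ q - v0)
    (h1 : v1 ^ (q ^ 2) = b * v1 ^ q - v1)
    (hD : v0 * v1 ^ q - v0 ^ q * v1 = 1) : q ∣ N := by
  have hb1 : 1 < w b := by
    rw [hb, ← WithZero.exp_zero, WithZero.exp_lt_exp]; exact_mod_cast hN
  have key : ∀ z : E, z ^ (q ^ 2) = b * z ^ q - z → 1 ≤ w z → q ∣ N := by
    intro z hz hwz
    have hz0 : w z ≠ 0 := (zero_lt_one.trans_le hwz).ne'
    have hlt : w z < w (b * z ^ q) := by
      rw [map_mul, map_pow]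
      calc w z ≤ w z ^ q := le_self_pow hwz hq
        _ < w b * w z ^ q := lt_mul_of_one_lt_left (pow_pos (zero_lt_one.trans_le hwz) q) hb1
    have h := congrArg w hz
    rw [Valuation.map_sub_eq_of_lt_left _ hlt, map_mul, map_pow, map_pow, hb] at h
    obtain ⟨m, hm⟩ : ∃ m : ℤ, w z = WithZero.exp m := ⟨_, (WithZero.exp_log hz0).symm⟩
    rw [hm, ← WithZero.exp_nsmul, ← WithZero.exp_nsmul, ← WithZero.exp_add,
      WithZero.exp_inj] at h
    simp only [nsmul_eq_mul] at h
    push_cast at h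
    rw [← Int.natCast_dvd_natCast]
    exact ⟨q * m - m, by linear_combination -h⟩
  by_contra hcon
  have l0 : w v0 < 1 := by by_contra hh; exact hcon (key v0 h0 (not_lt.1 hh))
  have l1 : w v1 < 1 := by by_contra hh; exact hcon (key v1 h1 (not_lt.1 hh))
  have : w (v0 * v1 ^ q - v0 ^ q * v1) < 1 := by
    apply Valuation.map_sub_lt
    · rw [map_mul, map_pow]
      exact mul_lt_one_of_lt_of_le l0 (pow_le_one₀ zero_le l1.le)
    · rw [map_mul, map_pow]
      rw [mul_comm]; exact mul_lt_one_of_lt_of_le l1 (pow_le_one₀ zero_le l0.le)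
  rw [hD, map_one] at this
  exact lt_irrefl _ this

lemma ab_noroot {k : Type*} [Field k] (a : k) (ha : a ≠ 0) (s q : ℕ) (hs : 0 < s) (hq : 0 < q)
    (y : RatFunc k) (hy : y ^ (q + 1) - algebraMap k (RatFunc k) a * (RatFunc.X ^ s)⁻¹ * y + 1 = 0) :
    False := by
  obtain ⟨P, Q, hQ, hPQ, rfl⟩ : ∃ P Q : k[X], Q ≠ 0 ∧ IsCoprime P Q ∧
     y = algebraMap _ _ P / algebraMap _ _ Q :=
    ⟨y.num, y.denom, y.denom_ne_zero, y.isCoprime_num_denom, (RatFunc.num_div_denom y).symm⟩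
  have hQ' : algebraMap k[X] (RatFunc k) Q ≠ 0 := by
    simpa using hQ
  have hX : (RatFunc.X : RatFunc k) ≠ 0 := RatFunc.X_ne_zero
  have e : X ^ s * P ^ (q + 1) + X ^ s * Q ^ (q + 1) = C a * P * Q ^ q := by
    apply RatFunc.algebraMap_injective k
    simp only [map_add, map_mul, map_pow, RatFunc.algebraMap_X, RatFunc.algebraMap_C]
    rw [← RatFunc.algebraMap_eq_C]
    have h1 := div_mul_cancel₀ (algebraMap k[X] (RatFunc k) P) hQ'
    have h2 : (RatFunc.X ^ s)⁻¹ * (RatFunc.X ^ s : RatFunc k) = 1 :=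
      inv_mul_cancel₀ (pow_ne_zero _ hX)
    generalize algebraMap k[X] (RatFunc k) P / algebraMap k[X] (RatFunc k) Q = y at *
    rw [← h1]
    generalize algebraMap k[X] (RatFunc k) Q = Q' at *
    linear_combination RatFunc.X ^ s * Q' ^ (q + 1) * hy +
      algebraMap k (RatFunc k) a * y * Q' ^ (q + 1) * h2
  have hP : P ∣ X ^ s := by
    have h1 : P ∣ X ^ s * Q ^ (q + 1) := by
      have : X ^ s * Q ^ (q + 1) = P * (C a * Q ^ q - X ^ s * P ^ q) := by linear_combination e
      exact ⟨_, this⟩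
    exact (hPQ.pow_right).dvd_of_dvd_mul_right h1
  have hQd : Q ∣ X ^ s := by
    obtain ⟨r, rfl⟩ := Nat.exists_eq_succ_of_ne_zero hq.ne'
    have h1 : Q ∣ X ^ s * P ^ (r + 1 + 1) := by
      have : X ^ s * P ^ (r + 1 + 1) = Q * (C a * P * Q ^ r - X ^ s * Q ^ (r + 1)) := by
        simp only [Nat.succ_eq_add_one] at e
        linear_combination e
      exact ⟨_, this⟩
    exact (hPQ.symm.pow_right).dvd_of_dvd_mul_right h1
  obtain ⟨i, hi, hPi⟩ := (dvd_prime_pow prime_X s).1 hP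
  obtain ⟨j, hj, hQj⟩ := (dvd_prime_pow prime_X s).1 hQd
  have hPd : P.natDegree = i := by
    rw [natDegree_eq_of_degree_eq (degree_eq_degree_of_associated hPi), natDegree_X_pow]
  have hQd' : Q.natDegree = j := by
    rw [natDegree_eq_of_degree_eq (degree_eq_degree_of_associated hQj), natDegree_X_pow]
  have hP0 : P ≠ 0 := by
    intro h; rw [h] at hPi; exact pow_ne_zero i X_ne_zero (associated_zero_iff_eq_zero _ |>.1 hPi.symm)
  have hdeg := congrArg natDegree e
  rw [← mul_add, natDegree_mul (by simp [ha, hP0]) (pow_ne_zero _ hQ), natDegree_C_mul ha,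
    natDegree_pow, hPd, hQd'] at hdeg
  have hne : P ^ (q + 1) + Q ^ (q + 1) ≠ 0 := by
    intro h
    rw [← mul_add, h, mul_zero] at e
    exact mul_ne_zero (mul_ne_zero (by simpa using ha) hP0) (pow_ne_zero _ hQ) e.symm
  rw [natDegree_mul (pow_ne_zero _ X_ne_zero) hne, natDegree_X_pow] at hdeg
  rcases lt_trichotomy i j with hij | hij | hij
  · rw [natDegree_add_eq_right_of_natDegree_lt (by
      rw [natDegree_pow, natDegree_pow, hPd, hQd']; gcongr), natDegree_pow, hQd'] at hdeg
    nlinarith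
  · have h0 : i = 0 := by
      by_contra h
      have h1 : (X : k[X]) ∣ P := (dvd_pow_self X h).trans hPi.symm.dvd
      have h2 : (X : k[X]) ∣ Q := (dvd_pow_self X (hij ▸ h)).trans hQj.symm.dvd
      exact not_isUnit_X (hPQ.isUnit_of_dvd' h1 h2)
    have h1 := congrArg (eval 0) e
    have hu1 : eval 0 P ≠ 0 := by
      rw [h0, pow_zero] at hPi
      have := (associated_one_iff_isUnit.1 hPi).map (evalRingHom (0 : k))
      simpa using this.ne_zero
    have hu2 : eval 0 Q ≠ 0 := by
      rw [← hij, h0, pow_zero] at hQj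
      have := (associated_one_iff_isUnit.1 hQj).map (evalRingHom (0 : k))
      simpa using this.ne_zero
    simp [hs.ne', ha, hu1, hu2] at h1
  · rw [natDegree_add_eq_left_of_natDegree_lt (by
      rw [natDegree_pow, natDegree_pow, hPd, hQd']; gcongr), natDegree_pow, hPd] at hdeg
    nlinarith

lemma ab_mid {F K E : Type*} [Field F] [Fintype F] [Field K] [Field E] [Algebra F K] [Algebra K E]
    [Algebra F E] [IsScalarTower F K E] (p e q : ℕ) [Fact p.Prime] [CharP K p] [CharP E p]
    (he : 0 < e) (hq : q = p ^ e)
    (hF : Fintype.card F = q) (b : K) (L : K[X]) (hL : L = X ^ (q ^ 2) - C b * X ^ q + X)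
    [L.IsSplittingField K E] [FiniteDimensional K E] [IsGalois K E]
    (hsep : L.Separable) (hdeg : L.natDegree = q ^ 2) (hL0 : L ≠ 0)
    (hdiv : ∀ v0 v1 : E, v0 ^ (q ^ 2) = algebraMap K E b * v0 ^ q - v0 →
      v1 ^ (q ^ 2) = algebraMap K E b * v1 ^ q - v1 →
      v0 * v1 ^ q - v0 ^ q * v1 = 1 → q ∣ Nat.card (E ≃ₐ[K] E))
    (hno : ∀ y : K, y ^ (q + 1) - b * y + 1 ≠ 0) :
    ∃ φ : (E ≃ₐ[K] E) ≃* Matrix.SpecialLinearGroup (Fin 2) F,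
      ∀ σ, φ σ ∈ Subgroup.center (Matrix.SpecialLinearGroup (Fin 2) F) ↔
        ∀ v : E, v ^ (q ^ 2) = algebraMap K E b * v ^ q - v →
          ∃ a : F, σ v = algebraMap F E a * v := by
  classical
  have hq1 : 1 < q := by rw [hq]; exact Nat.one_lt_pow he.ne' (Fact.out : p.Prime).one_lt
  have hmem : ∀ v : E, v ∈ L.rootSet E ↔ v ^ (q ^ 2) = algebraMap K E b * v ^ q - v := by
    intro v
    rw [mem_rootSet_of_ne hL0, hL]
    simp only [map_add, map_sub, map_mul, map_pow, aeval_X, aeval_C]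
    constructor
    · intro h; linear_combination h
    · intro h; linear_combination h
  have hcard : Fintype.card (L.rootSet E) = q ^ 2 := by
    rw [card_rootSet_eq_natDegree hsep (IsSplittingField.splits E L), hdeg]
  have hFq : ∀ a : F, (algebraMap F E a) ^ q = algebraMap F E a := by
    intro a; rw [← map_pow, ← hF, FiniteField.pow_card]
  have hsec : ∀ v0 : E, v0 ≠ 0 → v0 ^ (q ^ 2) = algebraMap K E b * v0 ^ q - v0 → ∃ v1 : E,
      v1 ^ (q ^ 2) = algebraMap K E b * v1 ^ q - v1 ∧ v0 * v1 ^ q - v0 ^ q * v1 = 1 := by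
    intro v0 hv0 h0
    obtain ⟨u, hu, hu'⟩ : ∃ u ∈ (L.rootSet E).toFinset,
        u ∉ Finset.univ.image (fun a : F => algebraMap F E a * v0) := by
      apply Finset.exists_mem_notMem_of_card_lt_card
      rw [Set.toFinset_card, hcard]
      refine Finset.card_image_le.trans_lt ?_
      rw [Finset.card_univ, hF]; nlinarith
    rw [Set.mem_toFinset, hmem] at hu
    obtain ⟨d, hd⟩ := ab_fixed (F := F) (v0 * u ^ q - v0 ^ q * u)
      (by rw [hF]; exact ab_D p e q hq _ _ _ h0 hu)
    have hd0 : algebraMap F E d ≠ 0 := by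
      intro h
      rw [h] at hd
      obtain ⟨t, ht⟩ := ab_fixed (F := F) (u / v0) (by
        rw [hF, div_pow, div_eq_div_iff (pow_ne_zero _ hv0) hv0]
        linear_combination -hd)
      apply hu'
      rw [Finset.mem_image]
      exact ⟨t, Finset.mem_univ _, by rw [ht]; field_simp⟩
    have hdq : ∀ m, ((algebraMap F E d)⁻¹) ^ q ^ m = (algebraMap F E d)⁻¹ := by
      intro m
      induction m with
      | zero => simp
      | succ m ih => rw [pow_succ, pow_mul, ih, inv_pow, hFq]
    refine ⟨(algebraMap F E d)⁻¹ * u, ?_, ?_⟩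
    · have h2 := hdq 2
      have h1 := hdq 1
      rw [pow_one] at h1
      rw [mul_pow, mul_pow, h1, h2, hu]; ring
    · have h1 := hdq 1
      rw [pow_one] at h1
      rw [mul_pow, h1]
      have := inv_mul_cancel₀ hd0
      linear_combination this - (algebraMap F E d)⁻¹ * hd
  have hz : (0 : E) ^ (q ^ 2) = algebraMap K E b * 0 ^ q - 0 := by
    rw [zero_pow (by positivity), zero_pow (by positivity)]; simp
  have hroot : ∀ (σ : E ≃ₐ[K] E) (v : E), v ∈ L.rootSet E → σ v ∈ L.rootSet E := by
    intro σ v hv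
    rw [hmem] at hv ⊢
    have := congrArg σ hv
    simpa using this
  -- a first pair
  have hdvd : q ∣ Nat.card (E ≃ₐ[K] E) := by
    have : 1 < Fintype.card (L.rootSet E) := by rw [hcard]; nlinarith
    obtain ⟨u, hu⟩ := Fintype.exists_ne_of_one_lt_card this ⟨0, (hmem 0).2 hz⟩
    have hu0 : (u : E) ≠ 0 := fun h => hu (Subtype.ext h)
    obtain ⟨v1, h1, hD⟩ := hsec u hu0 ((hmem _).1 u.2)
    exact hdiv _ _ ((hmem _).1 u.2) h1 hD
  obtain ⟨P, hP⟩ := Sylow.exists_subgroup_card_pow_prime (G := E ≃ₐ[K] E) p (n := e) (hq ▸ hdvd)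
  let act : MulAction P (L.rootSet E) :=
    { smul := fun σ v => ⟨σ.1 v.1, hroot _ _ v.2⟩
      one_smul := fun v => Subtype.ext rfl
      mul_smul := fun σ τ v => Subtype.ext rfl }
  have hPg : IsPGroup p P := IsPGroup.of_card hP
  obtain ⟨v, hv, hv0⟩ := hPg.exists_fixed_point_of_prime_dvd_card_of_fixed_point (L.rootSet E)
    (by rw [Nat.card_eq_fintype_card, hcard, hq, ← pow_mul]; exact dvd_pow_self p (by positivity))
    (a := ⟨0, (hmem 0).2 hz⟩) (fun σ => Subtype.ext (map_zero σ.1))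
  have hv0' : (v : E) ≠ 0 := fun h => hv0 (Subtype.ext h.symm)
  have h0 := (hmem _).1 v.2
  obtain ⟨v1, h1, hD⟩ := hsec v hv0' h0
  refine ab_core p e q hq hF b v v1 h0 h1 hD ?_ P (hP.trans hq.symm) ?_ ?_
  · intro σ hσ
    have hadj := IsSplittingField.adjoin_rootSet E L
    apply AlgEquiv.ext
    intro x
    have hx : x ∈ Algebra.adjoin K (L.rootSet E) := by rw [hadj]; trivial
    have : Algebra.adjoin K (L.rootSet E) ≤ AlgHom.equalizer (σ : E →ₐ[K] E) (AlgHom.id K E) := by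
      rw [Algebra.adjoin_le_iff]
      intro v hv
      exact hσ v ((hmem v).1 hv)
    exact this hx
  · intro σ hσ
    exact congrArg Subtype.val (hv ⟨σ, hσ⟩)
  · by_contra hcon
    push Not at hcon
    obtain ⟨r, rfl⟩ : ∃ r, q = r + 1 := ⟨q - 1, by omega⟩
    have hfx : ∀ σ : E ≃ₐ[K] E, σ ((v : E) ^ r) = (v : E) ^ r := by
      intro σ
      obtain ⟨a, ha⟩ := hcon σ
      have ha0 : a ≠ 0 := by
        rintro rfl
        rw [map_zero, zero_mul] at ha
        exact hv0' (by simpa using ha)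
      have h3 := FiniteField.pow_card_sub_one_eq_one a ha0
      rw [hF, Nat.add_sub_cancel] at h3
      rw [map_pow, ha, mul_pow, ← map_pow, h3, map_one, one_mul]
    obtain ⟨y, hy⟩ := (IsGalois.mem_range_algebraMap_iff_fixed _).2 hfx
    apply hno y
    apply (algebraMap K E).injective
    apply mul_left_cancel₀ hv0'
    simp only [map_add, map_sub, map_mul, map_pow, map_one, map_zero, hy]
    linear_combination h0

lemma ab_roots {K E : Type*} [Field K] [Field E] [Algebra K E]
    (p q j : ℕ) [Fact p.Prime] [CharP E p] (hq1 : 1 < q) (b : K) (L : K[X])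
    (hL : L = X ^ (q ^ 2) - C b * X ^ q + X) (hL0 : L ≠ 0) [L.IsSplittingField K E]
    (f : K[X]) (hf : f = X ^ (q + 1) - C (b ^ p ^ j) * X + 1)
    (y : AlgebraicClosure E) (hy : aeval y f = 0) :
    ∃ v : E, v ^ (q ^ 2) = algebraMap K E b * v ^ q - v ∧
      y = algebraMap E _ ((v ^ (q - 1)) ^ p ^ j) := by
  obtain ⟨r, rfl⟩ : ∃ r, q = r + 1 := ⟨q - 1, by omega⟩
  have : CharP (AlgebraicClosure E) p :=
    charP_of_injective_algebraMap (algebraMap E (AlgebraicClosure E)).injective p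
  have hr : 0 < r * p ^ j := Nat.mul_pos (by omega) (pow_pos (Fact.out : p.Prime).pos _)
  obtain ⟨z, hz⟩ := IsAlgClosed.exists_pow_nat_eq y hr
  rw [pow_mul] at hz
  rw [hf] at hy
  simp only [map_add, map_sub, map_mul, map_pow, map_one, aeval_X, aeval_C] at hy
  rw [← hz] at hy
  have hy' : ((z ^ r) ^ (r + 1 + 1) - algebraMap K _ b * z ^ r + 1) ^ p ^ j = 0 := by
    rw [add_pow_char_pow, sub_pow_char_pow, one_pow, mul_pow, ← hy, ← pow_mul _ (p ^ j),
      ← pow_mul _ (r + 1 + 1), mul_comm (p ^ j)]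
  have hy2 := pow_eq_zero_iff (pow_ne_zero j (Fact.out : p.Prime).ne_zero) |>.1 hy'
  have hzL : z ∈ ((L.map (algebraMap K E)).map (algebraMap E (AlgebraicClosure E))).roots := by
    rw [map_map, mem_roots (by rw [Polynomial.map_ne_zero_iff]; exact hL0; exact RingHom.injective _),
      IsRoot.def, eval_map, ← IsScalarTower.algebraMap_eq, ← aeval_def, hL]
    simp only [map_add, map_sub, map_mul, map_pow, aeval_X, aeval_C]
    linear_combination z * hy2
  rw [(IsSplittingField.splits E L).roots_map] at hzL
  obtain ⟨v, hv, rfl⟩ := Multiset.mem_map.1 hzL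
  refine ⟨v, ?_, ?_⟩
  · rw [mem_roots', IsRoot.def, eval_map, ← aeval_def, hL] at hv
    have := hv.2
    simp only [map_add, map_sub, map_mul, map_pow, aeval_X, aeval_C] at this
    linear_combination this
  · rw [← hz]; simp

lemma ab_fin.{u, v} {F : Type v} {K : Type u} [Field F] [Fintype F] [Field K] [Algebra F K]
    (p e q j : ℕ) [Fact p.Prime] [CharP K p]
    (he : 0 < e) (hq : q = p ^ e)
    (hF : Fintype.card F = q) (b : K)
    (f : K[X]) (hf : f = X ^ (q + 1) - C (b ^ p ^ j) * X + 1)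
    (hdiv : ∀ (E : Type u) [Field E] [Algebra K E] [FiniteDimensional K E] [IsGalois K E],
      ∀ v0 v1 : E, v0 ^ (q ^ 2) = algebraMap K E b * v0 ^ q - v0 →
      v1 ^ (q ^ 2) = algebraMap K E b * v1 ^ q - v1 →
      v0 * v1 ^ q - v0 ^ q * v1 = 1 → q ∣ Nat.card (E ≃ₐ[K] E))
    (hno : ∀ y : K, y ^ (q + 1) - b * y + 1 ≠ 0) :
    Nonempty (f.Gal ≃* Matrix.SpecialLinearGroup (Fin 2) F ⧸
        Subgroup.center (Matrix.SpecialLinearGroup (Fin 2) F)) := by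
  have hq1 : 1 < q := by rw [hq]; exact Nat.one_lt_pow he.ne' (Fact.out : p.Prime).one_lt
  obtain ⟨L, hL⟩ : ∃ L : K[X], L = X ^ (q ^ 2) - C b * X ^ q + X := ⟨_, rfl⟩
  have hqq : q < q ^ 2 := by nlinarith
  have hdeg : L.natDegree = q ^ 2 := by
    rw [hL, sub_add]
    rw [natDegree_sub_eq_left_of_natDegree_lt, natDegree_X_pow]
    rw [natDegree_X_pow]
    refine (natDegree_sub_le _ _).trans_lt ?_
    rw [natDegree_X, max_lt_iff]
    exact ⟨(natDegree_C_mul_X_pow_le _ _).trans_lt hqq, by omega⟩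
  have hL0 : L ≠ 0 := by
    rintro h; rw [h, natDegree_zero] at hdeg; omega
  have hpK : ((p : ℕ) : K) = 0 := CharP.cast_eq_zero K p
  have hqK : ((q : ℕ) : K) = 0 := by rw [hq]; push_cast; rw [hpK, zero_pow he.ne']
  have hsep : L.Separable := by
    rw [separable_def]
    have : derivative L = 1 := by
      rw [hL]
      simp [derivative_X_pow, hqK]
    rw [this]; exact isCoprime_one_right
  obtain ⟨E, _, _, _⟩ : ∃ (E : Type u) (_ : Field E) (_ : Algebra K E), L.IsSplittingField K E :=
    ⟨L.SplittingField, inferInstance, inferInstance, inferInstance⟩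
  have : FiniteDimensional K E := IsSplittingField.finiteDimensional E L
  have : CharP E p := charP_of_injective_algebraMap (algebraMap K E).injective p
  have : IsGalois K E := IsGalois.of_separable_splitting_field hsep
  let : Algebra F E := ((algebraMap K E).comp (algebraMap F K)).toAlgebra
  have : IsScalarTower F K E := IsScalarTower.of_algebraMap_eq (fun _ => rfl)
  obtain ⟨φ, hφ⟩ := ab_mid (F := F) (K := K) (E := E) p e q he hq hF b L hL hsep hdeg hL0
    (hdiv E) hno
  have hf0 : f ≠ 0 := by
    intro h
    have := congrArg (eval 0) (hf.symm.trans h)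
    simp at this
  have hsplit : (f.map (algebraMap K E)).Splits := by
    refine Splits.of_splits_map (algebraMap E (AlgebraicClosure E))
      (IsAlgClosed.splits _) ?_
    intro y hy
    rw [map_map, mem_roots', IsRoot.def, eval_map, ← IsScalarTower.algebraMap_eq,
      ← aeval_def] at hy
    obtain ⟨v, -, hv⟩ := ab_roots (E := E) p q j hq1 b L hL hL0 f hf y hy.2
    exact ⟨_, hv.symm⟩
  have : Fact ((f.map (algebraMap K E)).Splits) := ⟨hsplit⟩
  have hker : ∀ σ : E ≃ₐ[K] E, Gal.restrict f E σ = 1 ↔ ∀ x ∈ f.rootSet E, σ x = x := by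
    intro σ
    constructor
    · intro h x hx
      have := Gal.restrict_smul (p := f) (E := E) σ ⟨x, hx⟩
      rw [h, one_smul] at this
      exact this.symm
    · intro h
      apply Gal.galActionHom_injective f E
      rw [map_one]
      ext x
      exact (Gal.restrict_smul (p := f) (E := E) σ x).trans (h x x.2)
  have hker2 : ∀ σ : E ≃ₐ[K] E, Gal.restrict f E σ = 1 ↔
      φ σ ∈ Subgroup.center (Matrix.SpecialLinearGroup (Fin 2) F) := by
    intro σ
    rw [hker, hφ]
    constructor
    · intro h v hv
      by_cases hv0 : v = 0
      · exact ⟨0, by simp [hv0]⟩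
      obtain ⟨r, rfl⟩ : ∃ r, q = r + 1 := ⟨q - 1, by omega⟩
      have h1 : (v ^ r) ^ (r + 1 + 1) - algebraMap K E b * v ^ r + 1 = 0 := by
        apply mul_left_cancel₀ hv0
        linear_combination hv
      have h2 : (v ^ r) ^ p ^ j ∈ f.rootSet E := by
        rw [mem_rootSet_of_ne hf0, hf]
        simp only [map_add, map_sub, map_mul, map_pow, map_one, aeval_X, aeval_C]
        have := congrArg (· ^ p ^ j) h1
        simp only [add_pow_char_pow, sub_pow_char_pow, one_pow, mul_pow,
          zero_pow (pow_ne_zero j (Fact.out : p.Prime).ne_zero)] at this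
        rw [← this, ← pow_mul _ (p ^ j), ← pow_mul _ (r + 1 + 1), mul_comm (p ^ j)]
      have h3 := h _ h2
      rw [map_pow, map_pow] at h3
      have h4 : σ v ^ r = v ^ r := by
        have : (σ v ^ r - v ^ r) ^ p ^ j = 0 := by rw [sub_pow_char_pow, h3, sub_self]
        exact sub_eq_zero.1 (pow_eq_zero_iff (pow_ne_zero j (Fact.out : p.Prime).ne_zero) |>.1 this)
      obtain ⟨a, ha⟩ := ab_fixed (F := F) (σ v / v) (by
        rw [hF, pow_succ, div_pow, h4, div_self (pow_ne_zero _ hv0), one_mul])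
      exact ⟨a, by rw [ha]; field_simp⟩
    · intro h x hx
      rw [mem_rootSet_of_ne hf0] at hx
      obtain ⟨v, hv, hxv⟩ := ab_roots (E := E) p q j hq1 b L hL hL0 f hf
        (algebraMap E (AlgebraicClosure E) x) (by rw [aeval_algebraMap_apply, hx, map_zero])
      have hxv' := (algebraMap E (AlgebraicClosure E)).injective hxv
      obtain ⟨a, ha⟩ := h v hv
      rw [hxv', map_pow, map_pow, ha]
      by_cases hv0 : v = 0
      · simp [hv0]
      have ha0 : a ≠ 0 := by
        rintro rfl
        rw [map_zero, zero_mul] at ha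
        exact hv0 (by simpa using ha)
      rw [mul_pow, ← map_pow, ← hF, FiniteField.pow_card_sub_one_eq_one a ha0, map_one, one_mul]
  have hsurj : Function.Surjective (Gal.restrict f E) := Gal.restrict_surjective f E
  have e1 := QuotientGroup.quotientKerEquivOfSurjective (Gal.restrict f E) hsurj
  have e2 := QuotientGroup.congr (Gal.restrict f E).ker
    (Subgroup.center (Matrix.SpecialLinearGroup (Fin 2) F)) φ (by
      ext A
      rw [Subgroup.mem_map]
      constructor
      · rintro ⟨σ, hσ, rfl⟩
        exact (hker2 σ).1 hσ
      · intro hA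
        exact ⟨φ.symm A, (hker2 _).2 (by simpa using hA), by simp⟩)
  exact ⟨e1.symm.trans e2⟩

theorem stmt_1 (p : ℕ) [Fact p.Prime] (e : ℕ) (he : 0 < e)
    (k : Type*) [Field k] [IsAlgClosed k] [CharP k p]
    (q n : ℕ) (hq : q = p ^ e) (hn : n = q + 1)
    (a : k) (ha : a ≠ 0) (s : ℕ) (hs : 0 < s)
    (f : Polynomial (RatFunc k))
    (hf : f = X ^ n - C (algebraMap k (RatFunc k) a * (RatFunc.X ^ s)⁻¹) * X + 1) :
    Nonempty (f.Gal ≃*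
      Matrix.SpecialLinearGroup (Fin 2) (GaloisField p e) ⧸
        Subgroup.center (Matrix.SpecialLinearGroup (Fin 2) (GaloisField p e))) := by
  have hp : p.Prime := Fact.out
  obtain ⟨j, s', hs', rfl⟩ := Nat.exists_eq_pow_mul_and_not_dvd hs.ne' p hp.ne_one
  obtain ⟨a', rfl⟩ := IsAlgClosed.exists_pow_nat_eq a (pow_pos hp.pos j)
  have ha' : a' ≠ 0 := by
    rintro rfl
    exact ha (zero_pow (pow_pos hp.pos j).ne')
  have hs0 : 0 < s' := Nat.pos_of_ne_zero (by rintro rfl; simp at hs')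
  have hq0 : 0 < q := by rw [hq]; exact pow_pos hp.pos e
  have : CharP (RatFunc k) p :=
    charP_of_injective_algebraMap (algebraMap k (RatFunc k)).injective p
  let : Algebra (ZMod p) k := ZMod.algebra k p
  let ι : GaloisField p e →ₐ[ZMod p] k := IsAlgClosed.lift
  let : Algebra (GaloisField p e) (RatFunc k) :=
    ((algebraMap k (RatFunc k)).comp ι.toRingHom).toAlgebra
  let : Fintype (GaloisField p e) := Fintype.ofFinite _
  refine ab_fin (F := GaloisField p e) p e q j he hq ?_
    (algebraMap k (RatFunc k) a' * (RatFunc.X ^ s')⁻¹) f ?_ ?_ ?_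
  · rw [← Nat.card_eq_fintype_card, GaloisField.card p e he.ne', hq]
  · rw [hf, hn, map_pow, mul_pow, inv_pow, ← pow_mul, mul_comm s']
  · intro E _ _ _ _ v0 v1 h0 h1 hD
    obtain ⟨w, m, hm, hm0, hw⟩ := ab_ram (K := RatFunc k) (E := E) (Polynomial.idealX k)
    have hva : (Polynomial.idealX k).valuation (RatFunc k) (algebraMap k (RatFunc k) a') = 1 := by
      rw [IsScalarTower.algebraMap_apply k k[X] (RatFunc k),
        IsDedekindDomain.HeightOneSpectrum.valuation_eq_one_iff_notMem, idealX_span,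
        Ideal.mem_span_singleton, X_dvd_iff]
      simpa using ha'
    have hdv := ab_val w q (s' * m) hq0.ne' (Nat.mul_pos hs0 (Nat.pos_of_ne_zero hm0)) _ v0 v1
      (by
        rw [hw, map_mul, map_inv₀, map_pow, hva, Polynomial.valuation_X_eq_neg_one, one_mul,
          ← WithZero.exp_nsmul, ← WithZero.exp_neg, ← WithZero.exp_nsmul]
        congr 1
        simp; ring) h0 h1 hD
    have hcop : Nat.Coprime q s' := by
      rw [hq]; exact Nat.Coprime.pow_left _ ((Nat.Prime.coprime_iff_not_dvd hp).2 hs')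
    exact (hcop.dvd_of_dvd_mul_left hdv).trans hm
  · intro y hy
    exact ab_noroot a' ha' s' q hs0 hq0 y hy
end

section
/- Let k be an algebraically closed field of characteristic 7, let a be a nonzero element of k, and let s be a positive integer. Then the Galois group of the polynomial Y^9 - a·X^s·Y^2 + 1 over the rational function field k(X) is isomorphic, as a group, to PSL(2,8), i.e., to the quotient of SL(2, F_8) by its center, where F_8 is the field with 8 elements. -/
theorem abh_pc {R : Type*} [CommRing R] (h7 : (7:R) = 0) (x : R) :
    x^2*(x^14*((x-3)*(x-5)*(x-6))^3)*((x-3)*(x-5)*(x-6)) + (x-1)^2*((x-1)^14*(x*(x-4)*(x-6))^3)*(x*(x-4)*(x-6)) + (x-2)^2*((x-2)^14*(x*(x-1)*(x-5))^3)*(x*(x-1)*(x-5)) + (x-3)^2*((x-3)^14*((x-1)*(x-2)*(x-6))^3)*((x-1)*(x-2)*(x-6)) + (x-4)^2*((x-4)^14*(x*(x-2)*(x-3))^3)*(x*(x-2)*(x-3)) + (x-5)^2*((x-5)^14*((x-1)*(x-3)*(x-4))^3)*((x-1)*(x-3)*(x-4)) + (x-6)^2*((x-6)^14*((x-2)*(x-4)*(x-5))^3)*((x-2)*(x-4)*(x-5))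 - x^2*x^2*((x-3)*(x-5)*(x-6)) - (x-1)^2*(x-1)^2*(x*(x-4)*(x-6)) - (x-2)^2*(x-2)^2*(x*(x-1)*(x-5)) - (x-3)^2*(x-3)^2*((x-1)*(x-2)*(x-6)) - (x-4)^2*(x-4)^2*(x*(x-2)*(x-3)) - (x-5)^2*(x-5)^2*((x-1)*(x-3)*(x-4)) - (x-6)^2*(x-6)^2*((x-2)*(x-4)*(x-5)) - (x^7-x) = 0 := by
  linear_combination (((((((((((((((((((((((((((((1)*x+(-84))*x+(3794))*x+(-122164))*x+(3084319))*x+(-63415688))*x+(1081893988))*x+(-15505409288))*x+(188474698223))*x+(-1958079025504))*x+(17491950683284))*x+(-134977627101688))*x+(902629700086422))*x+(-5241578803372128))*x+(26454498316952280))*x+(-116013878260565152))*x+(441444463407986843))*x+(-1453576816565141492))*x+(4125020186027837270))*x+(-10031223103648366156))*x+(20742108972884035621))*x+(-36092578268447129688))*x+(52120106059255887937))*x+(-61287629838857240843))*x+(57137962857001640187))*x+(-40598068408035822239))*x+(20634832448195607953))*x+(-6676101274552387730))*x+(1032172331172032424))*h7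

theorem abh_p0 {R : Type*} [CommRing R] (h7 : (7:R) = 0) (x : R) :
    ((x-4)^2*((x-5)^14*((x-1)*(x-3)*(x-4))^3) + (x-5)^2*((x-4)^14*(x*(x-2)*(x-3))^3) - 2*(x-4)^2*(x-5)^2)*(x-3) + ((x-2)^2*((x-6)^14*((x-2)*(x-4)*(x-5))^3) + (x-6)^2*((x-2)^14*(x*(x-1)*(x-5))^3) - 2*(x-2)^2*(x-6)^2)*(x-5) + ((x-1)^2*((x-3)^14*((x-1)*(x-2)*(x-6))^3) + (x-3)^2*((x-1)^14*(x*(x-4)*(x-6))^3) - 2*(x-1)^2*(x-3)^2)*(x-6) + (x^7-x)^3*x^2*((x-3)*(x-5)*(x-6)) + 2*x^2*((x-3)*(x-5)*(x-6)) = 0 := by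
  linear_combination (((((((((((((((((((((((((((1)*x+(-75))*x+(3208))*x+(-95816))*x+(2180814))*x+(-39662460))*x+(591809095))*x+(-7361552035))*x+(77163003403))*x+(-686812087146))*x+(5219950534830))*x+(-34006567249134))*x+(190346419535623))*x+(-916268627566740))*x+(3791505538954255))*x+(-13462023294816250))*x+(40874167244096113))*x+(-105582689288980786))*x+(230348873553013582))*x+(-420247839309006325))*x+(632505718441883320))*x+(-770830845208803221))*x+(740829358345989712))*x+(-539885050809685492))*x+(280094417125093558))*x+(-92076016107612878))*x+(14401775661815220))*h7

theorem abh_p1 {R : Type*} [CommRing R] (h7 : (7:R) = 0) (x : R) :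
    ((x-2)^2*((x-4)^14*(x*(x-2)*(x-3))^3) + (x-4)^2*((x-2)^14*(x*(x-1)*(x-5))^3) - 2*(x-2)^2*(x-4)^2)*x + ((x-5)^2*((x-6)^14*((x-2)*(x-4)*(x-5))^3) + (x-6)^2*((x-5)^14*((x-1)*(x-3)*(x-4))^3) - 2*(x-5)^2*(x-6)^2)*(x-4) + (x^2*((x-3)^14*((x-1)*(x-2)*(x-6))^3) + (x-3)^2*(x^14*((x-3)*(x-5)*(x-6))^3) - 2*x^2*(x-3)^2)*(x-6) + (x^7-x)^3*(x-1)^2*(x*(x-4)*(x-6)) + 2*(x-1)^2*(x*(x-4)*(x-6)) = 0 := by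
  linear_combination (((((((((((((((((((((((((((1)*x+(-73))*x+(3159))*x+(-98035))*x+(2357975))*x+(-45648797))*x+(725802238))*x+(-9605853418))*x+(106921894800))*x+(-1009177490020))*x+(8128028722544))*x+(-56119873681304))*x+(333164867798447))*x+(-1703126385775076))*x+(7496641597989917))*x+(-28369263591552078))*x+(92006352541182294))*x+(-254455629278601899))*x+(595834316081388807))*x+(-1169683599904919690))*x+(1899213341615524042))*x+(-2503477682113993450))*x+(2609153407080036576))*x+(-2067183123380692590))*x+(1168799076668340792))*x+(-419706851369143880))*x+(71864200030629600))*h7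

theorem abh_p2 {R : Type*} [CommRing R] (h7 : (7:R) = 0) (x : R) :
    ((x-1)^2*((x-4)^14*(x*(x-2)*(x-3))^3) + (x-4)^2*((x-1)^14*(x*(x-4)*(x-6))^3) - 2*(x-1)^2*(x-4)^2)*x + ((x-3)^2*((x-5)^14*((x-1)*(x-3)*(x-4))^3) + (x-5)^2*((x-3)^14*((x-1)*(x-2)*(x-6))^3) - 2*(x-3)^2*(x-5)^2)*(x-1) + (x^2*((x-6)^14*((x-2)*(x-4)*(x-5))^3) + (x-6)^2*(x^14*((x-3)*(x-5)*(x-6))^3) - 2*x^2*(x-6)^2)*(x-5) + (x^7-x)^3*(x-2)^2*(x*(x-1)*(x-5)) + 2*(x-2)^2*(x*(x-1)*(x-5)) = 0 := by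
  linear_combination (((((((((((((((((((((((((((1)*x+(-71))*x+(2920))*x+(-83824))*x+(1836064))*x+(-32122805))*x+(459806466))*x+(-5462516168))*x+(54385701842))*x+(-456955691246))*x+(3255910770981))*x+(-19732876177820))*x+(101855528743342))*x+(-447578329295540))*x+(1670657534797750))*x+(-5275195265113712))*x+(14000308438625590))*x+(-30944602827862439))*x+(56232571695734038))*x+(-82514850526697737))*x+(95297255156870033))*x+(-83385970642558617))*x+(52024512989238597))*x+(-20748405134012365))*x+(4124070082891776))*x+(-125307131867206))*x+(13589785608750))*h7

theorem abh_p3 {R : Type*} [CommRing R] (h7 : (7:R) = 0) (x : R) :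
    ((x-2)^2*((x-5)^14*((x-1)*(x-3)*(x-4))^3) + (x-5)^2*((x-2)^14*(x*(x-1)*(x-5))^3) - 2*(x-2)^2*(x-5)^2)*(x-1) + ((x-4)^2*((x-6)^14*((x-2)*(x-4)*(x-5))^3) + (x-6)^2*((x-4)^14*(x*(x-2)*(x-3))^3) - 2*(x-4)^2*(x-6)^2)*(x-2) + (x^2*((x-1)^14*(x*(x-4)*(x-6))^3) + (x-1)^2*(x^14*((x-3)*(x-5)*(x-6))^3) - 2*x^2*(x-1)^2)*(x-6) + (x^7-x)^3*(x-3)^2*((x-1)*(x-2)*(x-6)) + 2*(x-3)^2*((x-1)*(x-2)*(x-6)) = 0 := by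
  linear_combination (((((((((((((((((((((((((((1)*x+(-69))*x+(2820))*x+(-83735))*x+(1936972))*x+(-36080227))*x+(551863606))*x+(-7029799851))*x+(75394812476))*x+(-686471184866))*x+(5338160542471))*x+(-35597193470372))*x+(204053268094520))*x+(-1006434897246235))*x+(4269225749353542))*x+(-15546395565581765))*x+(48435456813260095))*x+(-128448858795329277))*x+(287870066845061935))*x+(-539839828250663529))*x+(835750931566565370))*x+(-1048467776253407542))*x+(1038129224915170092))*x+(-780086440782892590))*x+(417671622847032188))*x+(-141823552930842264))*x+(22933142224087184))*h7

theorem abh_p4 {R : Type*} [CommRing R] (h7 : (7:R) = 0) (x : R) :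
    ((x-1)^2*((x-2)^14*(x*(x-1)*(x-5))^3) + (x-2)^2*((x-1)^14*(x*(x-4)*(x-6))^3) - 2*(x-1)^2*(x-2)^2)*x + ((x-3)^2*((x-6)^14*((x-2)*(x-4)*(x-5))^3) + (x-6)^2*((x-3)^14*((x-1)*(x-2)*(x-6))^3) - 2*(x-3)^2*(x-6)^2)*(x-2) + (x^2*((x-5)^14*((x-1)*(x-3)*(x-4))^3) + (x-5)^2*(x^14*((x-3)*(x-5)*(x-6))^3) - 2*x^2*(x-5)^2)*(x-3) + (x^7-x)^3*(x-4)^2*(x*(x-2)*(x-3)) + 2*(x-4)^2*(x*(x-2)*(x-3)) = 0 := by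
  linear_combination (((((((((((((((((((((((((((1)*x+(-67))*x+(2691))*x+(-78578))*x+(1787181))*x+(-32723032))*x+(491807472))*x+(-6152842841))*x+(64774282901))*x+(-578576501421))*x+(4411224363261))*x+(-28824961585382))*x+(161823017968928))*x+(-781238113785675))*x+(3241924882093301))*x+(-11542331004944586))*x+(35139231794512678))*x+(-91008876567337308))*x+(199086928356005309))*x+(-364237730317865411))*x+(549881852722436017))*x+(-672421383333780959))*x+(648755197174861008))*x+(-474894230513526498))*x+(247646887548892646))*x+(-81893683073243936))*x+(12896587445209200))*h7

theorem abh_p5 {R : Type*} [CommRing R] (h7 : (7:R) = 0) (x : R) :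
    ((x-2)^2*((x-3)^14*((x-1)*(x-2)*(x-6))^3) + (x-3)^2*((x-2)^14*(x*(x-1)*(x-5))^3) - 2*(x-2)^2*(x-3)^2)*(x-1) + (x^2*((x-4)^14*(x*(x-2)*(x-3))^3) + (x-4)^2*(x^14*((x-3)*(x-5)*(x-6))^3) - 2*x^2*(x-4)^2)*(x-3) + ((x-1)^2*((x-6)^14*((x-2)*(x-4)*(x-5))^3) + (x-6)^2*((x-1)^14*(x*(x-4)*(x-6))^3) - 2*(x-1)^2*(x-6)^2)*(x-4) + (x^7-x)^3*(x-5)^2*((x-1)*(x-3)*(x-4)) + 2*(x-5)^2*((x-1)*(x-3)*(x-4)) = 0 := by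
  linear_combination (((((((((((((((((((((((((((1)*x+(-65))*x+(2407))*x+(-65109))*x+(1406871))*x+(-25121394))*x+(374535837))*x+(-4680220269))*x+(49198356832))*x+(-436920397105))*x+(3291909807086))*x+(-21115505734486))*x+(115584992910782))*x+(-540540496511738))*x+(2159014097399315))*x+(-7351960482584380))*x+(21270212522368758))*x+(-52004417855969074))*x+(106636362750109608))*x+(-181481114463233542))*x+(252726559848898356))*x+(-282425490033485454))*x+(246423705211452127))*x+(-161221253580137644))*x+(74148825500764930))*x+(-21303166527957358))*x+(2865894152636784))*h7

theorem abh_p6 {R : Type*} [CommRing R] (h7 : (7:R) = 0) (x : R) :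
    ((x-3)^2*((x-4)^14*(x*(x-2)*(x-3))^3) + (x-4)^2*((x-3)^14*((x-1)*(x-2)*(x-6))^3) - 2*(x-3)^2*(x-4)^2)*(x-2) + ((x-1)^2*((x-5)^14*((x-1)*(x-3)*(x-4))^3) + (x-5)^2*((x-1)^14*(x*(x-4)*(x-6))^3) - 2*(x-1)^2*(x-5)^2)*(x-4) + (x^2*((x-2)^14*(x*(x-1)*(x-5))^3) + (x-2)^2*(x^14*((x-3)*(x-5)*(x-6))^3) - 2*x^2*(x-2)^2)*(x-5) + (x^7-x)^3*(x-6)^2*((x-2)*(x-4)*(x-5)) + 2*(x-6)^2*((x-2)*(x-4)*(x-5)) = 0 := by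
  linear_combination (((((((((((((((((((((((((((1)*x+(-63))*x+(2129))*x+(-49884))*x+(888932))*x+(-12614867))*x+(146335880))*x+(-1410042283))*x+(11407093022))*x+(-78070665438))*x+(454496761326))*x+(-2258747311732))*x+(9601525667691))*x+(-34923140150211))*x+(108566686423932))*x+(-287699292889784))*x+(647120221320005))*x+(-1227971087399647))*x+(1949660709436258))*x+(-2561680295443891))*x+(2744999747997067))*x+(-2352088320779108))*x+(1568024889505225))*x+(-781273031229126))*x+(272934502580852))*x+(-59465515700750))*x+(6064568435960))*h7

set_option maxHeartbeats 4000000 in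
theorem abh_gen {R : Type*} [CommRing R] (F G H b0 u0 m0 x0 l0 w0 b1 u1 m1 x1 l1 w1 b2 u2 m2 x2 l2 w2 b3 u3 m3 x3 l3 w3 b4 u4 m4 x4 l4 w4 b5 u5 m5 x5 l5 w5 b6 u6 m6 x6 l6 w6 S T : R)
    (d0 : l0*l0 = m0)
    (d1 : l1*l1 = m1)
    (d2 : l2*l2 = m2)
    (d3 : l3*l3 = m3)
    (d4 : l4*l4 = m4)
    (d5 : l5*l5 = m5)
    (d6 : l6*l6 = m6)
    (g0 : H*l0 = m0*w0)
    (g1 : H*l1 = m1*w1)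
    (g2 : H*l2 = m2*w2)
    (g3 : H*l3 = m3*w3)
    (g4 : H*l4 = m4*w4)
    (g5 : H*l5 = m5*w5)
    (g6 : H*l6 = m6*w6)
    (l45 : l4*l5 = x3*w0)
    (l26 : l2*l6 = x5*w0)
    (l13 : l1*l3 = x6*w0)
    (l24 : l2*l4 = x0*w1)
    (l56 : l5*l6 = x4*w1)
    (l03 : l0*l3 = x6*w1)
    (l14 : l1*l4 = x0*w2)
    (l35 : l3*l5 = x1*w2)
    (l06 : l0*l6 = x5*w2)
    (l25 : l2*l5 = x1*w3)
    (l46 : l4*l6 = x2*w3)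
    (l01 : l0*l1 = x6*w3)
    (l12 : l1*l2 = x0*w4)
    (l36 : l3*l6 = x2*w4)
    (l05 : l0*l5 = x3*w4)
    (l23 : l2*l3 = x1*w5)
    (l04 : l0*l4 = x3*w5)
    (l16 : l1*l6 = x4*w5)
    (l34 : l3*l4 = x2*w6)
    (l15 : l1*l5 = x4*w6)
    (l02 : l0*l2 = x5*w6)
    (hH : H*H = F)
    (pc : b0*u0*m0 + b1*u1*m1 + b2*u2*m2 + b3*u3*m3 + b4*u4*m4 + b5*u5*m5 + b6*u6*m6 - b0*b0*m0 - b1*b1*m1 - b2*b2*m2 - b3*b3*m3 - b4*b4*m4 - b5*b5*m5 - b6*b6*m6 - F = 0)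
    (p0 : (b4*u5 + b5*u4 - 2*b4*b5)*x3 + (b2*u6 + b6*u2 - 2*b2*b6)*x5 + (b1*u3 + b3*u1 - 2*b1*b3)*x6 + G*b0*m0 + 2*b0*m0 = 0)
    (p1 : (b2*u4 + b4*u2 - 2*b2*b4)*x0 + (b5*u6 + b6*u5 - 2*b5*b6)*x4 + (b0*u3 + b3*u0 - 2*b0*b3)*x6 + G*b1*m1 + 2*b1*m1 = 0)
    (p2 : (b1*u4 + b4*u1 - 2*b1*b4)*x0 + (b3*u5 + b5*u3 - 2*b3*b5)*x1 + (b0*u6 + b6*u0 - 2*b0*b6)*x5 + G*b2*m2 + 2*b2*m2 = 0)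
    (p3 : (b2*u5 + b5*u2 - 2*b2*b5)*x1 + (b4*u6 + b6*u4 - 2*b4*b6)*x2 + (b0*u1 + b1*u0 - 2*b0*b1)*x6 + G*b3*m3 + 2*b3*m3 = 0)
    (p4 : (b1*u2 + b2*u1 - 2*b1*b2)*x0 + (b3*u6 + b6*u3 - 2*b3*b6)*x2 + (b0*u5 + b5*u0 - 2*b0*b5)*x3 + G*b4*m4 + 2*b4*m4 = 0)
    (p5 : (b2*u3 + b3*u2 - 2*b2*b3)*x1 + (b0*u4 + b4*u0 - 2*b0*b4)*x3 + (b1*u6 + b6*u1 - 2*b1*b6)*x4 + G*b5*m5 + 2*b5*m5 = 0)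
    (p6 : (b3*u4 + b4*u3 - 2*b3*b4)*x2 + (b1*u5 + b5*u1 - 2*b1*b5)*x4 + (b0*u2 + b2*u0 - 2*b0*b2)*x5 + G*b6*m6 + 2*b6*m6 = 0)
    (hS : S = b0*l0 + b1*l1 + b2*l2 + b3*l3 + b4*l4 + b5*l5 + b6*l6)
    (hT : T = u0*l0 + u1*l1 + u2*l2 + u3*l3 + u4*l4 + u5*l5 + u6*l6) :
    S*T + G*(H*S) = (S - H)*(S - H) := by
  subst hS hT
  linear_combination (b0*u0-b0*b0)*d0 + (b1*u1-b1*b1)*d1 + (b2*u2-b2*b2)*d2 + (b3*u3-b3*b3)*d3 + (b4*u4-b4*b4)*d4 + (b5*u5-b5*b5)*d5 + (b6*u6-b6*b6)*d6 + (b4*u5+b5*u4-2*b4*b5)*l45 + (b2*u6+b6*u2-2*b2*b6)*l26 + (b1*u3+b3*u1-2*b1*b3)*l13 + (b2*u4+b4*u2-2*b2*b4)*l24 + (b5*u6+b6*u5-2*b5*b6)*l56 + (b0*u3+b3*u0-2*b0*b3)*l03 + (b1*u4+b4*u1-2*b1*b4)*l14 + (b3*u5+b5*u3-2*b3*b5)*l35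 + (b0*u6+b6*u0-2*b0*b6)*l06 + (b2*u5+b5*u2-2*b2*b5)*l25 + (b4*u6+b6*u4-2*b4*b6)*l46 + (b0*u1+b1*u0-2*b0*b1)*l01 + (b1*u2+b2*u1-2*b1*b2)*l12 + (b3*u6+b6*u3-2*b3*b6)*l36 + (b0*u5+b5*u0-2*b0*b5)*l05 + (b2*u3+b3*u2-2*b2*b3)*l23 + (b0*u4+b4*u0-2*b0*b4)*l04 + (b1*u6+b6*u1-2*b1*b6)*l16 + (b3*u4+b4*u3-2*b3*b4)*l34 + (b1*u5+b5*u1-2*b1*b5)*l15 + (b0*u2+b2*u0-2*b0*b2)*l02 + (G*b0+2*b0)*g0 + (G*b1+2*b1)*g1 + (G*b2+2*b2)*g2 + (G*b3+2*b3)*g3 + (G*b4+2*b4)*g4 + (G*b5+2*b5)*g5 + (G*b6+2*b6)*g6 + -hH + pc + w0*p0 + w1*p1 + w2*p2 + w3*p3 + w4*p4 + w5*p5 + w6*p6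

theorem abh_key {R : Type*} [CommRing R] [CharP R 7] (x h0 h1 h2 h3 h4 h5 h6 : R)
    (e0 : h0^2 = x) (e1 : h1^2 = (x-1)) (e2 : h2^2 = (x-2)) (e3 : h3^2 = (x-3)) (e4 : h4^2 = (x-4)) (e5 : h5^2 = (x-5)) (e6 : h6^2 = (x-6)) (S H : R)
    (hS : S = x^2*(h3*h5*h6) + (x-1)^2*(h0*h4*h6) + (x-2)^2*(h0*h1*h5) + (x-3)^2*(h1*h2*h6) + (x-4)^2*(h0*h2*h3) + (x-5)^2*(h1*h3*h4) + (x-6)^2*(h2*h4*h5))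
    (hHd : H = h0*h1*h2*h3*h4*h5*h6) :
    S^8 + H^7*S = (S-H)^2 ∧ H^2 = x^7 - x := by
  have h7 : (7:R) = 0 := by exact_mod_cast CharP.cast_eq_zero R 7
  have : Fact (Nat.Prime 7) := ⟨by norm_num⟩
  have d0 : (h3*h5*h6)*(h3*h5*h6) = ((x-3)*(x-5)*(x-6)) := by
    linear_combination h5^2*h6^2*e3 + (x-3)*h6^2*e5 + (x-3)*(x-5)*e6
  have d1 : (h0*h4*h6)*(h0*h4*h6) = (x*(x-4)*(x-6)) := by
    linear_combination h4^2*h6^2*e0 + x*h6^2*e4 + x*(x-4)*e6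
  have d2 : (h0*h1*h5)*(h0*h1*h5) = (x*(x-1)*(x-5)) := by
    linear_combination h1^2*h5^2*e0 + x*h5^2*e1 + x*(x-1)*e5
  have d3 : (h1*h2*h6)*(h1*h2*h6) = ((x-1)*(x-2)*(x-6)) := by
    linear_combination h2^2*h6^2*e1 + (x-1)*h6^2*e2 + (x-1)*(x-2)*e6
  have d4 : (h0*h2*h3)*(h0*h2*h3) = (x*(x-2)*(x-3)) := by
    linear_combination h2^2*h3^2*e0 + x*h3^2*e2 + x*(x-2)*e3
  have d5 : (h1*h3*h4)*(h1*h3*h4) = ((x-1)*(x-3)*(x-4)) := by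
    linear_combination h3^2*h4^2*e1 + (x-1)*h4^2*e3 + (x-1)*(x-3)*e4
  have d6 : (h2*h4*h5)*(h2*h4*h5) = ((x-2)*(x-4)*(x-5)) := by
    linear_combination h4^2*h5^2*e2 + (x-2)*h5^2*e4 + (x-2)*(x-4)*e5
  have g0 : (h0*h1*h2*h3*h4*h5*h6)*(h3*h5*h6) = ((x-3)*(x-5)*(x-6))*(h0*h1*h2*h4) := by rw [← d0]; ring
  have g1 : (h0*h1*h2*h3*h4*h5*h6)*(h0*h4*h6) = (x*(x-4)*(x-6))*(h1*h2*h3*h5) := by rw [← d1]; ring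
  have g2 : (h0*h1*h2*h3*h4*h5*h6)*(h0*h1*h5) = (x*(x-1)*(x-5))*(h2*h3*h4*h6) := by rw [← d2]; ring
  have g3 : (h0*h1*h2*h3*h4*h5*h6)*(h1*h2*h6) = ((x-1)*(x-2)*(x-6))*(h0*h3*h4*h5) := by rw [← d3]; ring
  have g4 : (h0*h1*h2*h3*h4*h5*h6)*(h0*h2*h3) = (x*(x-2)*(x-3))*(h1*h4*h5*h6) := by rw [← d4]; ring
  have g5 : (h0*h1*h2*h3*h4*h5*h6)*(h1*h3*h4) = ((x-1)*(x-3)*(x-4))*(h0*h2*h5*h6) := by rw [← d5]; ring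
  have g6 : (h0*h1*h2*h3*h4*h5*h6)*(h2*h4*h5) = ((x-2)*(x-4)*(x-5))*(h0*h1*h3*h6) := by rw [← d6]; ring
  have l45 : (h0*h2*h3)*(h1*h3*h4) = (x-3)*(h0*h1*h2*h4) := by linear_combination (h0*h1*h2*h4)*e3
  have l26 : (h0*h1*h5)*(h2*h4*h5) = (x-5)*(h0*h1*h2*h4) := by linear_combination (h0*h1*h2*h4)*e5
  have l13 : (h0*h4*h6)*(h1*h2*h6) = (x-6)*(h0*h1*h2*h4) := by linear_combination (h0*h1*h2*h4)*e6
  have l24 : (h0*h1*h5)*(h0*h2*h3) = x*(h1*h2*h3*h5) := by linear_combination (h1*h2*h3*h5)*e0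
  have l56 : (h1*h3*h4)*(h2*h4*h5) = (x-4)*(h1*h2*h3*h5) := by linear_combination (h1*h2*h3*h5)*e4
  have l03 : (h3*h5*h6)*(h1*h2*h6) = (x-6)*(h1*h2*h3*h5) := by linear_combination (h1*h2*h3*h5)*e6
  have l14 : (h0*h4*h6)*(h0*h2*h3) = x*(h2*h3*h4*h6) := by linear_combination (h2*h3*h4*h6)*e0
  have l35 : (h1*h2*h6)*(h1*h3*h4) = (x-1)*(h2*h3*h4*h6) := by linear_combination (h2*h3*h4*h6)*e1
  have l06 : (h3*h5*h6)*(h2*h4*h5) = (x-5)*(h2*h3*h4*h6) := by linear_combination (h2*h3*h4*h6)*e5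
  have l25 : (h0*h1*h5)*(h1*h3*h4) = (x-1)*(h0*h3*h4*h5) := by linear_combination (h0*h3*h4*h5)*e1
  have l46 : (h0*h2*h3)*(h2*h4*h5) = (x-2)*(h0*h3*h4*h5) := by linear_combination (h0*h3*h4*h5)*e2
  have l01 : (h3*h5*h6)*(h0*h4*h6) = (x-6)*(h0*h3*h4*h5) := by linear_combination (h0*h3*h4*h5)*e6
  have l12 : (h0*h4*h6)*(h0*h1*h5) = x*(h1*h4*h5*h6) := by linear_combination (h1*h4*h5*h6)*e0
  have l36 : (h1*h2*h6)*(h2*h4*h5) = (x-2)*(h1*h4*h5*h6) := by linear_combination (h1*h4*h5*h6)*e2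
  have l05 : (h3*h5*h6)*(h1*h3*h4) = (x-3)*(h1*h4*h5*h6) := by linear_combination (h1*h4*h5*h6)*e3
  have l23 : (h0*h1*h5)*(h1*h2*h6) = (x-1)*(h0*h2*h5*h6) := by linear_combination (h0*h2*h5*h6)*e1
  have l04 : (h3*h5*h6)*(h0*h2*h3) = (x-3)*(h0*h2*h5*h6) := by linear_combination (h0*h2*h5*h6)*e3
  have l16 : (h0*h4*h6)*(h2*h4*h5) = (x-4)*(h0*h2*h5*h6) := by linear_combination (h0*h2*h5*h6)*e4
  have l34 : (h1*h2*h6)*(h0*h2*h3) = (x-2)*(h0*h1*h3*h6) := by linear_combination (h0*h1*h3*h6)*e2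
  have l15 : (h0*h4*h6)*(h1*h3*h4) = (x-4)*(h0*h1*h3*h6) := by linear_combination (h0*h1*h3*h6)*e4
  have l02 : (h3*h5*h6)*(h0*h1*h5) = (x-5)*(h0*h1*h3*h6) := by linear_combination (h0*h1*h3*h6)*e5
  have hH : (h0*h1*h2*h3*h4*h5*h6)*(h0*h1*h2*h3*h4*h5*h6) = x^7 - x := by
    have : (h0*h1*h2*h3*h4*h5*h6)*(h0*h1*h2*h3*h4*h5*h6) = h0^2*h1^2*h2^2*h3^2*h4^2*h5^2*h6^2 := by ring
    rw [this, e0, e1, e2, e3, e4, e5, e6]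
    linear_combination (((((((-3)*x+(25))*x+(-105))*x+(232))*x+(-252))*x+(103))*x+(0))*h7
  have q : ∀ b u m : R, u*u = m → (b^2*u)^7 = (b^14*m^3)*u := by
    intro b u m hm; rw [← hm]; ring
  have hS7 : S^7 = (x^14*((x-3)*(x-5)*(x-6))^3)*(h3*h5*h6) + ((x-1)^14*(x*(x-4)*(x-6))^3)*(h0*h4*h6) + ((x-2)^14*(x*(x-1)*(x-5))^3)*(h0*h1*h5) + ((x-3)^14*((x-1)*(x-2)*(x-6))^3)*(h1*h2*h6) + ((x-4)^14*(x*(x-2)*(x-3))^3)*(h0*h2*h3) + ((x-5)^14*((x-1)*(x-3)*(x-4))^3)*(h1*h3*h4) + ((x-6)^14*((x-2)*(x-4)*(x-5))^3)*(h2*h4*h5) := by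
    rw [hS]
    simp only [add_pow_char]
    rw [q _ _ _ d0, q _ _ _ d1, q _ _ _ d2, q _ _ _ d3, q _ _ _ d4, q _ _ _ d5, q _ _ _ d6]
  refine ⟨?_, by rw [hHd, pow_two]; exact hH⟩
  have e8 : S^8 = S*S^7 := by ring
  have e9 : H^7*S = (H*H)^3*(H*S) := by ring
  rw [e8, e9, hHd, hH, pow_two (S - _)]
  exact abh_gen (x^7-x) ((x^7-x)^3) (h0*h1*h2*h3*h4*h5*h6) (x^2) (x^14*((x-3)*(x-5)*(x-6))^3) ((x-3)*(x-5)*(x-6)) x (h3*h5*h6) (h0*h1*h2*h4) ((x-1)^2) ((x-1)^14*(x*(x-4)*(x-6))^3) (x*(x-4)*(x-6)) (x-1) (h0*h4*h6) (h1*h2*h3*h5) ((x-2)^2) ((x-2)^14*(x*(x-1)*(x-5))^3) (x*(x-1)*(x-5)) (x-2) (h0*h1*h5) (h2*h3*h4*h6) ((x-3)^2) ((x-3)^14*((x-1)*(x-2)*(x-6))^3) ((x-1)*(x-2)*(x-6)) (x-3) (h1*h2*h6) (h0*h3*h4*h5) ((x-4)^2) ((x-4)^14*(x*(x-2)*(x-3))^3)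 (x*(x-2)*(x-3)) (x-4) (h0*h2*h3) (h1*h4*h5*h6) ((x-5)^2) ((x-5)^14*((x-1)*(x-3)*(x-4))^3) ((x-1)*(x-3)*(x-4)) (x-5) (h1*h3*h4) (h0*h2*h5*h6) ((x-6)^2) ((x-6)^14*((x-2)*(x-4)*(x-5))^3) ((x-2)*(x-4)*(x-5)) (x-6) (h2*h4*h5) (h0*h1*h3*h6) _ _
    d0 d1 d2 d3 d4 d5 d6 g0 g1 g2 g3 g4 g5 g6 l45 l26 l13 l24 l56 l03 l14 l35 l06 l25 l46 l01 l12 l36 l05 l23 l04 l16 l34 l15 l02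
    hH (abh_pc h7 x) (abh_p0 h7 x) (abh_p1 h7 x) (abh_p2 h7 x) (abh_p3 h7 x) (abh_p4 h7 x) (abh_p5 h7 x) (abh_p6 h7 x) hS hS7

/-- the sign character attached to the flip of the `j`-th square root -/
def abhChi (j i : Fin 7) : ℤ := if j = i ∨ j = i + 1 ∨ j = i + 2 ∨ j = i + 4 then -1 else 1

/-- the summands -/
noncomputable def abhR {F : Type*} [Field F] (x : F) (h : Fin 7 → F) (i : Fin 7) : F :=
  (x - ((i : ℕ) : F)) ^ 2 / (h i * h (i + 1) * h (i + 2) * h (i + 4))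

/-- flip one sign -/
def abhFlip {F : Type*} [Field F] (j : Fin 7) (h : Fin 7 → F) : Fin 7 → F :=
  fun l => if l = j then - h l else h l

theorem abhFlip_sq {F : Type*} [Field F] (x : F) (j : Fin 7) (h : Fin 7 → F)
    (hh : ∀ i, h i ^ 2 = x - ((i : ℕ) : F)) : ∀ i, abhFlip j h i ^ 2 = x - ((i : ℕ) : F) := by
  intro i
  unfold abhFlip
  split_ifs
  · rw [neg_sq, hh]
  · exact hh i

theorem abhR_flip {F : Type*} [Field F] (x : F) (j : Fin 7) (h : Fin 7 → F) (i : Fin 7) :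
    abhR x (abhFlip j h) i = (abhChi j i : F) * abhR x h i := by
  have h1 : i + 1 ≠ i := by revert i; decide
  have h2 : i + 2 ≠ i := by revert i; decide
  have h4 : i + 4 ≠ i := by revert i; decide
  have h12 : i + 1 ≠ i + 2 := by revert i; decide
  have h14 : i + 1 ≠ i + 4 := by revert i; decide
  have h24 : i + 2 ≠ i + 4 := by revert i; decide
  unfold abhR abhFlip abhChi
  by_cases c0 : j = i
  · subst c0; simp only [h1, h2, h4, if_true, if_false, true_or]; push_cast; ring
  by_cases c1 : j = i + 1
  · subst c1; simp only [h1, h1.symm, h12.symm, h14.symm, if_true, if_false, true_or, or_true]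
    push_cast; ring
  by_cases c2 : j = i + 2
  · subst c2; simp only [h2, h2.symm, h12, h24.symm, if_true, if_false, true_or, or_true]
    push_cast; ring
  by_cases c4 : j = i + 4
  · subst c4; simp only [h4, h4.symm, h14, h24, if_true, if_false, true_or, or_true]
    push_cast; ring
  simp only [Ne.symm c0, Ne.symm c1, Ne.symm c2, Ne.symm c4, c0, c1, c2, c4, if_false, or_self]
  push_cast; ring

theorem abh_ratio {F : Type*} [Field F] [CharP F 7] (x : F) (h : Fin 7 → F)
    (hh : ∀ i, h i ^ 2 = x - ((i : ℕ) : F)) (h0 : ∀ i, h i ≠ 0) :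
    ∃ H : F, H ^ 2 = x ^ 7 - x ∧ H ≠ 0 ∧
      (∑ i, abhR x h i) ^ 8 * H ^ 6 + (∑ i, abhR x h i) * H ^ 6 = (∑ i, abhR x h i - 1) ^ 2 := by
  have e0 : h 0 ^ 2 = x := by simpa using hh 0
  have e1 : h 1 ^ 2 = x - 1 := by simpa using hh 1
  have e2 : h 2 ^ 2 = x - 2 := by simpa using hh 2
  have e3 : h 3 ^ 2 = x - 3 := by simpa using hh 3
  have e4 : h 4 ^ 2 = x - 4 := by simpa using hh 4
  have e5 : h 5 ^ 2 = x - 5 := by simpa using hh 5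
  have e6 : h 6 ^ 2 = x - 6 := by simpa using hh 6
  obtain ⟨k1, k2⟩ := abh_key x (h 0) (h 1) (h 2) (h 3) (h 4) (h 5) (h 6) e0 e1 e2 e3 e4 e5 e6 _ _ rfl rfl
  set H := h 0 * h 1 * h 2 * h 3 * h 4 * h 5 * h 6 with hH
  have n0 := h0 0
  have n1 := h0 1
  have n2 := h0 2
  have n3 := h0 3
  have n4 := h0 4
  have n5 := h0 5
  have n6 := h0 6
  have hHn : H ≠ 0 := by rw [hH]; simp [h0]
  refine ⟨H, k2, hHn, ?_⟩
  have hS : (∑ i, abhR x h i) * H = x^2*(h 3*h 5*h 6) + (x-1)^2*(h 0*h 4*h 6) + (x-2)^2*(h 0*h 1*h 5)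
      + (x-3)^2*(h 1*h 2*h 6) + (x-4)^2*(h 0*h 2*h 3) + (x-5)^2*(h 1*h 3*h 4) + (x-6)^2*(h 2*h 4*h 5) := by
    rw [Fin.sum_univ_seven, hH]
    have t0 : abhR x h 0 = x^2 / (h 0 * h 1 * h 2 * h 4) := by simp [abhR]
    have t1 : abhR x h 1 = (x-1)^2 / (h 1 * h 2 * h 3 * h 5) := by simp [abhR]
    have t2 : abhR x h 2 = (x-2)^2 / (h 2 * h 3 * h 4 * h 6) := by simp [abhR]
    have t3 : abhR x h 3 = (x-3)^2 / (h 3 * h 4 * h 5 * h 0) := by simp [abhR]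
    have t4 : abhR x h 4 = (x-4)^2 / (h 4 * h 5 * h 6 * h 1) := by simp [abhR]
    have t5 : abhR x h 5 = (x-5)^2 / (h 5 * h 6 * h 0 * h 2) := by simp [abhR]
    have t6 : abhR x h 6 = (x-6)^2 / (h 6 * h 0 * h 1 * h 3) := by simp [abhR]
    rw [t0, t1, t2, t3, t4, t5, t6]
    simp only [add_mul]
    congr 1; congr 1; congr 1; congr 1; congr 1; congr 1
    all_goals field_simp
  rw [← hS] at k1
  have h2 : H ^ 2 ≠ 0 := pow_ne_zero _ hHn
  apply mul_right_cancel₀ h2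
  linear_combination k1

theorem abh_root {F : Type*} [Field F] [CharP F 7] (t y x : F) (h : Fin 7 → F)
    (hh : ∀ i, h i ^ 2 = x - ((i : ℕ) : F)) (h0 : ∀ i, h i ≠ 0)
    (hy : y ^ 9 - t * y ^ 2 + 1 = 0) (hyx : y ^ 9 * (x ^ 7 - x) ^ 3 = 2) :
    (∑ i, abhR x h i) + 1 ≠ 0 ∧
    (y * ((∑ i, abhR x h i - 1) / (∑ i, abhR x h i + 1))) ^ 9 -
      t * (y * ((∑ i, abhR x h i - 1) / (∑ i, abhR x h i + 1))) ^ 2 + 1 = 0 := by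
  obtain ⟨H, hH, hHn, key⟩ := abh_ratio x h hh h0
  set R := ∑ i, abhR x h i with hR
  have h7 : (7:F) = 0 := by exact_mod_cast CharP.cast_eq_zero F 7
  have : Fact (Nat.Prime 7) := ⟨by norm_num⟩
  have h2 : (2:F) ≠ 0 := by
    intro h2
    have : (1:F) = 0 := by linear_combination h7 - 3 * h2
    exact one_ne_zero this
  have hR1 : R + 1 ≠ 0 := by
    intro h
    have hR : R = -1 := by linear_combination h
    rw [hR] at key
    have : (2:F)*2 = 0 := by linear_combination -key
    exact h2 (by simpa using this)
  refine ⟨hR1, ?_⟩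
  rw [← hH] at hyx
  have hyn : y ≠ 0 := by rintro rfl; simp at hy
  have hk9 : ((R - 1)^9 * y^9 - t*y^2 * (R-1)^2*(R+1)^7 + (R+1)^9) = 0 := by
    have hH6 : H^6 ≠ 0 := pow_ne_zero _ hHn
    apply mul_left_cancel₀ hH6
    have p1 : (R+1)^7 = R^7+1 := by rw [add_pow_char]; simp
    have p2 : (R-1)^7 = R^7-1 := by rw [sub_pow_char]; simp
    have q1 : (R-1)^9 = (R-1)^2*(R^7-1) := by rw [← p2]; ring
    have q2 : (R+1)^9 = (R+1)^2*(R^7+1) := by rw [← p1]; ring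
    rw [q1, q2, p1]
    linear_combination (R-1)^2*(R^7-1)*hyx + 4 * key + H^6*(R-1)^2*(R^7+1)*hy - (R-1)^2*(R^7+1)*hyx
  have hk : ((R - 1)^9 * y^9 - t*y^2 * (R-1)^2*(R+1)^7 + (R+1)^9)/(R+1)^9 = 0 := by
    rw [hk9, zero_div]
  rw [← hk]
  field_simp

theorem abh_val {F : Type*} [Field F] [CharP F 7] (x h0 h1 h2 h3 h4 h5 h6 : F)
    (e0 : h0^2 = x) (e1 : h1^2 = x-1) (e2 : h2^2 = x-2) (e3 : h3^2 = x-3) (e4 : h4^2 = x-4)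
    (e5 : h5^2 = x-5) (e6 : h6^2 = x-6)
    (hv : x^2*(h3*h5*h6) + (x-6)^2*(h2*h4*h5) + (x-5)^2*(h1*h3*h4) + (x-3)^2*(h1*h2*h6) = 0) :
    ((x-6)*(x^4*(x-3)*(x-5)+(x-3)^4*(x-1)*(x-2)) - (x-4)*((x-5)^4*(x-1)*(x-3)+(x-6)^4*(x-2)*(x-5)))^2
      = (2*(x-4)*(x-5)^2*(x-6)^2-2*(x-6)*x^2*(x-3)^2)^2*((x-1)*(x-2)*(x-3)*(x-5)) := by
  have e : h6*(x^2*(h3*h5)+(x-3)^2*(h1*h2)) = - (h4*((x-5)^2*(h1*h3)+(x-6)^2*(h2*h5))) := by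
    linear_combination hv
  have e' : (h6*(x^2*(h3*h5)+(x-3)^2*(h1*h2)))^2 = (- (h4*((x-5)^2*(h1*h3)+(x-6)^2*(h2*h5))))^2 := by rw [e]
  have w : (h1*h2*h3*h5)^2 = (x-1)*(x-2)*(x-3)*(x-5) := by rw [← e1, ← e2, ← e3, ← e5]; ring
  have a1 : (h6*(x^2*(h3*h5)+(x-3)^2*(h1*h2)))^2 = (x-6)*(x^4*(x-3)*(x-5)+(x-3)^4*(x-1)*(x-2)
      + 2*x^2*(x-3)^2*(h1*h2*h3*h5)) := by
    have : (h6*(x^2*(h3*h5)+(x-3)^2*(h1*h2)))^2 = h6^2*(x^4*h3^2*h5^2+(x-3)^4*h1^2*h2^2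
      + 2*x^2*(x-3)^2*(h1*h2*h3*h5)) := by ring
    rw [this, e6, e3, e5, e1, e2]
  have a2 : (- (h4*((x-5)^2*(h1*h3)+(x-6)^2*(h2*h5))))^2 = (x-4)*((x-5)^4*(x-1)*(x-3)+(x-6)^4*(x-2)*(x-5)
      + 2*(x-5)^2*(x-6)^2*(h1*h2*h3*h5)) := by
    have : (- (h4*((x-5)^2*(h1*h3)+(x-6)^2*(h2*h5))))^2 = h4^2*((x-5)^4*h1^2*h3^2+(x-6)^4*h2^2*h5^2
      + 2*(x-5)^2*(x-6)^2*(h1*h2*h3*h5)) := by ring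
    rw [this, e4, e3, e5, e1, e2]
  rw [a1, a2] at e'
  rw [← w, ← mul_pow]
  congr 1
  linear_combination e'

/-- the seven-cycle -/
def abhg : Equiv.Perm (Fin 9) :=
  ⟨![1,2,3,4,5,6,0,7,8], ![6,0,1,2,3,4,5,7,8], by decide, by decide⟩

/-- inversion -/
def abhw : Equiv.Perm (Fin 9) :=
  ⟨![0,6,5,4,3,2,1,8,7], ![0,6,5,4,3,2,1,8,7], by decide, by decide⟩

/-- translation -/
def abht : Equiv.Perm (Fin 9) :=
  ⟨![7,3,6,1,5,4,2,0,8], ![7,3,6,1,5,4,2,0,8], by decide, by decide⟩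

/-- translation, second version -/
def abht' : Equiv.Perm (Fin 9) :=
  ⟨![7,5,3,2,6,1,4,0,8], ![7,5,3,2,6,1,4,0,8], by decide, by decide⟩

/-- relabelling -/
def abhn : Equiv.Perm (Fin 9) :=
  ⟨![0,6,5,4,3,2,1,7,8], ![0,6,5,4,3,2,1,7,8], by decide, by decide⟩

theorem abhg_pow_8 (n : ℕ) : (abhg ^ n) 8 = 8 := by
  induction n with
  | zero => rfl
  | succ n ih => rw [pow_succ', Equiv.Perm.mul_apply, ih]; rfl

theorem abhg_pow_7 (n : ℕ) : (abhg ^ n) 7 = 7 := by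
  induction n with
  | zero => rfl
  | succ n ih => rw [pow_succ', Equiv.Perm.mul_apply, ih]; rfl

theorem abhg_pow_0 : ∀ a : Fin 9, a ≠ 7 → a ≠ 8 → (abhg ^ (a : ℕ)) 0 = a := by decide

theorem abh_ai (p : Equiv.Perm (Fin 9)) (x : Fin 9) : p (p⁻¹ x) = x := p.apply_symm_apply x

theorem abh_tri (H : Subgroup (Equiv.Perm (Fin 9))) (hg : abhg ∈ H)
    (ht : ∀ a b, ∃ p ∈ H, p a = b) (a b c : Fin 9) (hab : a ≠ b) (hac : a ≠ c) (hbc : b ≠ c) :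
    ∃ p ∈ H, p 8 = a ∧ p 7 = b ∧ p 0 = c := by
  have h1 : ∃ p ∈ H, p 8 = 8 ∧ p 7 ≠ 7 := by
    by_contra hcon
    push Not at hcon
    choose q hq hq8 using fun a => ht 8 a
    let β : Fin 9 → Fin 9 := fun a => q a 7
    have hβ : ∀ p ∈ H, β (p 8) = p 7 := by
      intro p hp
      have := hcon ((q (p 8))⁻¹ * p) (H.mul_mem (H.inv_mem (hq _)) hp) (by
        rw [Equiv.Perm.mul_apply, Equiv.Perm.inv_eq_iff_eq, hq8])
      rw [Equiv.Perm.mul_apply, Equiv.Perm.inv_eq_iff_eq] at this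
      exact this.symm
    have hβe : ∀ p ∈ H, ∀ a, β (p a) = p (β a) := by
      intro p hp a
      have := hβ (p * q a) (H.mul_mem hp (hq a))
      rw [Equiv.Perm.mul_apply, hq8] at this
      exact this
    have hβ8 : β 8 = 7 := hβ 1 H.one_mem
    have hβf : ∀ a, β a ≠ a := by
      intro a e
      have := hβe _ (hq a) 8
      rw [hq8, e, hβ8] at this
      exact absurd ((q a).injective ((hq8 a).trans this)) (by decide)
    have hβ7 : β 7 = 8 := by
      have := hβe abhg hg 7
      have h77 : abhg 7 = 7 := rfl
      rw [h77] at this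
      have hd : ∀ z : Fin 9, z = abhg z → z ≠ 7 → z = 8 := by decide
      exact hd _ this (hβf 7)
    have hββ : ∀ a, β (β a) = a := by
      intro a
      have := hβe _ (hq a) (β 8)
      rw [← hβe _ (hq a) 8, hβ8, hβ7, hq8] at this
      exact this
    have hc0 := hβf 0
    have hc7 : β 0 ≠ 7 := by
      intro e; have := hββ 0; rw [e, hβ7] at this; exact absurd this (by decide)
    have hc8 : β 0 ≠ 8 := by
      intro e; have := hββ 0; rw [e, hβ8] at this; exact absurd this (by decide)
    have h3 := hβe (abhg ^ (β 0 : ℕ)) (H.pow_mem hg _) 0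
    rw [abhg_pow_0 _ hc7 hc8, hββ] at h3
    have hd : ∀ z : Fin 9, z ≠ 7 → z ≠ 8 → z ≠ 0 → 0 ≠ (abhg ^ (z : ℕ)) z := by decide
    exact hd _ hc7 hc8 hc0 h3
  obtain ⟨p, hp, hp8, hp7⟩ := h1
  have hstab : ∀ b, b ≠ 8 → ∃ r ∈ H, r 8 = 8 ∧ r 7 = b := by
    intro b hb
    by_cases hb7 : b = 7
    · exact ⟨1, H.one_mem, rfl, hb7.symm⟩
    have hd : ∀ z b : Fin 9, z ≠ 7 → z ≠ 8 → b ≠ 7 → b ≠ 8 → ∃ n : Fin 7, (abhg ^ (n : ℕ)) z = b := by decide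
    have hp78 : p 7 ≠ 8 := by
      intro e; rw [← hp8] at e; exact absurd (p.injective e) (by decide)
    obtain ⟨n, hn⟩ := hd (p 7) b hp7 hp78 hb7 hb
    exact ⟨abhg ^ (n : ℕ) * p, H.mul_mem (H.pow_mem hg _) hp, by rw [Equiv.Perm.mul_apply, hp8, abhg_pow_8],
      by rw [Equiv.Perm.mul_apply, hn]⟩
  obtain ⟨q, hq, hq8⟩ := ht 8 a
  obtain ⟨r, hr, hr8, hr7⟩ := hstab (q⁻¹ b) (by
    rw [Ne, Equiv.Perm.inv_eq_iff_eq, hq8]; exact hab.symm)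
  have hz7 : (q * r)⁻¹ c ≠ 7 := by
    rw [Ne, Equiv.Perm.inv_eq_iff_eq, Equiv.Perm.mul_apply, hr7, abh_ai]; exact hbc.symm
  have hz8 : (q * r)⁻¹ c ≠ 8 := by
    rw [Ne, Equiv.Perm.inv_eq_iff_eq, Equiv.Perm.mul_apply, hr8, hq8]; exact hac.symm
  refine ⟨q * r * abhg ^ (((q * r)⁻¹ c : Fin 9) : ℕ), H.mul_mem (H.mul_mem hq hr) (H.pow_mem hg _), ?_, ?_, ?_⟩
  · rw [Equiv.Perm.mul_apply, abhg_pow_8, Equiv.Perm.mul_apply, hr8, hq8]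
  · rw [Equiv.Perm.mul_apply, abhg_pow_7, Equiv.Perm.mul_apply, hr7, abh_ai]
  · rw [Equiv.Perm.mul_apply, abhg_pow_0 _ hz7 hz8, abh_ai]

theorem abh_sharp (G : Subgroup (Equiv.Perm (Fin 9))) (hg : abhg ∈ G)
    (ht : ∀ a b, ∃ p ∈ G, p a = b) (hc : Nat.card G ≤ 504) (p : Equiv.Perm (Fin 9)) (hp : p ∈ G)
    (h8 : p 8 = 8) (h7 : p 7 = 7) (h0 : p 0 = 0) : p = 1 := by
  let φ : G → (Fin 3 ↪ Fin 9) := fun q => ⟨fun i => (q : Equiv.Perm (Fin 9)) (![8, 7, 0] i),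
    q.1.injective.comp (by decide)⟩
  have hs : Function.Surjective φ := by
    intro e
    obtain ⟨q, hq, q8, q7, q0⟩ := abh_tri G hg ht (e 0) (e 1) (e 2) (e.injective.ne (by decide))
      (e.injective.ne (by decide)) (e.injective.ne (by decide))
    refine ⟨⟨q, hq⟩, ?_⟩
    ext i
    fin_cases i
    · simpa [φ] using congrArg Fin.val q8
    · simpa [φ] using congrArg Fin.val q7
    · simpa [φ] using congrArg Fin.val q0
  have hb : Function.Bijective φ := by
    apply Function.Surjective.bijective_of_nat_card_le hs
    rw [Nat.card_eq_fintype_card (α := Fin 3 ↪ Fin 9), Fintype.card_embedding_eq]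
    exact hc
  have : (⟨p, hp⟩ : G) = 1 := by
    apply hb.1
    ext i
    fin_cases i
    · simpa [φ] using congrArg Fin.val h8
    · simpa [φ] using congrArg Fin.val h7
    · simpa [φ] using congrArg Fin.val h0
  exact congrArg Subtype.val this

theorem abh_agree (G : Subgroup (Equiv.Perm (Fin 9))) (hg : abhg ∈ G)
    (ht : ∀ a b, ∃ p ∈ G, p a = b) (hc : Nat.card G ≤ 504) (p q : Equiv.Perm (Fin 9)) (hp : p ∈ G)
    (hq : q ∈ G) (a b c : Fin 9) (hab : a ≠ b) (hac : a ≠ c) (hbc : b ≠ c)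
    (h8 : p a = q a) (h7 : p b = q b) (h0 : p c = q c) : p = q := by
  obtain ⟨r, hr, r8, r7, r0⟩ := abh_tri G hg ht a b c hab hac hbc
  have := abh_sharp G hg ht hc (r⁻¹ * (q⁻¹ * p) * r)
    (G.mul_mem (G.mul_mem (G.inv_mem hr) (G.mul_mem (G.inv_mem hq) hp)) hr)
    (by simp [r8, h8, Equiv.symm_apply_eq]) (by simp [r7, h7, Equiv.symm_apply_eq])
    (by simp [r0, h0, Equiv.symm_apply_eq])
  have h2 : q⁻¹ * p = 1 := by
    have : q⁻¹ * p = r * (r⁻¹ * (q⁻¹ * p) * r) * r⁻¹ := by group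
    rw [this, ‹r⁻¹ * (q⁻¹ * p) * r = 1›]; simp
  exact (inv_mul_eq_one.1 h2).symm

theorem abh_w_mem (G : Subgroup (Equiv.Perm (Fin 9))) (hg : abhg ∈ G)
    (ht : ∀ a b, ∃ p ∈ G, p a = b) (hc : Nat.card G ≤ 504) : abhw ∈ G := by
  obtain ⟨w, hw, w8, w7, w0⟩ := abh_tri G hg ht 7 8 0 (by decide) (by decide) (by decide)
  have hj7 : w 1 ≠ 7 := by
    intro e; rw [← w8] at e; exact absurd (w.injective e) (by decide)
  have hj8 : w 1 ≠ 8 := by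
    intro e; rw [← w7] at e; exact absurd (w.injective e) (by decide)
  have hww : w * w = 1 := abh_sharp G hg ht hc _ (G.mul_mem hw hw)
    (by rw [Equiv.Perm.mul_apply, w8, w7]) (by rw [Equiv.Perm.mul_apply, w7, w8])
    (by rw [Equiv.Perm.mul_apply, w0, w0])
  have hwg : w * abhg = abhg ^ (w 1 : ℕ) * w := by
    apply abh_agree G hg ht hc _ _ (G.mul_mem hw hg) (G.mul_mem (G.pow_mem hg _) hw) 8 7 0
      (by decide) (by decide) (by decide)
    · rw [Equiv.Perm.mul_apply, Equiv.Perm.mul_apply, w8, abhg_pow_7]; exact w8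
    · rw [Equiv.Perm.mul_apply, Equiv.Perm.mul_apply, w7, abhg_pow_8]; exact w7
    · rw [Equiv.Perm.mul_apply, Equiv.Perm.mul_apply, w0, abhg_pow_0 _ hj7 hj8]; rfl
  have hstep : ∀ x, w (abhg x) = (abhg ^ (w 1 : ℕ)) (w x) := fun x => by
    have := congrArg (fun p : Equiv.Perm (Fin 9) => p x) hwg
    simpa using this
  have hww1 : w (w 1) = 1 := by
    have := congrArg (fun p : Equiv.Perm (Fin 9) => p 1) hww
    simpa using this
  have s2 : w 2 = (abhg ^ (w 1 : ℕ)) (w 1) := hstep 1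
  have s3 : w 3 = (abhg ^ (w 1 : ℕ)) (w 2) := hstep 2
  have s4 : w 4 = (abhg ^ (w 1 : ℕ)) (w 3) := hstep 3
  have s5 : w 5 = (abhg ^ (w 1 : ℕ)) (w 4) := hstep 4
  have s6 : w 6 = (abhg ^ (w 1 : ℕ)) (w 5) := hstep 5
  have hcase : w 1 = 0 ∨ w 1 = 1 ∨ w 1 = 2 ∨ w 1 = 3 ∨ w 1 = 4 ∨ w 1 = 5 ∨ w 1 = 6 ∨ w 1 = 7 ∨ w 1 = 8 := by
    generalize w 1 = z; revert z; decide
  rcases hcase with h|h|h|h|h|h|h|h|h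
  · rw [h, w0] at hww1; exact absurd hww1 (by decide)
  · exfalso
    rw [h] at s2
    have s2' : w 2 = 2 := s2
    have : w = 1 := abh_agree G hg ht hc w 1 hw G.one_mem 0 1 2 (by decide) (by decide) (by decide) w0 h s2'
    rw [this] at w8; exact absurd w8 (by decide)
  · rw [h] at hww1 s2; rw [s2] at hww1; exact absurd hww1 (by decide)
  · rw [h] at hww1 s2 s3; rw [s3, s2] at hww1; exact absurd hww1 (by decide)
  · rw [h] at hww1 s2 s3 s4; rw [s4, s3, s2] at hww1; exact absurd hww1 (by decide)
  · rw [h] at hww1 s2 s3 s4 s5; rw [s5, s4, s3, s2] at hww1; exact absurd hww1 (by decide)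
  · have : abhw = w := by
      rw [h] at s2 s3 s4 s5 s6
      rw [s2] at s3; rw [s3] at s4; rw [s4] at s5; rw [s5] at s6
      ext x
      fin_cases x
      · exact congrArg Fin.val w0.symm
      · exact congrArg Fin.val h.symm
      · exact congrArg Fin.val s2.symm
      · exact congrArg Fin.val s3.symm
      · exact congrArg Fin.val s4.symm
      · exact congrArg Fin.val s5.symm
      · exact congrArg Fin.val s6.symm
      · exact congrArg Fin.val w7.symm
      · exact congrArg Fin.val w8.symm
    rw [this]; exact hw
  · exact absurd h hj7
  · exact absurd h hj8

/-- final predicate for the table -/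
def abhQ (F : Fin 9 → Fin 9) : Prop :=
    (∀ x : Fin 9, F (abhg (F x)) = (abhg ^ (F 1 : ℕ)) (F ((abhg ^ (F (abhw (F 1)) : ℕ)) x))) →
    (∀ x : Fin 9, F ((abhg ^ 2) (F x)) = (abhg ^ (F 2 : ℕ)) (F ((abhg ^ (F (abhw (F 2)) : ℕ)) x))) →
    F = ![7,3,6,1,5,4,2,0,8] ∨ F = ![7,5,3,2,6,1,4,0,8]

instance (F : Fin 9 → Fin 9) : Decidable (abhQ F) := by unfold abhQ; infer_instance

set_option maxRecDepth 20000 in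
set_option synthInstance.maxHeartbeats 400000 in
set_option synthInstance.maxSize 4000 in
theorem abh_table : ∀ v1 : Fin 9, v1 ≠ 0 ∧ v1 ≠ 1 ∧ v1 ≠ 7 ∧ v1 ≠ 8 →
    ∀ v2 : Fin 9, v2 ≠ 0 ∧ v2 ≠ 2 ∧ v2 ≠ 7 ∧ v2 ≠ 8 ∧ (v1 = 2 ↔ v2 = 1) ∧ v2 ≠ v1 →
    ∀ v3 : Fin 9, v3 ≠ 0 ∧ v3 ≠ 3 ∧ v3 ≠ 7 ∧ v3 ≠ 8 ∧ (v1 = 3 ↔ v3 = 1) ∧ (v2 = 3 ↔ v3 = 2) ∧ v3 ≠ v1 ∧ v3 ≠ v2 →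
    ∀ v4 : Fin 9, v4 ≠ 0 ∧ v4 ≠ 4 ∧ v4 ≠ 7 ∧ v4 ≠ 8 ∧ (v1 = 4 ↔ v4 = 1) ∧ (v2 = 4 ↔ v4 = 2) ∧ (v3 = 4 ↔ v4 = 3) →
    ∀ v5 : Fin 9, v5 ≠ 0 ∧ v5 ≠ 5 ∧ v5 ≠ 7 ∧ v5 ≠ 8 ∧ (v1 = 5 ↔ v5 = 1) ∧ (v2 = 5 ↔ v5 = 2) ∧ (v3 = 5 ↔ v5 = 3) ∧ (v4 = 5 ↔ v5 = 4) →
    ∀ v6 : Fin 9, v6 ≠ 0 ∧ v6 ≠ 6 ∧ v6 ≠ 7 ∧ v6 ≠ 8 ∧ (v1 = 6 ↔ v6 = 1) ∧ (v2 = 6 ↔ v6 = 2) ∧ (v3 = 6 ↔ v6 = 3) ∧ (v4 = 6 ↔ v6 = 4) ∧ (v5 = 6 ↔ v6 = 5) →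
    abhQ ![7,v1,v2,v3,v4,v5,v6,0,8] := by
  decide

theorem abh_t_mem (G : Subgroup (Equiv.Perm (Fin 9))) (hg : abhg ∈ G)
    (ht : ∀ a b, ∃ p ∈ G, p a = b) (hc : Nat.card G ≤ 504) : abht ∈ G ∨ abht' ∈ G := by
  obtain ⟨τ, hτ, τ8, τ7, τ0⟩ := abh_tri G hg ht 8 0 7 (by decide) (by decide) (by decide)
  have hττ : τ * τ = 1 := abh_sharp G hg ht hc _ (G.mul_mem hτ hτ)
    (by rw [Equiv.Perm.mul_apply, τ8, τ8]) (by rw [Equiv.Perm.mul_apply, τ7, τ0])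
    (by rw [Equiv.Perm.mul_apply, τ0, τ7])
  have hinv : ∀ x, τ (τ x) = x := fun x => by
    have := congrArg (fun p : Equiv.Perm (Fin 9) => p x) hττ
    simpa using this
  have hiff : ∀ x y, τ x = y ↔ τ y = x := fun x y => ⟨fun h => by rw [← h, hinv], fun h => by rw [← h, hinv]⟩
  have n8 : ∀ x, x ≠ 8 → τ x ≠ 8 := fun x hx e => hx (τ.injective (e.trans τ8.symm))
  have n7 : ∀ x, x ≠ 0 → τ x ≠ 7 := fun x hx e => hx (τ.injective (e.trans τ0.symm))
  have n0 : ∀ x, x ≠ 7 → τ x ≠ 0 := fun x hx e => hx (τ.injective (e.trans τ7.symm))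
  have hτ1 : τ ≠ 1 := by rintro rfl; exact absurd τ0 (by decide)
  -- fixed points come at least in pairs
  have hfix2 : ∀ x y, x ≠ 8 → y ≠ 8 → x ≠ y → τ x = x → τ y = y → False := fun x y h1 h2 h3 h4 h5 =>
    hτ1 (abh_agree G hg ht hc τ 1 hτ G.one_mem 8 x y h1.symm h2.symm h3 τ8 h4 h5)
  have hfix : ∀ x, x ≠ 8 → τ x ≠ x := by
    intro x hx e
    have hx7 : x ≠ 7 := by rintro rfl; rw [τ7] at e; exact absurd e (by decide)
    have hx0 : x ≠ 0 := by rintro rfl; rw [τ0] at e; exact absurd e (by decide)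
    have hS : Function.Involutive τ := hinv
    have hcard : (Finset.univ.filter fun z => τ z = z) = {8, x} := by
      ext z
      simp only [Finset.mem_filter, Finset.mem_univ, true_and, Finset.mem_insert, Finset.mem_singleton]
      constructor
      · intro hz
        by_contra hcon
        push Not at hcon
        exact hfix2 x z hx hcon.1 hcon.2.symm e hz
      · rintro (rfl | rfl)
        · exact τ8
        · exact e
    have hmod := Equiv.Perm.two_dvd_card_support (σ := τ) (by rw [pow_two, hττ])
    have hsupp : τ.support = Finset.univ \ {8, x} := by
      rw [← hcard]; ext z; simp
    rw [hsupp, Finset.card_sdiff_of_subset (Finset.subset_univ _), Finset.card_pair hx.symm] at hmod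
    exact absurd hmod (by decide)
  have hrel : ∀ i : Fin 9, i ≠ 0 → i ≠ 7 → i ≠ 8 → ∀ x, τ ((abhg ^ (i : ℕ)) (τ x)) =
      (abhg ^ (τ i : ℕ)) (τ ((abhg ^ (τ (abhw (τ i)) : ℕ)) x)) := by
    intro i i0 i7 i8 x
    have hd : ∀ a : Fin 9, a ≠ 0 → a ≠ 7 → a ≠ 8 → abhw a ≠ 0 ∧ abhw a ≠ 7 ∧ abhw a ≠ 8 ∧ (abhg ^ (a : ℕ)) (abhw a) = 0 := by
      decide
    obtain ⟨b0, b7, b8, hb⟩ := hd (τ i) (n0 i i7) (n7 i i0) (n8 i i8)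
    have := abh_agree G hg ht hc (τ * abhg ^ (i : ℕ) * τ) (abhg ^ (τ i : ℕ) * τ * abhg ^ (τ (abhw (τ i)) : ℕ))
      (G.mul_mem (G.mul_mem hτ (G.pow_mem hg _)) hτ)
      (G.mul_mem (G.mul_mem (G.pow_mem hg _) hτ) (G.pow_mem hg _)) 8 7 0 (by decide) (by decide) (by decide)
      (by simp only [Equiv.Perm.mul_apply, τ8, abhg_pow_8])
      (by simp only [Equiv.Perm.mul_apply, τ7, abhg_pow_7]
          rw [abhg_pow_0 i i7 i8, abhg_pow_0 _ (n7 i i0) (n8 i i8)])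
      (by simp only [Equiv.Perm.mul_apply, τ0, abhg_pow_7, τ7]
          rw [abhg_pow_0 _ (n7 _ b0) (n8 _ b8), hinv, hb])
    have := congrArg (fun p : Equiv.Perm (Fin 9) => p x) this
    simpa only [Equiv.Perm.mul_apply] using this
  have hfun : (τ : Fin 9 → Fin 9) = ![7, τ 1, τ 2, τ 3, τ 4, τ 5, τ 6, 0, 8] := by
    funext x; fin_cases x
    exacts [τ0, rfl, rfl, rfl, rfl, rfl, rfl, τ7, τ8]
  have r1 := hrel 1 (by decide) (by decide) (by decide)
  have r2 := hrel 2 (by decide) (by decide) (by decide)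
  have N : ∀ x : Fin 9, x ≠ 0 → x ≠ 7 → x ≠ 8 → τ x ≠ 0 ∧ τ x ≠ x ∧ τ x ≠ 7 ∧ τ x ≠ 8 := fun x h0 h7 h8 =>
    ⟨n0 x h7, hfix x h8, n7 x h0, n8 x h8⟩
  obtain ⟨a1, b1, c1, d1⟩ := N 1 (by decide) (by decide) (by decide)
  obtain ⟨a2, b2, c2, d2⟩ := N 2 (by decide) (by decide) (by decide)
  obtain ⟨a3, b3, c3, d3⟩ := N 3 (by decide) (by decide) (by decide)
  obtain ⟨a4, b4, c4, d4⟩ := N 4 (by decide) (by decide) (by decide)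
  obtain ⟨a5, b5, c5, d5⟩ := N 5 (by decide) (by decide) (by decide)
  obtain ⟨a6, b6, c6, d6⟩ := N 6 (by decide) (by decide) (by decide)
  have key := abh_table (τ 1) ⟨a1, b1, c1, d1⟩
    (τ 2) ⟨a2, b2, c2, d2, hiff _ _, τ.injective.ne (by decide)⟩
    (τ 3) ⟨a3, b3, c3, d3, hiff _ _, hiff _ _, τ.injective.ne (by decide), τ.injective.ne (by decide)⟩
    (τ 4) ⟨a4, b4, c4, d4, hiff _ _, hiff _ _, hiff _ _⟩
    (τ 5) ⟨a5, b5, c5, d5, hiff _ _, hiff _ _, hiff _ _, hiff _ _⟩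
    (τ 6) ⟨a6, b6, c6, d6, hiff _ _, hiff _ _, hiff _ _, hiff _ _, hiff _ _⟩
  rw [← hfun] at key
  rcases key r1 r2 with e | e
  · left
    have : abht = τ := Equiv.ext fun x => (congrFun e x).symm
    rw [this]; exact hτ
  · right
    have : abht' = τ := Equiv.ext fun x => (congrFun e x).symm
    rw [this]; exact hτ

theorem abh_u {F : Type*} [Field F] [CharP F 2] [Fintype F] (hF : Fintype.card F = 8) :
    ∃ u : F, u ^ 3 = u + 1 ∧ u ^ 7 = 1 ∧ u ≠ 0 ∧ u ≠ 1 := by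
  classical
  have h2 : (2:F) = 0 := by exact_mod_cast CharP.cast_eq_zero F 2
  have : ∃ v : F, v ∉ ({0, 1} : Finset F) := by
    by_contra hcon
    push Not at hcon
    have : (Finset.univ : Finset F) ⊆ {0, 1} := fun z _ => hcon z
    have := Finset.card_le_card this
    rw [Finset.card_univ, hF] at this
    have h3 : ({0, 1} : Finset F).card ≤ 2 := Finset.card_le_two
    omega
  obtain ⟨v, hv⟩ := this
  simp only [Finset.mem_insert, Finset.mem_singleton, not_or] at hv
  obtain ⟨hv0, hv1⟩ := hv
  have h8 : v ^ 8 = v := by rw [← hF]; exact FiniteField.pow_card v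
  have h7 : v ^ 7 = 1 := by
    apply mul_left_cancel₀ hv0; linear_combination h8
  have hfac : (v ^ 3 + v + 1) * (v ^ 3 + v ^ 2 + 1) = 0 := by
    have : v - 1 ≠ 0 := sub_ne_zero.2 hv1
    apply mul_left_cancel₀ this
    linear_combination h7 + (v ^ 4 - v ^ 3) * h2
  rcases mul_eq_zero.1 hfac with h | h
  · exact ⟨v, by linear_combination h - (v + 1) * h2, h7, hv0, hv1⟩
  · refine ⟨v⁻¹, ?_, by rw [inv_pow, h7, inv_one], inv_ne_zero hv0, fun e => hv1 (inv_eq_one.1 e)⟩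
    field_simp
    linear_combination -h + h2

theorem abh_ext9 (p q : Equiv.Perm (Fin 9)) (h0 : p 0 = q 0) (h1 : p 1 = q 1) (h2 : p 2 = q 2) (h3 : p 3 = q 3)
    (h4 : p 4 = q 4) (h5 : p 5 = q 5) (h6 : p 6 = q 6) (h7 : p 7 = q 7) (h8 : p 8 = q 8) : p = q := by
  apply Equiv.ext; intro x; fin_cases x
  exacts [h0, h1, h2, h3, h4, h5, h6, h7, h8]

open OnePoint in
theorem abh_sl (F : Type*) [Field F] [CharP F 2] [Fintype F] (hF : Fintype.card F = 8) :
    ∃ ψ : Matrix.SpecialLinearGroup (Fin 2) F →* Equiv.Perm (Fin 9),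
      ψ.ker = Subgroup.center (Matrix.SpecialLinearGroup (Fin 2) F) ∧
      abhg ∈ ψ.range ∧ abhw ∈ ψ.range ∧ abht ∈ ψ.range ∧
      ∀ p ∈ ψ.range, p 8 = 8 → p 7 = 7 → p 0 = 0 → p = 1 := by
  classical
  obtain ⟨u, hu, hu7, hu0, hu1⟩ := abh_u hF
  have h2 : (2:F) = 0 := by exact_mod_cast CharP.cast_eq_zero F 2
  have : Fact (Nat.Prime 7) := ⟨by norm_num⟩
  have hord : orderOf u = 7 := orderOf_eq_prime hu7 hu1
  let e0 : Fin 9 → OnePoint F := ![((1:F) : OnePoint F), (u : OnePoint F), ((u^2 : F) : OnePoint F),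
    ((u^3 : F) : OnePoint F), ((u^4 : F) : OnePoint F), ((u^5 : F) : OnePoint F), ((u^6 : F) : OnePoint F),
    ((0:F) : OnePoint F), ∞]
  have hinj : Function.Injective e0 := by
    let d0 : OnePoint F → ℕ := fun z => z.elim 8 (fun y => if y = 0 then 7 else
      (if y = 1 then 0 else if y = u then 1 else if y = u^2 then 2 else if y = u^3 then 3 else if y = u^4 then 4
        else if y = u^5 then 5 else 6))
    have hne : ∀ i j : ℕ, i < 7 → j < 7 → i ≠ j → u ^ i ≠ u ^ j := by
      intro i j hi hj hij e
      exact hij (pow_injOn_Iio_orderOf (by simpa [hord] using hi) (by simpa [hord] using hj) e)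
    have key : ∀ i : Fin 9, d0 (e0 i) = (i : ℕ) := by
      have n (i j : ℕ) (hi : i < 7 := by norm_num) (hj : j < 7 := by norm_num) (hij : i ≠ j := by norm_num) := hne i j hi hj hij
      have m1 := n 1 0
      have m2 := n 2 0
      have m3 := n 3 0
      have m4 := n 4 0
      have m5 := n 5 0
      have m6 := n 6 0
      have m21 := n 2 1
      have m31 := n 3 1
      have m41 := n 4 1
      have m51 := n 5 1
      have m61 := n 6 1
      have m32 := n 3 2
      have m42 := n 4 2
      have m52 := n 5 2
      have m62 := n 6 2
      have m43 := n 4 3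
      have m53 := n 5 3
      have m63 := n 6 3
      have m54 := n 5 4
      have m64 := n 6 4
      have m65 := n 6 5
      simp only [pow_zero, pow_one] at m1 m2 m3 m4 m5 m6 m21 m31 m41 m51 m61
      clear hu
      intro i
      fin_cases i <;> simp [d0, e0, *]
    intro i j e
    have := congrArg d0 e
    rw [key, key] at this
    exact Fin.ext this
  have hbij : Function.Bijective e0 := by
    rw [Fintype.bijective_iff_injective_and_card]
    refine ⟨hinj, ?_⟩
    have : Fintype.card (OnePoint F) = Fintype.card (Option F) := Fintype.card_congr (Equiv.refl _)
    rw [this, Fintype.card_option, hF]; rfl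
  let e : Fin 9 ≃ OnePoint F := Equiv.ofBijective e0 hbij
  let ψ : Matrix.SpecialLinearGroup (Fin 2) F →* Equiv.Perm (Fin 9) :=
    (e.symm.permCongrHom : Equiv.Perm (OnePoint F) ≃* Equiv.Perm (Fin 9)).toMonoidHom.comp
      ((MulAction.toPermHom (GL (Fin 2) F) (OnePoint F)).comp Matrix.SpecialLinearGroup.toGL)
  have hψ : ∀ A x y, (Matrix.SpecialLinearGroup.toGL A) • (e0 x) = e0 y → ψ A x = y := by
    intro A x y h
    change e.symm ((Matrix.SpecialLinearGroup.toGL A) • (e x)) = y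
    rw [Equiv.symm_apply_eq]; exact h
  have hψ' : ∀ A x y, ψ A x = y → (Matrix.SpecialLinearGroup.toGL A) • (e0 x) = e0 y := by
    intro A x y h
    change e.symm ((Matrix.SpecialLinearGroup.toGL A) • (e x)) = y at h
    rw [Equiv.symm_apply_eq] at h; exact h
  have hs : ∀ (A : Matrix.SpecialLinearGroup (Fin 2) F) (k : F), A.1 1 0 * k + A.1 1 1 ≠ 0 →
      (Matrix.SpecialLinearGroup.toGL A) • (k : OnePoint F) =
        (((A.1 0 0 * k + A.1 0 1) / (A.1 1 0 * k + A.1 1 1) : F) : OnePoint F) := by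
    intro A k h
    rw [smul_some_eq_ite]
    exact if_neg h
  have hs0 : ∀ (A : Matrix.SpecialLinearGroup (Fin 2) F) (k : F), A.1 1 0 * k + A.1 1 1 = 0 →
      (Matrix.SpecialLinearGroup.toGL A) • (k : OnePoint F) = ∞ := by
    intro A k h
    rw [smul_some_eq_ite]
    exact if_pos h
  have hsi : ∀ (A : Matrix.SpecialLinearGroup (Fin 2) F), A.1 1 0 = 0 →
      (Matrix.SpecialLinearGroup.toGL A) • (∞ : OnePoint F) = ∞ := by
    intro A h
    rw [smul_infty_eq_ite]
    exact if_pos h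
  have hsi' : ∀ (A : Matrix.SpecialLinearGroup (Fin 2) F), A.1 1 0 ≠ 0 →
      (Matrix.SpecialLinearGroup.toGL A) • (∞ : OnePoint F) = ((A.1 0 0 / A.1 1 0 : F) : OnePoint F) := by
    intro A h
    rw [smul_infty_eq_ite]
    exact if_neg h
  have hdet : ∀ (A : Matrix.SpecialLinearGroup (Fin 2) F), A.1 0 0 * A.1 1 1 - A.1 0 1 * A.1 1 0 = 1 := by
    intro A; rw [← Matrix.det_fin_two]; exact A.2
  have hfix : ∀ A, ψ A 8 = 8 → ψ A 7 = 7 → ψ A 0 = 0 → A ∈ Subgroup.center (Matrix.SpecialLinearGroup (Fin 2) F) := by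
    intro A a8 a7 a0
    have b8 : Matrix.SpecialLinearGroup.toGL A • (∞ : OnePoint F) = ∞ := hψ' A 8 8 a8
    have b7 : Matrix.SpecialLinearGroup.toGL A • ((0:F) : OnePoint F) = ((0:F) : OnePoint F) := hψ' A 7 7 a7
    have b0 : Matrix.SpecialLinearGroup.toGL A • ((1:F) : OnePoint F) = ((1:F) : OnePoint F) := hψ' A 0 0 a0
    have c10 : A.1 1 0 = 0 := smul_infty_eq_self_iff.1 b8
    have hd := hdet A
    rw [c10, mul_zero, sub_zero] at hd
    have c11 : A.1 1 1 ≠ 0 := fun h => by rw [h, mul_zero] at hd; exact zero_ne_one hd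
    rw [hs A 0 (by rw [mul_zero, zero_add]; exact c11), OnePoint.coe_eq_coe, c10] at b7
    have c01 : A.1 0 1 = 0 := by simpa [c11] using b7
    rw [hs A 1 (by rw [c10, zero_mul, zero_add]; exact c11), OnePoint.coe_eq_coe, c10, c01] at b0
    have c00 : A.1 0 0 = A.1 1 1 := by
      rw [zero_mul, zero_add, mul_one, add_zero, div_eq_one_iff_eq c11] at b0; exact b0
    rw [Matrix.SpecialLinearGroup.mem_center_iff]
    refine ⟨A.1 1 1, ?_, ?_⟩
    · rw [c00] at hd; simpa [pow_two] using hd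
    · ext i j
      fin_cases i <;> fin_cases j
      · simpa using c00.symm
      · simpa using c01.symm
      · simpa using c10.symm
      · simp
  have hcen : ∀ A ∈ Subgroup.center (Matrix.SpecialLinearGroup (Fin 2) F), ψ A = 1 := by
    intro A hA
    obtain ⟨r, hr, hrA⟩ := Matrix.SpecialLinearGroup.mem_center_iff.1 hA
    have c10 : A.1 1 0 = 0 := by rw [← hrA]; simp
    have c01 : A.1 0 1 = 0 := by rw [← hrA]; simp
    have c00 : A.1 0 0 = r := by rw [← hrA]; simp
    have c11 : A.1 1 1 = r := by rw [← hrA]; simp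
    have hr0 : r ≠ 0 := by rintro rfl; simp at hr
    apply Equiv.ext; intro x
    apply hψ
    change _ = e0 x
    rcases hz : e0 x with _ | k
    · exact hsi A c10
    · have := hs A k (by rw [c10, c11, zero_mul, zero_add]; exact hr0)
      refine this.trans ?_
      rw [c10, c11, c00, c01, zero_mul, zero_add, add_zero, mul_div_cancel_left₀ _ hr0]; rfl
  refine ⟨ψ, ?_, ?_, ?_, ?_, ?_⟩
  · ext A
    rw [MonoidHom.mem_ker]
    refine ⟨fun h => hfix A (by rw [h]; rfl) (by rw [h]; rfl) (by rw [h]; rfl), hcen A⟩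
  · let M : Matrix.SpecialLinearGroup (Fin 2) F :=
      ⟨!![u^4, 0; 0, u^3], by rw [Matrix.det_fin_two_of]; linear_combination hu7⟩
    refine ⟨M, ?_⟩
    have hM : ∀ k l : F, u * k = l → Matrix.SpecialLinearGroup.toGL M • (k : OnePoint F) = (l : OnePoint F) := by
      intro k l hl
      rw [hs M k (by simp [M, hu0]), OnePoint.coe_eq_coe, ← hl]
      simp only [M, Matrix.of_apply, Matrix.cons_val', Matrix.cons_val_zero, Matrix.cons_val_one, Matrix.cons_val_fin_one]
      field_simp
      ring
    refine abh_ext9 _ _ ?_ ?_ ?_ ?_ ?_ ?_ ?_ ?_ ?_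
    · exact hψ M 0 1 (hM _ _ (by ring))
    · exact hψ M 1 2 (hM _ _ (by ring))
    · exact hψ M 2 3 (hM _ _ (by ring))
    · exact hψ M 3 4 (hM _ _ (by ring))
    · exact hψ M 4 5 (hM _ _ (by ring))
    · exact hψ M 5 6 (hM _ _ (by ring))
    · exact hψ M 6 0 (hM _ _ (by linear_combination hu7))
    · exact hψ M 7 7 (hM _ _ (by ring))
    · exact hψ M 8 8 (hsi M (by simp [M]))
  · let M : Matrix.SpecialLinearGroup (Fin 2) F :=
      ⟨!![0, 1; 1, 0], by rw [Matrix.det_fin_two_of]; linear_combination -h2⟩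
    refine ⟨M, ?_⟩
    have hM : ∀ k l : F, k * l = 1 → Matrix.SpecialLinearGroup.toGL M • (k : OnePoint F) = (l : OnePoint F) := by
      intro k l hl
      have hk : k ≠ 0 := by rintro rfl; simp at hl
      rw [hs M k (by simp [M, hk]), OnePoint.coe_eq_coe]
      simp only [M, Matrix.of_apply, Matrix.cons_val', Matrix.cons_val_zero, Matrix.cons_val_one, Matrix.cons_val_fin_one]
      rw [div_eq_iff (by simpa using hk)]
      linear_combination -hl
    refine abh_ext9 _ _ ?_ ?_ ?_ ?_ ?_ ?_ ?_ ?_ ?_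
    · exact hψ M 0 0 (hM _ _ (by ring))
    · exact hψ M 1 6 (hM _ _ (by linear_combination hu7))
    · exact hψ M 2 5 (hM _ _ (by linear_combination hu7))
    · exact hψ M 3 4 (hM _ _ (by linear_combination hu7))
    · exact hψ M 4 3 (hM _ _ (by linear_combination hu7))
    · exact hψ M 5 2 (hM _ _ (by linear_combination hu7))
    · exact hψ M 6 1 (hM _ _ (by linear_combination hu7))
    · exact hψ M 7 8 (hs0 M _ (by simp [M]))
    · exact hψ M 8 7 ((hsi' M (by simp [M])).trans (by simp [M, e0]))
  · let M : Matrix.SpecialLinearGroup (Fin 2) F :=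
      ⟨!![1, 1; 0, 1], by rw [Matrix.det_fin_two_of]; ring⟩
    refine ⟨M, ?_⟩
    have hM : ∀ k l : F, k + 1 = l → Matrix.SpecialLinearGroup.toGL M • (k : OnePoint F) = (l : OnePoint F) := by
      intro k l hl
      rw [hs M k (by simp [M]), OnePoint.coe_eq_coe, ← hl]
      simp [M]
    have hu6 : u ^ 6 = u ^ 2 + 1 := by linear_combination (u ^ 3 + u + 1) * hu + u * h2
    have hu4 : u ^ 4 = u ^ 2 + u := by linear_combination u * hu
    have hu5 : u ^ 5 = u ^ 4 + 1 := by linear_combination (u ^ 2 - u + 1) * hu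
    refine abh_ext9 _ _ ?_ ?_ ?_ ?_ ?_ ?_ ?_ ?_ ?_
    · exact hψ M 0 7 (hM _ _ (by linear_combination h2))
    · exact hψ M 1 3 (hM _ _ (by linear_combination -hu))
    · exact hψ M 2 6 (hM _ _ (by linear_combination -hu6))
    · exact hψ M 3 1 (hM _ _ (by linear_combination hu + h2))
    · exact hψ M 4 5 (hM _ _ (by linear_combination -hu5))
    · exact hψ M 5 4 (hM _ _ (by linear_combination hu5 + h2))
    · exact hψ M 6 2 (hM _ _ (by linear_combination hu6 + h2))
    · exact hψ M 7 0 (hM _ _ (by ring))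
    · exact hψ M 8 8 (hsi M (by simp [M]))
  · rintro _ ⟨A, rfl⟩ h8 h7 h0
    exact hcen A (hfix A h8 h7 h0)

theorem abh_core (F : Type*) [Field F] [CharP F 2] [Fintype F] (hF : Fintype.card F = 8)
    (G : Subgroup (Equiv.Perm (Fin 9))) (hg : abhg ∈ G) (htm : abht ∈ G)
    (ht : ∀ a b, ∃ p ∈ G, p a = b) (hc : Nat.card G ≤ 504) :
    Nonempty (G ≃* Matrix.SpecialLinearGroup (Fin 2) F ⧸
      Subgroup.center (Matrix.SpecialLinearGroup (Fin 2) F)) := by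
  obtain ⟨ψ, hker, ψg, ψw, ψt, hsharp⟩ := abh_sl F hF
  have hw := abh_w_mem G hg ht hc
  let H : Subgroup (Equiv.Perm (Fin 9)) := Subgroup.closure {abhg, abhw, abht}
  have Hg : abhg ∈ H := Subgroup.subset_closure (by simp)
  have Hw : abhw ∈ H := Subgroup.subset_closure (by simp)
  have Ht : abht ∈ H := Subgroup.subset_closure (by simp)
  have HG : H ≤ G := by
    rw [Subgroup.closure_le]
    rintro z (rfl | rfl | rfl)
    exacts [hg, hw, htm]
  have Hψ : H ≤ ψ.range := by
    rw [Subgroup.closure_le]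
    rintro z (rfl | rfl | rfl)
    exacts [ψg, ψw, ψt]
  have H0 : ∀ a, ∃ p ∈ H, p 0 = a := by
    intro a
    by_cases h7 : a = 7
    · exact ⟨abht, Ht, h7.symm⟩
    by_cases h8 : a = 8
    · exact ⟨abhw * abht, H.mul_mem Hw Ht, h8.symm⟩
    · exact ⟨_, H.pow_mem Hg _, abhg_pow_0 a h7 h8⟩
  have Htr : ∀ a b, ∃ p ∈ H, p a = b := by
    intro a b
    obtain ⟨p, hp, rfl⟩ := H0 a
    obtain ⟨q, hq, rfl⟩ := H0 b
    exact ⟨q * p⁻¹, H.mul_mem hq (H.inv_mem hp), by simp⟩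
  have gen : ∀ L : Subgroup (Equiv.Perm (Fin 9)), H ≤ L →
      (∀ p ∈ L, p 8 = 8 → p 7 = 7 → p 0 = 0 → p = 1) → L ≤ H := by
    intro L hHL hs p hp
    obtain ⟨q, hq, q8, q7, q0⟩ := abh_tri H Hg Htr (p 8) (p 7) (p 0) (p.injective.ne (by decide))
      (p.injective.ne (by decide)) (p.injective.ne (by decide))
    have := hs (q⁻¹ * p) (L.mul_mem (L.inv_mem (hHL hq)) hp)
      (by simp [← q8]) (by simp [← q7]) (by simp [← q0])
    rw [← inv_mul_eq_one.1 this]; exact hq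
  have e1 : G = H := le_antisymm (gen G HG fun p hp => abh_sharp G hg ht hc p hp) HG
  have e2 : ψ.range = H := le_antisymm (gen _ Hψ hsharp) Hψ
  refine ⟨(MulEquiv.subgroupCongr (e1.trans e2.symm)).trans ?_⟩
  exact ((QuotientGroup.quotientMulEquivOfEq hker.symm).trans (QuotientGroup.quotientKerEquivRange ψ)).symm

theorem abh_core' (F : Type*) [Field F] [CharP F 2] [Fintype F] (hF : Fintype.card F = 8)
    (G : Subgroup (Equiv.Perm (Fin 9))) (hg : abhg ∈ G)
    (ht : ∀ a b, ∃ p ∈ G, p a = b) (hc : Nat.card G ≤ 504) :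
    Nonempty (G ≃* Matrix.SpecialLinearGroup (Fin 2) F ⧸
      Subgroup.center (Matrix.SpecialLinearGroup (Fin 2) F)) := by
  rcases abh_t_mem G hg ht hc with h | h
  · exact abh_core F hF G hg h ht hc
  · let c := (MulAut.conj abhn).toMonoidHom
    have hcinj : Function.Injective c := (MulAut.conj abhn).injective
    have hcard : Nat.card (G.map c) = Nat.card G := (Nat.card_congr (G.equivMapOfInjective c hcinj).toEquiv).symm
    obtain ⟨e⟩ := abh_core F hF (G.map c) ⟨abhg⁻¹, G.inv_mem hg, by decide⟩ ⟨abht', h, by decide⟩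
      (by
        intro a b
        obtain ⟨p, hp, hpab⟩ := ht (abhn⁻¹ a) (abhn⁻¹ b)
        exact ⟨c p, ⟨p, hp, rfl⟩, by
          change abhn (p (abhn⁻¹ a)) = b
          rw [hpab, abh_ai]⟩)
      (by rw [hcard]; exact hc)
    exact ⟨(G.equivMapOfInjective c hcinj).trans e⟩

theorem abh_group {G α : Type*} [Group G] [Finite G] [Fintype α] (hα : Fintype.card α = 9)
    [MulAction G α] [FaithfulSMul G α] (htr : ∀ a b : α, ∃ g : G, g • a = b) (h7 : 7 ∣ Nat.card G)
    (hc : Nat.card G ≤ 504) (F : Type*) [Field F] [CharP F 2] [Fintype F] (hF : Fintype.card F = 8) :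
    Nonempty (G ≃* Matrix.SpecialLinearGroup (Fin 2) F ⧸
      Subgroup.center (Matrix.SpecialLinearGroup (Fin 2) F)) := by
  have : Fact (Nat.Prime 7) := ⟨by norm_num⟩
  let e : α ≃ Fin 9 := Fintype.equivFinOfCardEq hα
  let φ : G →* Equiv.Perm (Fin 9) := (e.permCongrHom : Equiv.Perm α ≃* _).toMonoidHom.comp (MulAction.toPermHom G α)
  have hφ : Function.Injective φ := (e.permCongrHom : Equiv.Perm α ≃* _).injective.comp MulAction.toPerm_injective
  obtain ⟨x, hx⟩ := exists_prime_orderOf_dvd_card' 7 h7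
  have hox : orderOf (φ x) = 7 := by rw [orderOf_injective φ hφ, hx]
  have hct : (φ x).cycleType = abhg.cycleType := by
    have aux : ∀ p : Equiv.Perm (Fin 9), orderOf p = 7 → p.cycleType = {7} := by
      intro p hp
      obtain ⟨n, hn⟩ := Equiv.Perm.cycleType_prime_order (σ := p) (by rw [hp]; norm_num)
      have hs := p.sum_cycleType
      have hle : p.support.card ≤ 9 := by simpa using Finset.card_le_univ p.support
      rw [hn, hp, Multiset.sum_replicate, smul_eq_mul] at hs
      have : n = 0 := by omega
      rw [hn, hp, this]; rfl
    rw [aux _ hox, aux abhg (orderOf_eq_prime (by decide) (by decide))]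
  obtain ⟨c, hcc⟩ := isConj_iff.1 (Equiv.Perm.isConj_iff_cycleType_eq.2 hct)
  let Φ : G →* Equiv.Perm (Fin 9) := (MulAut.conj c).toMonoidHom.comp φ
  have hΦ : Function.Injective Φ := (MulAut.conj c).injective.comp hφ
  let eq := MonoidHom.ofInjective hΦ
  obtain ⟨r⟩ := abh_core' F hF Φ.range ⟨x, hcc⟩ (by
      intro a b
      obtain ⟨g, hgab⟩ := htr (e.symm (c⁻¹ a)) (e.symm (c⁻¹ b))
      refine ⟨Φ g, ⟨g, rfl⟩, ?_⟩
      change c (e (g • (e.symm (c⁻¹ a)))) = b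
      rw [hgab, Equiv.apply_symm_apply, abh_ai])
    (by rw [← Nat.card_congr eq.toEquiv]; exact hc)
  exact ⟨eq.trans r⟩

open Polynomial

theorem abh_V0 {k F : Type*} [Field k] [CharP k 7] [Field F] [CharP F 7] [Algebra k F] (x : F)
    (hx : Transcendental k x) (h : Fin 7 → F)
    (hh : ∀ i, h i ^ 2 = x - ((i : ℕ) : F)) (h0 : ∀ i, h i ≠ 0) :
    abhR x h 0 + abhR x h 6 + abhR x h 5 + abhR x h 3 ≠ 0 := by
  intro hv
  have e0 : h 0 ^ 2 = x := by simpa using hh 0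
  have e1 : h 1 ^ 2 = x - 1 := by simpa using hh 1
  have e2 : h 2 ^ 2 = x - 2 := by simpa using hh 2
  have e3 : h 3 ^ 2 = x - 3 := by simpa using hh 3
  have e4 : h 4 ^ 2 = x - 4 := by simpa using hh 4
  have e5 : h 5 ^ 2 = x - 5 := by simpa using hh 5
  have e6 : h 6 ^ 2 = x - 6 := by simpa using hh 6
  have n0 := h0 0
  have n1 := h0 1
  have n2 := h0 2
  have n3 := h0 3
  have n4 := h0 4
  have n5 := h0 5
  have n6 := h0 6
  have t0 : abhR x h 0 = x^2 / (h 0 * h 1 * h 2 * h 4) := by simp [abhR]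
  have t3 : abhR x h 3 = (x-3)^2 / (h 3 * h 4 * h 5 * h 0) := by simp [abhR]
  have t5 : abhR x h 5 = (x-5)^2 / (h 5 * h 6 * h 0 * h 2) := by simp [abhR]
  have t6 : abhR x h 6 = (x-6)^2 / (h 6 * h 0 * h 1 * h 3) := by simp [abhR]
  have hv' : x^2*(h 3*h 5*h 6) + (x-6)^2*(h 2*h 4*h 5) + (x-5)^2*(h 1*h 3*h 4) + (x-3)^2*(h 1*h 2*h 6) = 0 := by
    have : (abhR x h 0 + abhR x h 6 + abhR x h 5 + abhR x h 3) * (h 0 * h 1 * h 2 * h 3 * h 4 * h 5 * h 6) = 0 := by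
      rw [hv, zero_mul]
    rw [← this, t0, t3, t5, t6]
    simp only [add_mul]
    congr 1; congr 1; congr 1
    all_goals field_simp
  have key := abh_val x (h 0) (h 1) (h 2) (h 3) (h 4) (h 5) (h 6) e0 e1 e2 e3 e4 e5 e6 hv'
  let P : Polynomial k := ((X-6)*(X^4*(X-3)*(X-5)+(X-3)^4*(X-1)*(X-2)) - (X-4)*((X-5)^4*(X-1)*(X-3)+(X-6)^4*(X-2)*(X-5)))^2
      - (2*(X-4)*(X-5)^2*(X-6)^2-2*(X-6)*X^2*(X-3)^2)^2*((X-1)*(X-2)*(X-3)*(X-5))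
  apply hx
  refine ⟨P, ?_, ?_⟩
  · intro hP
    have h7 : (7:k) = 0 := by exact_mod_cast CharP.cast_eq_zero k 7
    have : P.eval 1 = 0 := by rw [hP]; simp
    have hP1 : P.eval 1 = (7460:k)^2 := by
      simp only [P, eval_sub, eval_add, eval_mul, eval_pow, eval_X, eval_ofNat, eval_one]; norm_num
    rw [hP1] at this
    have : (7460:k) = 0 := by simpa using this
    have : (1:k) = 0 := by linear_combination 3 * this - 3197 * h7
    exact one_ne_zero this
  · simp only [P, map_sub, map_add, map_mul, map_pow, aeval_X, map_ofNat, map_one]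
    linear_combination key

theorem abh_cast_add {F : Type*} [Field F] [CharP F 7] (i j : Fin 7) :
    (((i + j : Fin 7) : ℕ) : F) = ((i : ℕ) : F) + ((j : ℕ) : F) := by
  rw [Fin.val_add, ← CharP.cast_eq_mod F 7]; push_cast; rfl

theorem abh_V {k F : Type*} [Field k] [CharP k 7] [Field F] [CharP F 7] [Algebra k F] (x : F)
    (hx : Transcendental k x) (h : Fin 7 → F)
    (hh : ∀ i, h i ^ 2 = x - ((i : ℕ) : F)) (h0 : ∀ i, h i ≠ 0) (j : Fin 7) :
    ∑ i, abhR x h i ≠ ∑ i, (abhChi j i : F) * abhR x h i := by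
  intro e
  have hx' : Transcendental k (x - ((j : ℕ) : F)) := by
    intro ha
    apply hx
    have : x = (x - ((j : ℕ) : F)) + algebraMap k F ((j : ℕ) : k) := by simp
    rw [this]
    exact ha.add (isAlgebraic_algebraMap _)
  have hs : ∀ i, abhR (x - ((j : ℕ) : F)) (fun l => h (l + j)) i = abhR x h (i + j) := by
    intro i
    simp only [abhR, abh_cast_add]
    rw [add_right_comm i 1 j, add_right_comm i 2 j, add_right_comm i 4 j]
    congr 1; ring
  apply abh_V0 (k := k) (x - ((j : ℕ) : F)) hx' (fun l => h (l + j))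
    (fun i => by rw [hh, abh_cast_add]; ring) (fun i => h0 _)
  rw [hs, hs, hs, hs]
  rw [← Equiv.sum_comp (Equiv.addRight j), ← Equiv.sum_comp (Equiv.addRight j) (fun i => (abhChi j i : F) * abhR x h i)] at e
  have hc : ∀ j i : Fin 7, abhChi j (i + j) = abhChi 0 i := by decide
  simp only [Equiv.coe_addRight, hc, Fin.sum_univ_seven] at e
  have d0 : abhChi 0 0 = -1 := by decide
  have d1 : abhChi 0 1 = 1 := by decide
  have d2 : abhChi 0 2 = 1 := by decide
  have d3 : abhChi 0 3 = -1 := by decide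
  have d4 : abhChi 0 4 = 1 := by decide
  have d5 : abhChi 0 5 = -1 := by decide
  have d6 : abhChi 0 6 = -1 := by decide
  rw [d0, d1, d2, d3, d4, d5, d6] at e
  push_cast at e
  have h7 : (7:F) = 0 := by exact_mod_cast CharP.cast_eq_zero F 7
  linear_combination 4 * e - (abhR x h (0 + j) + abhR x h (6 + j) + abhR x h (5 + j) + abhR x h (3 + j)) * h7

/-- the eight candidate ratios -/
noncomputable def abhS {F : Type*} [Field F] (x : F) (h : Fin 7 → F) : Option (Fin 7) → F
  | none => ∑ i, abhR x h i
  | some j => ∑ i, (abhChi j i : F) * abhR x h i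

theorem abhS_some {F : Type*} [Field F] (x : F) (h : Fin 7 → F) (j : Fin 7) :
    abhS x h (some j) = ∑ i, abhR x (abhFlip j h) i := by
  simp only [abhS, abhR_flip]

theorem abhS_inj {k F : Type*} [Field k] [CharP k 7] [Field F] [CharP F 7] [Algebra k F] (x : F)
    (hx : Transcendental k x) (h : Fin 7 → F)
    (hh : ∀ i, h i ^ 2 = x - ((i : ℕ) : F)) (h0 : ∀ i, h i ≠ 0) :
    Function.Injective (abhS x h) := by
  have hd : ∀ i j : Fin 7, i ≠ j → ∃ l, ∀ m, abhChi j m = abhChi l m * abhChi i m := by decide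
  have hs : ∀ i j : Fin 7, abhS x h (some i) = abhS x h (some j) → i = j := by
    intro i j e
    by_contra hij
    obtain ⟨l, hl⟩ := hd i j hij
    apply abh_V (k := k) x hx (abhFlip i h) (abhFlip_sq x i h hh) (fun m => ?_) l
    · simp only [abhR_flip]
      have : ∀ m, (abhChi l m : F) * ((abhChi i m : F) * abhR x h m) = (abhChi j m : F) * abhR x h m := by
        intro m; rw [hl m]; push_cast; ring
      simp only [this]
      exact e
    · unfold abhFlip; split_ifs
      · exact neg_ne_zero.2 (h0 m)
      · exact h0 m
  intro i j e
  match i, j, e with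
  | none, none, _ => rfl
  | none, some j, e => exact absurd e (abh_V (k := k) x hx h hh h0 j)
  | some j, none, e => exact absurd e.symm (abh_V (k := k) x hx h hh h0 j)
  | some i, some j, e => rw [hs i j e]

theorem abh_ext {K Ω : Type*} [Field K] [Field Ω] [Algebra K Ω] (E : IntermediateField K Ω)
    (n m : ℕ) (hE : FiniteDimensional K E ∧ Module.finrank K E ≤ m) (x : Ω) (p : Polynomial E) (hp : p.Monic)
    (hn : p.natDegree = n)
    (hx : aeval x p = 0) :
    ∃ E' : IntermediateField K Ω, E ≤ E' ∧ x ∈ E' ∧ (FiniteDimensional K E' ∧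
      Module.finrank K E' ≤ n * m) := by
  have hi : IsIntegral E x := ⟨p, hp, hx⟩
  have := hE.1
  have fd : FiniteDimensional E (IntermediateField.adjoin E {x}) := IntermediateField.adjoin.finiteDimensional hi
  refine ⟨(IntermediateField.adjoin E {x}).restrictScalars K, ?_, ?_, ?_, ?_⟩
  · intro z hz
    exact (IntermediateField.adjoin E {x}).algebraMap_mem ⟨z, hz⟩
  · exact IntermediateField.mem_adjoin_simple_self E x
  · exact FiniteDimensional.trans K E (IntermediateField.adjoin E {x})
  · have fr : Module.Free E (IntermediateField.adjoin E {x}) := Module.Free.of_divisionRing _ _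
    have h1 : Module.finrank K (IntermediateField.adjoin E {x}) ≤ n * m := by
      rw [← Module.finrank_mul_finrank K E (IntermediateField.adjoin E {x}), mul_comm]
      gcongr
      · rw [IntermediateField.adjoin.finrank hi, ← hn]
        exact natDegree_le_of_dvd (minpoly.dvd E x hx) hp.ne_zero
      · exact hE.2
    exact h1

theorem abh_sep {K : Type*} [Field K] [CharP K 7] (t : K) :
    (X ^ 9 - C t * X ^ 2 + 1 : Polynomial K).Separable := by
  have h7 : (7 : Polynomial K) = 0 := by
    have : (7:K) = 0 := by exact_mod_cast CharP.cast_eq_zero K 7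
    rw [← map_ofNat C 7, this, C_0]
  refine ⟨1, 3 * X, ?_⟩
  simp only [derivative_add, derivative_sub, derivative_mul, derivative_X_pow, derivative_C, derivative_one]
  push_cast
  simp only [map_ofNat]
  linear_combination (4 * X ^ 9 - C t * X ^ 2) * h7

theorem abh_deg {K : Type*} [Field K] (t : K) :
    (X ^ 9 - C t * X ^ 2 + 1 : Polynomial K).natDegree = 9 ∧
    (X ^ 9 - C t * X ^ 2 + 1 : Polynomial K).Monic := by
  constructor
  · compute_degree!
  · monicity!

theorem abh_card_le' {k K Ω : Type*} [Field k] [IsAlgClosed k] [CharP k 7] [Field K] [Algebra k K]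
    [Field Ω] [IsAlgClosed Ω] [Algebra K Ω] [Algebra k Ω] [IsScalarTower k K Ω] (t : K)
    (ht : Transcendental k t) :
    Nat.card (X ^ 9 - C t * X ^ 2 + 1 : Polynomial K).Gal ≤ 504 := by
  have c1 : CharP K 7 := charP_of_injective_algebraMap (algebraMap k K).injective 7
  have c2 : CharP Ω 7 := charP_of_injective_algebraMap (algebraMap K Ω).injective 7
  have h7 : (7:Ω) = 0 := by exact_mod_cast CharP.cast_eq_zero Ω 7
  have : Fact (Nat.Prime 7) := ⟨by norm_num⟩
  set f := (X ^ 9 - C t * X ^ 2 + 1 : Polynomial K) with hf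
  obtain ⟨hfd, hfm⟩ := abh_deg t
  have hsep := abh_sep t
  rw [← hf] at hfd hfm hsep
  set T := algebraMap K Ω t with hT
  have htT : Transcendental k T := (transcendental_algebraMap_iff (algebraMap K Ω).injective).2 ht
  have hfa : ∀ z : Ω, aeval z f = z ^ 9 - T * z ^ 2 + 1 := by
    intro z; simp [hf, hT]
  obtain ⟨y, hy⟩ := IsAlgClosed.exists_aeval_eq_zero Ω f (by
    rw [degree_eq_natDegree hfm.ne_zero, hfd]; norm_num)
  have hy0 := hy
  rw [hfa] at hy
  have hyn : y ≠ 0 := by rintro rfl; simp at hy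
  obtain ⟨l, hl⟩ := IsAlgClosed.exists_pow_nat_eq (4:k) (n := 3) (by norm_num)
  set L := algebraMap k Ω l with hL
  have hL3 : L ^ 3 = 4 := by rw [hL, ← map_pow, hl, map_ofNat]
  have hLn : L ≠ 0 := by
    rintro h; rw [h] at hL3
    have : (1:Ω) = 0 := by linear_combination (-2) * hL3 - h7
    exact one_ne_zero this
  set c := (L * y ^ 3)⁻¹ with hc
  have hcn : L * y ^ 3 ≠ 0 := mul_ne_zero hLn (pow_ne_zero _ hyn)
  obtain ⟨x, hx⟩ := IsAlgClosed.exists_root (X ^ 7 - X - C c : Polynomial Ω) (by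
    have : (X ^ 7 - X - C c : Polynomial Ω).degree = 7 := by compute_degree!
    rw [this]; norm_num)
  have hx : x ^ 7 - x = c := by
    simp only [IsRoot, eval_sub, eval_pow, eval_X, eval_C] at hx; linear_combination hx
  have hcy : y ^ 9 * (x ^ 7 - x) ^ 3 = 2 := by
    have : (L * y ^ 3 * (x ^ 7 - x)) = 1 := by rw [hx, hc]; exact mul_inv_cancel₀ hcn
    have h3 : (L * y ^ 3 * (x ^ 7 - x)) ^ 3 = 1 := by rw [this, one_pow]
    have h4 : 4 * (y ^ 9 * (x ^ 7 - x) ^ 3) = 1 := by rw [← h3, ← hL3]; ring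
    linear_combination 2 * h4 - (y ^ 9 * (x ^ 7 - x) ^ 3) * h7
  have hh : ∀ i : Fin 7, ∃ z : Ω, z ^ 2 = x - ((i : ℕ) : Ω) := fun i =>
    IsAlgClosed.exists_pow_nat_eq _ (by norm_num)
  choose h hh using hh
  have h0 : ∀ i, h i ≠ 0 := by
    intro i hi
    have := hh i
    rw [hi] at this
    have hxi : x = ((i : ℕ) : Ω) := by linear_combination -this
    have : x ^ 7 = x := by
      have : ((i : ℕ) : Ω) = (((i : ℕ) : ZMod 7).cast : Ω) := by simp
      rw [hxi, this, ← ZMod.cast_pow', ZMod.pow_card]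
    rw [this, sub_self] at hx
    exact inv_ne_zero hcn hx.symm
  have hxt : Transcendental k x := by
    intro hxa
    apply htT
    have hca : IsAlgebraic k c := by rw [← hx]; exact (hxa.pow 7).sub hxa
    have hy3 : IsAlgebraic k (y ^ 3) := by
      have : y ^ 3 = c⁻¹ * algebraMap k Ω l⁻¹ := by
        rw [hc, inv_inv, map_inv₀, ← hL]; field_simp
      rw [this]
      exact hca.inv.mul (isAlgebraic_algebraMap _)
    have hya : IsAlgebraic k y := hy3.of_pow (by norm_num)
    have : T = y ^ 7 + (y ^ 2)⁻¹ := by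
      field_simp
      linear_combination -hy
    rw [this]
    exact (hya.pow 7).add (hya.pow 2).inv
  obtain ⟨E1, -, hy1, hE1⟩ := abh_ext (⊥ : IntermediateField K Ω) 9 1
    ⟨inferInstance, by rw [IntermediateField.finrank_bot]⟩ y (f.map (algebraMap K _)) (hfm.map _)
    (by rw [natDegree_map, hfd]) (by rw [aeval_map_algebraMap, hy0])
  have hc1 : c ∈ E1 := by
    have hL1 : L ∈ E1 := by
      rw [hL, IsScalarTower.algebraMap_apply k K Ω]; exact E1.algebraMap_mem _
    exact E1.inv_mem (E1.mul_mem hL1 (pow_mem hy1 3))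
  obtain ⟨E2, h12, hx2, hE2⟩ := abh_ext E1 7 _ hE1 x (X ^ 7 - X - C ⟨c, hc1⟩) (by monicity!)
    (by compute_degree!) (by
      simp only [map_sub, map_pow, aeval_X, aeval_C]
      rw [hx]; exact sub_self _)
  have hn2 : ∀ E : IntermediateField K Ω, x ∈ E → ∀ n : ℕ, x - (n : Ω) ∈ E := fun E hE n =>
    E.sub_mem hE (natCast_mem E n)
  set w : Fin 7 → Ω := fun i => h i * h (i + 1) * h (i + 2) * h (i + 4) with hw
  have hwn : ∀ i, w i ≠ 0 := fun i =>
    mul_ne_zero (mul_ne_zero (mul_ne_zero (h0 _) (h0 _)) (h0 _)) (h0 _)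
  have hw2 : ∀ E : IntermediateField K Ω, x ∈ E → ∀ i, w i ^ 2 ∈ E := by
    intro E hE i
    have : w i ^ 2 = h i ^ 2 * h (i + 1) ^ 2 * h (i + 2) ^ 2 * h (i + 4) ^ 2 := by
      simp only [hw]; ring
    rw [this, hh, hh, hh, hh]
    exact E.mul_mem (E.mul_mem (E.mul_mem (hn2 E hE _) (hn2 E hE _)) (hn2 E hE _)) (hn2 E hE _)
  have hquad : ∀ E : IntermediateField K Ω, x ∈ E → ∀ i m, (FiniteDimensional K E ∧ Module.finrank K E ≤ m) →
      ∃ E' : IntermediateField K Ω, E ≤ E' ∧ w i ∈ E' ∧ (FiniteDimensional K E' ∧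
      Module.finrank K E' ≤ 2 * m) := by
    intro E hE i m hm
    refine abh_ext E 2 m hm (w i) (X ^ 2 - C ⟨w i ^ 2, hw2 E hE i⟩) (by monicity!)
      (by compute_degree!) (by
        simp only [map_sub, map_pow, aeval_X, aeval_C]
        exact sub_self _)
  obtain ⟨E3, h23, hw0, hE3⟩ := hquad E2 hx2 0 _ hE2
  obtain ⟨E4, h34, hw1, hE4⟩ := hquad E3 (h23 hx2) 1 _ hE3
  obtain ⟨E5, h45, hw2', hE5⟩ := hquad E4 (h34 (h23 hx2)) 2 _ hE4
  have hx5 : x ∈ E5 := h45 (h34 (h23 hx2))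
  have hy5 : y ∈ E5 := h45 (h34 (h23 (h12 hy1)))
  have hrel : ∀ i, w i ∈ E5 → w (i + 1) ∈ E5 → w (i + 3) ∈ E5 := by
    intro i hi hi1
    have : w (i + 3) = (h i ^ 2 * h (i + 1) ^ 2 * h (i + 2) ^ 2 * h (i + 3) ^ 2 * h (i + 4) ^ 2 * h (i + 5) ^ 2)
        / (w i * w (i + 1)) := by
      rw [eq_div_iff (mul_ne_zero (hwn _) (hwn _))]
      have a1 : ∀ i : Fin 7, i + 1 + 1 = i + 2 := by decide
      have a2 : ∀ i : Fin 7, i + 1 + 2 = i + 3 := by decide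
      have a3 : ∀ i : Fin 7, i + 1 + 4 = i + 5 := by decide
      have a4 : ∀ i : Fin 7, i + 3 + 1 = i + 4 := by decide
      have a5 : ∀ i : Fin 7, i + 3 + 2 = i + 5 := by decide
      have a6 : ∀ i : Fin 7, i + 3 + 4 = i := by decide
      simp only [hw, a1, a2, a3, a4, a5, a6]
      ring
    rw [this]
    refine E5.div_mem ?_ (E5.mul_mem hi hi1)
    simp only [hh]
    have := hn2 E5 hx5
    exact E5.mul_mem (E5.mul_mem (E5.mul_mem (E5.mul_mem (E5.mul_mem (this _) (this _)) (this _)) (this _)) (this _)) (this _)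
  have m0 : w 0 ∈ E5 := h45 (h34 hw0)
  have m1 : w 1 ∈ E5 := h45 hw1
  have m3 := hrel 0 m0 m1
  have m4 := hrel 1 m1 hw2'
  have m5 := hrel 2 hw2' m3
  have m6 := hrel 3 m3 m4
  have hwm : ∀ i, w i ∈ E5 := by
    intro i; fin_cases i
    exacts [m0, m1, hw2', m3, m4, m5, m6]
  have hR : ∀ i, abhR x h i ∈ E5 := fun i => E5.div_mem (pow_mem (hn2 E5 hx5 _) 2) (hwm i)
  have hS : ∀ o, abhS x h o ∈ E5 := by
    intro o
    cases o with
    | none => exact sum_mem fun i _ => hR i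
    | some j => exact sum_mem fun i _ => E5.mul_mem (intCast_mem E5 _) (hR i)
  have hrt : ∀ o, abhS x h o + 1 ≠ 0 ∧ (y * ((abhS x h o - 1) / (abhS x h o + 1))) ^ 9 -
      T * (y * ((abhS x h o - 1) / (abhS x h o + 1))) ^ 2 + 1 = 0 := by
    intro o
    cases o with
    | none => exact abh_root T y x h hh h0 hy hcy
    | some j =>
      rw [abhS_some]
      refine abh_root T y x _ (abhFlip_sq x j h hh) (fun m => ?_) hy hcy
      unfold abhFlip; split_ifs
      · exact neg_ne_zero.2 (h0 m)
      · exact h0 m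
  have h2 : (2:Ω) ≠ 0 := by
    intro h2
    have : (1:Ω) = 0 := by linear_combination h7 - 3 * h2
    exact one_ne_zero this
  let g : Option (Option (Fin 7)) → Ω := fun o => match o with
    | none => y
    | some o => y * ((abhS x h o - 1) / (abhS x h o + 1))
  have hginj : Function.Injective g := by
    have hne : ∀ o, y ≠ y * ((abhS x h o - 1) / (abhS x h o + 1)) := by
      intro o e
      have := (hrt o).1
      have e' : y * (abhS x h o + 1) = y * (abhS x h o - 1) := by
        field_simp at e; linear_combination y * e
      have := mul_left_cancel₀ hyn e'
      exact h2 (by linear_combination this)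
    intro o1 o2 e
    match o1, o2, e with
    | none, none, _ => rfl
    | none, some o, e => exact absurd e (hne o)
    | some o, none, e => exact absurd e.symm (hne o)
    | some o, some o', e =>
      have e1 := mul_left_cancel₀ hyn e
      rw [div_eq_div_iff (hrt o).1 (hrt o').1] at e1
      have : abhS x h o = abhS x h o' := by
        apply mul_left_cancel₀ h2; linear_combination e1
      rw [abhS_inj (k := k) x hxt h hh h0 this]
  have hgroot : ∀ o, aeval (g o) f = 0 := by
    intro o; rw [hfa]
    match o with
    | none => exact hy
    | some o => exact (hrt o).2
  have hgm : ∀ o, g o ∈ E5 := by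
    intro o
    match o with
    | none => exact hy5
    | some o => exact E5.mul_mem hy5 (E5.div_mem (E5.sub_mem (hS o) E5.one_mem) (E5.add_mem (hS o) E5.one_mem))
  have hfn : f ≠ 0 := hfm.ne_zero
  have hset : ∀ z : Ω, z ∈ f.rootSet Ω → z ∈ E5 := by
    classical
    have hsub : Finset.univ.image g ⊆ (f.map (algebraMap K Ω)).roots.toFinset := by
      intro z hz
      obtain ⟨o, -, rfl⟩ := Finset.mem_image.1 hz
      rw [Multiset.mem_toFinset, mem_roots (by rw [Polynomial.map_ne_zero_iff (algebraMap K Ω).injective]; exact hfn)]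
      rw [IsRoot, eval_map_algebraMap, hgroot]
    have hcard : (f.map (algebraMap K Ω)).roots.toFinset.card ≤ (Finset.univ.image g).card := by
      rw [Finset.card_image_of_injective _ hginj]
      refine (Multiset.toFinset_card_le _).trans ((card_roots' _).trans ?_)
      rw [natDegree_map, hfd]; simp
    have heq := Finset.eq_of_subset_of_card_le hsub hcard
    intro z hz
    rw [mem_rootSet] at hz
    have : z ∈ (f.map (algebraMap K Ω)).roots.toFinset := by
      rw [Multiset.mem_toFinset, mem_roots (by rw [Polynomial.map_ne_zero_iff (algebraMap K Ω).injective]; exact hfn)]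
      rw [IsRoot, eval_map_algebraMap, hz.2]
    rw [← heq] at this
    obtain ⟨o, -, rfl⟩ := Finset.mem_image.1 this
    exact hgm o
  have hsp : (f.map (algebraMap K E5)).Splits :=
    IntermediateField.splits_of_splits (IsAlgClosed.splits _) hset
  have := hE5.1
  rw [Polynomial.Gal.card_of_separable hsep]
  have h3 := LinearMap.finrank_le_finrank_of_injective (f := (SplittingField.lift f hsp).toLinearMap)
    (SplittingField.lift f hsp).injective
  exact h3.trans hE5.2

theorem abh_card_le {k K : Type*} [Field k] [IsAlgClosed k] [CharP k 7] [Field K] [Algebra k K] (t : K)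
    (ht : Transcendental k t) :
    Nat.card (X ^ 9 - C t * X ^ 2 + 1 : Polynomial K).Gal ≤ 504 :=
  abh_card_le' (Ω := AlgebraicClosure K) t ht

open IsDedekindDomain in
theorem abh_ram {A K L : Type*} [CommRing A] [IsDedekindDomain A] [Field K] [Algebra A K]
    [IsFractionRing A K] [Field L] [Algebra K L] [Algebra A L] [IsScalarTower A K L]
    [IsGalois K L] [FiniteDimensional K L] (v : HeightOneSpectrum A) (t : K) (s : ℕ)
    (ht : v.valuation K t = WithZero.exp (s : ℤ)) (hs : ¬ 7 ∣ s)
    (hsp : ((X ^ 9 - C t * X ^ 2 + 1 : Polynomial K).map (algebraMap K L)).Splits) :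
    7 ∣ Nat.card (Gal(L/K)) := by
  let B := integralClosure A L
  have : IsDedekindDomain B := IsIntegralClosure.isDedekindDomain A K L B
  have : Module.Finite A B := IsIntegralClosure.finite A K L B
  have : IsFractionRing B L := IsIntegralClosure.isFractionRing_of_finite_extension A K L B
  let : MulSemiringAction Gal(L/K) B := IsIntegralClosure.MulSemiringAction A K L B
  have : IsGaloisGroup Gal(L/K) A B := IsGaloisGroup.of_isFractionRing _ _ _ K L
  have hinj : Function.Injective (algebraMap A L) := by
    rw [IsScalarTower.algebraMap_eq A K L]
    exact (algebraMap K L).injective.comp (IsFractionRing.injective A K)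
  have hinjB : Function.Injective (algebraMap A B) := by
    have h : Function.Injective ((algebraMap B L) ∘ (algebraMap A B)) := by
      rw [← RingHom.coe_comp, ← IsScalarTower.algebraMap_eq A B L]; exact hinj
    exact h.of_comp
  have : FaithfulSMul A B := (faithfulSMul_iff_algebraMap_injective A B).mpr hinjB
  have : Module.IsTorsionFree A B := inferInstance
  obtain ⟨⟨P, hP, hPo⟩⟩ := v.asIdeal.nonempty_primesOver (S := B)
  have hPbot : P ≠ ⊥ := Ideal.ne_bot_of_liesOver_of_ne_bot v.ne_bot P
  let w : HeightOneSpectrum B := ⟨P, hP, hPbot⟩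
  have : w.asIdeal.LiesOver v.asIdeal := hPo
  have hw := HeightOneSpectrum.valuation_liesOver L v w t
  rw [ht] at hw
  have he : v.asIdeal.ramificationIdx' w.asIdeal = P.ramificationIdx A :=
    Ideal.ramificationIdx'_eq_ramificationIdx v.asIdeal P v.ne_bot
  have hcard := Ideal.ncard_primesOver_mul_ramificationIdxIn_mul_inertiaDegIn v.asIdeal B Gal(L/K)
  rw [Ideal.ramificationIdxIn_eq_ramificationIdx v.asIdeal P Gal(L/K), ← he] at hcard
  have he0 := Ideal.IsDedekindDomain.ramificationIdx'_ne_zero_of_liesOver w.asIdeal v.ne_bot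
  generalize v.asIdeal.ramificationIdx' w.asIdeal = e at hcard hw he0
  suffices h7 : 7 ∣ e by
    rw [← hcard]
    exact Dvd.dvd.mul_left (Dvd.dvd.mul_right h7 _) _
  have hs0 : 0 < s := by rcases Nat.eq_zero_or_pos s with h | h; · simp [h] at hs
                         · exact h
  set V := w.valuation L
  set T := algebraMap K L t
  rw [← WithZero.exp_nsmul] at hw
  have hT1 : 1 < V T := by
    rw [← hw, ← WithZero.exp_zero, WithZero.exp_lt_exp, nsmul_eq_mul]; positivity
  have hfm : (X ^ 9 - C t * X ^ 2 + 1 : Polynomial K).map (algebraMap K L) =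
    X ^ 9 - C T * X ^ 2 + 1 := by simp [T]
  rw [hfm] at hsp
  obtain ⟨hdeg, hmon⟩ := abh_deg T
  obtain ⟨y, hy, hVy⟩ : ∃ y, y ∈ (X ^ 9 - C T * X ^ 2 + 1 : Polynomial L).roots ∧ 1 < V y := by
    by_contra! hcon
    have hpr := hsp.eq_prod_roots_of_monic hmon
    have hl : (X ^ 9 - C T * X ^ 2 + 1 : Polynomial L) ∈
        Polynomial.lifts (V.valuationSubring.subtype) := by
      rw [hpr]
      apply multiset_prod_mem
      intro q hq
      obtain ⟨y, hy, rfl⟩ := Multiset.mem_map.mp hq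
      refine ⟨X - C ⟨y, hcon y hy⟩, ?_⟩
      simp
    rw [Polynomial.lifts_iff_coeff_lifts] at hl
    obtain ⟨⟨z, hz⟩, hz2⟩ := hl 2
    have : (X ^ 9 - C T * X ^ 2 + 1 : Polynomial L).coeff 2 = -T := by
      simp [coeff_X_pow, coeff_one]
    rw [this] at hz2
    have hz3 : z = -T := hz2
    have : V z ≤ 1 := hz
    rw [hz3, Valuation.map_neg] at this
    exact absurd this (not_le.mpr hT1)
  have hroot : y ^ 9 + 1 = T * y ^ 2 := by
    have := (mem_roots'.mp hy).2
    simp at this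
    linear_combination this
  have hy0 : V y ≠ 0 := by intro h; rw [h] at hVy; exact absurd hVy (by simp)
  have hV : V y ^ 9 = V T * V y ^ 2 := by
    rw [← map_pow, ← map_pow, ← map_mul, ← hroot]
    rw [Valuation.map_add_eq_of_lt_left]
    rw [map_one, map_pow]
    exact one_lt_pow₀ hVy (by norm_num)
  have hV7 : V y ^ 7 = V T := by
    have h2 : V y ^ 2 ≠ 0 := pow_ne_zero _ hy0
    apply mul_right_cancel₀ h2
    rw [← hV, ← pow_add]
  have : V y = WithZero.exp (WithZero.log (V y)) := (WithZero.exp_log hy0).symm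
  rw [this, ← hw, ← WithZero.exp_nsmul, WithZero.exp_inj, nsmul_eq_mul, nsmul_eq_mul] at hV7
  have h7 : (7 : ℤ) ∣ (e * s : ℕ) := ⟨WithZero.log (V y), by push_cast; rw [← hV7]; rfl⟩
  have h7' : 7 ∣ e * s := by exact_mod_cast h7
  exact ((Nat.Prime.dvd_mul (by norm_num)).mp h7').resolve_right hs

open IsDedekindDomain IntermediateField in
theorem abh_seven {k K : Type*} [Field k] [CharP k 7] [Field K] [Algebra k K] (x : K)
    (hx : Transcendental k x) (hgen : k⟮x⟯ = ⊤) (a : k) (ha : a ≠ 0) (s : ℕ) (hs : ¬ 7 ∣ s) :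
    7 ∣ Nat.card (X ^ 9 - C (algebraMap k K a * x⁻¹ ^ s) * X ^ 2 + 1 : Polynomial K).Gal := by
  let : Algebra k[X] K := (aeval x).toRingHom.toAlgebra
  have hmap : ∀ p : k[X], algebraMap k[X] K p = aeval x p := fun p => rfl
  have hinj : Function.Injective (algebraMap k[X] K) := transcendental_iff_injective.mp hx
  have : FaithfulSMul k[X] K := (faithfulSMul_iff_algebraMap_injective _ _).mpr hinj
  have : IsFractionRing k[X] K := IsFractionRing.of_field _ _ fun z => by
    have hz : z ∈ k⟮x⟯ := by rw [hgen]; trivial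
    obtain ⟨p, q, h⟩ := IntermediateField.mem_adjoin_simple_iff k z |>.mp hz
    exact ⟨p, q, h⟩
  have : CharP K 7 := charP_of_injective_algebraMap (algebraMap k K).injective 7
  have hX : Prime (X : k[X]) := prime_X
  let v : HeightOneSpectrum k[X] := ⟨Ideal.span {X}, by
    rw [Ideal.span_singleton_prime X_ne_zero]; exact prime_X, by simp⟩
  have hvx : v.valuation K x = WithZero.exp (-1 : ℤ) := by
    have h : v.valuation K (algebraMap k[X] K X) = _ := v.valuation_of_algebraMap X
    rw [hmap, aeval_X] at h
    rw [h, v.intValuation_singleton X_ne_zero rfl]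
  have hva : v.valuation K (algebraMap k K a) = 1 := by
    have h : v.valuation K (algebraMap k[X] K (C a)) = _ := v.valuation_of_algebraMap (C a)
    rw [hmap, aeval_C] at h
    rw [h, HeightOneSpectrum.intValuation_eq_one_iff]
    change ¬ (C a ∈ Ideal.span {X})
    rw [Ideal.mem_span_singleton, X_dvd_iff]
    simpa using ha
  have ht : v.valuation K (algebraMap k K a * x⁻¹ ^ s) = WithZero.exp (s : ℤ) := by
    rw [map_mul, map_pow, map_inv₀, hva, hvx, ← WithZero.exp_neg, ← WithZero.exp_nsmul]
    simp
  have hsep := abh_sep (algebraMap k K a * x⁻¹ ^ s)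
  generalize algebraMap k K a * x⁻¹ ^ s = t at ht hsep
  have : IsGalois K (X ^ 9 - C t * X ^ 2 + 1 : Polynomial K).SplittingField :=
    IsGalois.of_separable_splitting_field hsep
  exact abh_ram v t s ht hs (SplittingField.splits _)

theorem abh_transc {k K : Type*} [Field k] [Field K] [Algebra k K] (x : K)
    (hx : Transcendental k x) (a : k) (ha : a ≠ 0) (s : ℕ) (hs : 0 < s) :
    Transcendental k (algebraMap k K a * x ^ s) := by
  intro h
  have h2 : IsAlgebraic k (x ^ s) := by
    have := (isAlgebraic_algebraMap (R := k) (A := K) a⁻¹).mul h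
    rwa [← mul_assoc, ← map_mul, inv_mul_cancel₀ ha, map_one, one_mul] at this
  exact hx (h2.of_pow hs)

theorem abh_frob {K : Type*} [Field K] [CharP K 7] (t : K) :
    Nonempty ((X ^ 9 - C (t ^ 7) * X ^ 2 + 1 : Polynomial K).Gal ≃*
      (X ^ 9 - C t * X ^ 2 + 1 : Polynomial K).Gal) := by
  have : Fact (Nat.Prime 7) := ⟨by norm_num⟩
  have hsep := abh_sep t
  have hf : (X ^ 9 - C (t ^ 7) * X ^ 2 + 1 : Polynomial K) =
    (X ^ 9 - C t * X ^ 2 + 1 : Polynomial K).map (frobenius K 7) := by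
    simp [frobenius_def]
  have hne : (X ^ 9 - C (t ^ 7) * X ^ 2 + 1 : Polynomial K) ≠ 0 := (abh_deg (t ^ 7)).2.ne_zero
  set f := (X ^ 9 - C (t ^ 7) * X ^ 2 + 1 : Polynomial K) with hfd
  set g := (X ^ 9 - C t * X ^ 2 + 1 : Polynomial K)
  have : IsGalois K g.SplittingField := IsGalois.of_separable_splitting_field hsep
  have : CharP g.SplittingField 7 :=
    charP_of_injective_algebraMap (algebraMap K g.SplittingField).injective 7
  have hsp := SplittingField.splits g
  have : f.IsSplittingField K g.SplittingField := by
    rw [isSplittingField_iff_intermediateField]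
    constructor
    · rw [hf, Polynomial.map_map, RingHom.frobenius_comm, ← Polynomial.map_map]
      exact hsp.map _
    · have h1 := (isSplittingField_iff_intermediateField.mp
        (inferInstance : g.IsSplittingField K g.SplittingField)).2
      rw [IntermediateField.adjoin_eq_adjoin_pow_expChar_of_isSeparable' K g.SplittingField _ 7] at h1
      rw [eq_top_iff, ← h1]
      apply IntermediateField.adjoin.mono
      rintro _ ⟨x, hx, rfl⟩
      rw [mem_rootSet] at hx ⊢
      refine ⟨hne, ?_⟩
      have h2 := hx.2
      simp only [g, map_add, map_sub, map_mul, map_pow, aeval_X, aeval_C, map_one] at h2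
      simp only [hfd, map_add, map_sub, map_mul, map_pow, aeval_X, aeval_C, map_one]
      have h3 := congrArg (frobenius g.SplittingField 7) h2
      simp only [map_add, map_sub, map_mul, map_pow, map_one, map_zero, frobenius_def] at h3
      exact h3
  exact ⟨AlgEquiv.autCongr (IsSplittingField.algEquiv g.SplittingField f).symm⟩

theorem abh_quad_div {R : Type*} [CommRing R] (b c t : R) :
    (X ^ 2 + C b * X + C c : R[X]) ∣ (X ^ 9 - C t * X ^ 2 + 1) -
      (C ((b^8 - 7*b^6*c + 15*b^4*c^2 - 10*b^2*c^3 + c^4) + t * b) * X +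
        C ((b^7*c - 6*b^5*c^2 + 10*b^3*c^3 - 4*b*c^4) + t * c + 1)) := by
  refine ⟨X ^ 7 + C (-b) * X ^ 6 + C (b^2-c) * X^5 + C (-b^3+2*b*c) * X^4
    + C (b^4-3*b^2*c+c^2)*X^3 + C (-b^5+4*b^3*c-3*b*c^2)*X^2 + C (b^6-5*b^4*c+6*b^2*c^2-c^3)*X
    + C (-b^7+6*b^5*c-10*b^3*c^2+4*b*c^3) - C t, ?_⟩
  simp only [C_add, C_sub, C_neg, C_mul, C_pow, C_1, show (C 7 : R[X]) = 7 from rfl,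
    show (C 15 : R[X]) = 15 from rfl, show (C 10 : R[X]) = 10 from rfl,
    show (C 6 : R[X]) = 6 from rfl, show (C 5 : R[X]) = 5 from rfl,
    show (C 4 : R[X]) = 4 from rfl, show (C 3 : R[X]) = 3 from rfl,
    show (C 2 : R[X]) = 2 from rfl]
  ring

theorem abh_nofac {k K : Type*} [Field k] [Field K] [Algebra k K] (t : K)
    (ht : Transcendental k t) (b : K) (c : k) (hc : c ≠ 0)
    (h : (X ^ 2 + C b * X + C (algebraMap k K c) : K[X]) ∣ (X ^ 9 - C t * X ^ 2 + 1)) : False := by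
  have hd := (dvd_sub_right h).mp (abh_quad_div b (algebraMap k K c) t)
  have hz := eq_zero_of_dvd_of_natDegree_lt hd (by
    have : (X ^ 2 + C b * X + C (algebraMap k K c) : K[X]).natDegree = 2 := by compute_degree!
    rw [this]
    refine lt_of_le_of_lt (natDegree_linear_le) (by norm_num))
  have h1 := congrArg (coeff · 1) hz
  have h0 := congrArg (coeff · 0) hz
  simp only [coeff_add, coeff_C_mul, coeff_X_one, coeff_C_succ, coeff_X_zero, coeff_C_zero,
    coeff_zero, mul_zero, zero_add, add_zero, mul_one] at h1 h0
  set d := algebraMap k K c with hd'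
  have hd0 : d ≠ 0 := by simpa [hd'] using hc
  have hb : d^2*b^6 - 5*d^3*b^4 + 6*d^4*b^2-d^5 + b = 0 := by
    linear_combination -d * h1 + b * h0
  have halg : IsAlgebraic k b := by
    refine ⟨C (c^2) * X^6 - C (5 * c^3)*X^4 + C (6*c^4)*X^2 - C (c^5) + X, ?_, ?_⟩
    · intro h
      have := congrArg (coeff · 6) h
      simp only [coeff_add, coeff_sub, coeff_C_mul, coeff_X_pow, coeff_C, coeff_X, coeff_zero] at this
      norm_num at this
      exact hc this
    · simp only [map_add, map_sub, map_mul, map_pow, aeval_X, aeval_C, ← hd', map_ofNat]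
      linear_combination hb
  have hda : IsAlgebraic k d := isAlgebraic_algebraMap c
  have hnat : ∀ n : ℕ, IsAlgebraic k (n : K) := fun n => isAlgebraic_natCast n
  have : t = - (((b^7*d - (6:ℕ)*b^5*d^2 + (10:ℕ)*b^3*d^3 - (4:ℕ)*b*d^4)) + (1:ℕ)) * d⁻¹ := by
    field_simp
    push_cast
    linear_combination h0
  apply ht
  rw [this]
  refine IsAlgebraic.mul (IsAlgebraic.neg (IsAlgebraic.add ?_ (hnat _))) hda.inv
  refine IsAlgebraic.sub (IsAlgebraic.add (IsAlgebraic.sub ?_ ?_) ?_) ?_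
  · exact (halg.pow _).mul hda
  · exact ((hnat _).mul (halg.pow _)).mul (hda.pow _)
  · exact ((hnat _).mul (halg.pow _)).mul (hda.pow _)
  · exact ((hnat _).mul halg).mul (hda.pow _)

theorem abh_nofac2 {k K : Type*} [Field k] [Field K] [Algebra k K] [Algebra k[X] K]
    [IsScalarTower k k[X] K] [IsFractionRing k[X] K] (T : k[X]) (t : K)
    (hT : algebraMap k[X] K T = t)
    (ht : Transcendental k t) (q : K[X]) (hq : q.Monic) (h1 : 1 ≤ q.natDegree)
    (h2 : q.natDegree ≤ 2) (hdvd : q ∣ (X ^ 9 - C t * X ^ 2 + 1)) : False := by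
  have hf0 : (X ^ 9 - C T * X ^ 2 + 1 : k[X][X]).Monic := by monicity!
  have hmap : (X ^ 9 - C T * X ^ 2 + 1 : k[X][X]).map (algebraMap k[X] K) =
    X ^ 9 - C t * X ^ 2 + 1 := by simp [hT]
  obtain ⟨p, hp⟩ := hdvd
  have hpm : p.Monic := by
    have : (X ^ 9 - C t * X ^ 2 + 1 : K[X]).Monic := (abh_deg t).2
    rw [hp] at this
    exact hq.of_mul_monic_left this
  obtain ⟨q', hq'⟩ := IsIntegrallyClosed.eq_map_mul_C_of_dvd K hf0 (g := q)
    (by rw [hmap, hp]; exact dvd_mul_right _ _)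
  obtain ⟨p', hp'⟩ := IsIntegrallyClosed.eq_map_mul_C_of_dvd K hf0 (g := p)
    (by rw [hmap, hp]; exact dvd_mul_left _ _)
  rw [hq.leadingCoeff, C_1, mul_one] at hq'
  rw [hpm.leadingCoeff, C_1, mul_one] at hp'
  have hc : q'.coeff 0 * p'.coeff 0 = 1 := by
    apply IsFractionRing.injective k[X] K
    rw [map_mul, ← coeff_map, ← coeff_map, hq', hp', ← mul_coeff_zero, ← hp]
    simp
  obtain ⟨c, hc0, hcc⟩ := Polynomial.isUnit_iff.mp (IsUnit.of_mul_eq_one _ hc)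
  have hq0 : q.coeff 0 = algebraMap k K c := by
    rw [← hq', coeff_map, ← hcc, IsScalarTower.algebraMap_apply k k[X] K]; rfl
  have hc1 : c ≠ 0 := hc0.ne_zero
  have hqd : q ∣ (X ^ 9 - C t * X ^ 2 + 1) := ⟨p, hp⟩
  rcases (by omega : q.natDegree = 1 ∨ q.natDegree = 2) with hn | hn
  · have he : q = X + C (algebraMap k K c) := by
      rw [hq.as_sum, hn]; simp [hq0]
    have hr : (X ^ 9 - C t * X ^ 2 + 1 : K[X]).eval (-(algebraMap k K c)) = 0 := by
      rw [hp, he]; simp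
    simp at hr
    apply ht
    have : t = algebraMap k K ((1 - c^9) / c ^ 2) := by
      rw [map_div₀, eq_div_iff (by simpa using hc1)]
      simp
      linear_combination -hr
    rw [this]
    exact isAlgebraic_algebraMap _
  · apply abh_nofac t ht (q.coeff 1) c hc1
    have he : q = X ^ 2 + C (q.coeff 1) * X + C (algebraMap k K c) := by
      conv_lhs => rw [hq.as_sum, hn]
      simp [Finset.sum_range_succ, hq0]; ring
    rw [← he]; exact hqd

theorem abh_orb {K L : Type*} [Field K] [Field L] [Algebra K L] (σ : L ≃ₐ[K] L) (y : L)
    (hint : IsIntegral K y) (h : σ ^ 7 = 1) (hy : σ y ≠ y) : 7 ≤ (minpoly K y).natDegree := by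
  have : Fact (Nat.Prime 7) := ⟨by norm_num⟩
  refine le_trans ?_ (ncard_rootSet_le (minpoly K y) L)
  have hp : Function.minimalPeriod (σ : L → L) y = 7 := by
    apply Function.minimalPeriod_eq_prime
    · change (σ : L → L)^[7] y = y
      rw [← AlgEquiv.coe_pow, h]; rfl
    · exact hy
  have hinj := Function.iterate_injOn_Iio_minimalPeriod (f := (σ : L → L)) (x := y)
  rw [hp] at hinj
  have hsub : (fun n : ℕ => (σ : L → L)^[n] y) '' (Set.Iio 7) ⊆ (minpoly K y).rootSet L := by
    rintro _ ⟨n, _, rfl⟩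
    rw [mem_rootSet]
    refine ⟨(minpoly.monic hint).ne_zero, ?_⟩
    simp only
    rw [← AlgEquiv.coe_pow]
    change aeval (((σ ^ n : L ≃ₐ[K] L) : L →ₐ[K] L) y) (minpoly K y) = 0
    rw [aeval_algHom_apply, minpoly.aeval, map_zero]
  have := Set.ncard_le_ncard hsub (rootSet_finite _ _)
  rw [hinj.ncard_image] at this
  simpa using this

theorem abh_irr {k K : Type*} [Field k] [CharP k 7] [Field K] [Algebra k K] [Algebra k[X] K]
    [IsScalarTower k k[X] K] [IsFractionRing k[X] K] (T : k[X]) (t : K)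
    (hT : algebraMap k[X] K T = t)
    (ht : Transcendental k t)
    (h7 : 7 ∣ Nat.card (X ^ 9 - C t * X ^ 2 + 1 : K[X]).Gal) :
    Irreducible (X ^ 9 - C t * X ^ 2 + 1 : K[X]) := by
  have hno := abh_nofac2 T t hT ht
  obtain ⟨hdeg, hmon⟩ := abh_deg t
  generalize hf : (X ^ 9 - C t * X ^ 2 + 1 : K[X]) = f at *
  have : Fact (Nat.Prime 7) := ⟨by norm_num⟩
  obtain ⟨σ, hσ⟩ := exists_prime_orderOf_dvd_card' (G := f.Gal) 7 h7
  obtain ⟨y, hyr, hy⟩ : ∃ y ∈ f.rootSet f.SplittingField, σ y ≠ y := by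
    by_contra! hcon
    have : σ = 1 := Polynomial.Gal.ext f (fun y hy => hcon y hy)
    rw [this, orderOf_one] at hσ
    norm_num at hσ
  have hint : IsIntegral K y := IsIntegral.of_finite K y
  have hyroot : aeval y f = 0 := (mem_rootSet.mp hyr).2
  have h1 : σ ^ 7 = 1 := by rw [← hσ]; exact pow_orderOf_eq_one σ
  have hdm : 7 ≤ (minpoly K y).natDegree :=
    abh_orb (L := f.SplittingField) σ y hint h1 hy
  have hdv := minpoly.dvd K y hyroot
  have hmm := minpoly.monic hint
  have hir := minpoly.irreducible hint
  generalize minpoly K y = m at hdm hdv hmm hir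
  obtain ⟨q, hq⟩ := hdv
  have hqm : q.Monic := hmm.of_mul_monic_left (hq ▸ hmon)
  have hd : m.natDegree + q.natDegree = 9 := by
    rw [← hmm.natDegree_mul hqm, ← hq, hdeg]
  have hq0 : q.natDegree = 0 := by
    by_contra h0
    exact hno q hqm (by omega) (by omega) (hq ▸ dvd_mul_left q m)
  have hq1 : q = 1 := hqm.natDegree_eq_zero.mp hq0
  rw [hq1, mul_one] at hq
  exact hq ▸ hir


theorem abh_main {k : Type*} [Field k] [IsAlgClosed k] [CharP k 7]
    (a : k) (ha : a ≠ 0) (s : ℕ) (h7s : ¬ 7 ∣ s) :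
    Nonempty ((X ^ 9 - C (algebraMap k (RatFunc k) a * RatFunc.X ^ s) * X ^ 2 + 1 :
        Polynomial (RatFunc k)).Gal ≃*
      Matrix.SpecialLinearGroup (Fin 2) (GaloisField 2 3) ⧸
        Subgroup.center (Matrix.SpecialLinearGroup (Fin 2) (GaloisField 2 3))) := by
  have hs : 0 < s := Nat.pos_of_ne_zero (by rintro rfl; simp at h7s)
  have hX : Transcendental k (RatFunc.X : RatFunc k) := by
    have h : Transcendental k (algebraMap k[X] (RatFunc k) X) :=
      (transcendental_algebraMap_iff (IsFractionRing.injective k[X] (RatFunc k))).mpr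
        (Polynomial.transcendental_X k)
    rwa [RatFunc.algebraMap_X] at h
  have hXi : Transcendental k ((RatFunc.X : RatFunc k)⁻¹) := fun h => hX (by simpa using h.inv)
  have hgen : IntermediateField.adjoin k {(RatFunc.X : RatFunc k)⁻¹} = ⊤ := by
    rw [eq_top_iff, ← RatFunc.adjoin_X, IntermediateField.adjoin_simple_le_iff]
    have := IntermediateField.mem_adjoin_simple_self k ((RatFunc.X : RatFunc k)⁻¹)
    simpa using inv_mem this
  have h7 := abh_seven (RatFunc.X : RatFunc k)⁻¹ hXi hgen a ha s h7s
  rw [inv_inv] at h7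
  have ht := abh_transc (RatFunc.X : RatFunc k) hX a ha s hs
  have : CharP (RatFunc k) 7 :=
    charP_of_injective_algebraMap (algebraMap k (RatFunc k)).injective 7
  have hirr := abh_irr (C a * X ^ s) (algebraMap k (RatFunc k) a * RatFunc.X ^ s)
    (by simp [RatFunc.algebraMap_C, RatFunc.algebraMap_eq_C]) ht h7
  have hcard := abh_card_le _ ht
  have hsep := abh_sep (algebraMap k (RatFunc k) a * RatFunc.X ^ s)
  have hdeg := abh_deg (algebraMap k (RatFunc k) a * RatFunc.X ^ s)
  generalize (X ^ 9 - C (algebraMap k (RatFunc k) a * RatFunc.X ^ s) * X ^ 2 + 1 :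
        Polynomial (RatFunc k)) = f at *
  have : Fact ((f.map (algebraMap (RatFunc k) f.SplittingField)).Splits) :=
    ⟨SplittingField.splits f⟩
  let := Polynomial.Gal.galAction f f.SplittingField
  have hpt := Polynomial.Gal.galAction_isPretransitive f f.SplittingField hirr
  have hfaith : FaithfulSMul f.Gal (f.rootSet f.SplittingField) := ⟨fun {g h} e =>
    Polynomial.Gal.galActionHom_injective f f.SplittingField (Equiv.ext e)⟩
  have hc9 : Fintype.card (f.rootSet f.SplittingField) = 9 := by
    rw [card_rootSet_eq_natDegree hsep (SplittingField.splits f), hdeg.1]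
  have : Fintype (GaloisField 2 3) := Fintype.ofFinite _
  have hF : Fintype.card (GaloisField 2 3) = 8 := by
    rw [← Nat.card_eq_fintype_card, GaloisField.card 2 3 (by norm_num)]; norm_num
  exact abh_group hc9 (fun x y => hpt.exists_smul_eq x y) h7 hcard (GaloisField 2 3) hF

theorem abh_all {k : Type*} [Field k] [IsAlgClosed k] [CharP k 7] (s : ℕ) (hs : 0 < s) :
    ∀ (a : k), a ≠ 0 → 
    Nonempty ((X ^ 9 - C (algebraMap k (RatFunc k) a * RatFunc.X ^ s) * X ^ 2 + 1 :
        Polynomial (RatFunc k)).Gal ≃*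
      Matrix.SpecialLinearGroup (Fin 2) (GaloisField 2 3) ⧸
        Subgroup.center (Matrix.SpecialLinearGroup (Fin 2) (GaloisField 2 3))) := by
  induction s using Nat.strong_induction_on with
  | _ s ih =>
    intro a ha
    by_cases h7 : 7 ∣ s
    · obtain ⟨r, rfl⟩ := h7
      obtain ⟨b, hb⟩ := IsAlgClosed.exists_pow_nat_eq a (n := 7) (by norm_num)
      have hb0 : b ≠ 0 := by rintro rfl; apply ha; rw [← hb]; norm_num
      obtain ⟨e1⟩ := ih r (by omega) (by omega) b hb0
      have : CharP (RatFunc k) 7 :=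
        charP_of_injective_algebraMap (algebraMap k (RatFunc k)).injective 7
      obtain ⟨e2⟩ := abh_frob (algebraMap k (RatFunc k) b * RatFunc.X ^ r)
      have he : algebraMap k (RatFunc k) a * RatFunc.X ^ (7 * r) =
          (algebraMap k (RatFunc k) b * RatFunc.X ^ r) ^ 7 := by
        rw [← hb, map_pow, mul_pow, ← pow_mul, mul_comm 7 r]
      rw [he]
      exact ⟨e2.trans e1⟩
    · exact abh_main a ha s h7

/-- Abhyankar: over an algebraically closed field `k` of characteristic `7`,
the Galois group of `Y^9 - a·X^s·Y^2 + 1` over `k(X)` is isomorphic to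
`PSL(2, 8)`, the quotient of `SL(2, F_8)` by its center. -/
theorem stmt_2 (k : Type*) [Field k] [IsAlgClosed k] [CharP k 7]
    (a : k) (ha : a ≠ 0) (s : ℕ) (hs : 0 < s)
    (f : Polynomial (RatFunc k))
    (hf : f = X ^ 9 - C (algebraMap k (RatFunc k) a * RatFunc.X ^ s) * X ^ 2 + 1) :
    Nonempty (f.Gal ≃*
      Matrix.SpecialLinearGroup (Fin 2) (GaloisField 2 3) ⧸
        Subgroup.center (Matrix.SpecialLinearGroup (Fin 2) (GaloisField 2 3))) := by
  rw [hf]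
  exact abh_all s hs a ha
end
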